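/- arXiv:0709.3126 — 3 statements merged into one kernel-verified Lean document; each statement's English description precedes it below -/
import Mathlib

section
/- Let r ≥ 3 be an integer and p₀ ∈ (0,1). Let ŵ, b̂, q̂, ŝ, t̂ : [0,∞) → ℝ be everywhere-positive differentiable functions solving the system of differential equations associated with (r,p₀), and suppose that the limits L_w = lim_{x→∞} ŵ(x) and lim_{x→∞} (r−1)q̂(x)/ŵ(x) exist and that lim_{x→∞} (r−1)q̂(x)/ŵ(x) < 1. Then for every δ > 0 there exists a positive integer g such that every r-regular graph G on n vertices with girth at least g satisfies τ(G) ≥ (p₀(1−p₀)^r + ∫₀^∞ b̂(x) dx + L_w − δ)·n. -/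
open MeasureTheory ProbabilityTheory Filter Set

namespace InducedForest

/-- The maximum number of vertices of an induced forest (acyclic induced subgraph) of `G`. -/
noncomputable def tau {V : Type*} (G : SimpleGraph V) : ℕ :=
  sSup {n | ∃ s : Set V, (G.induce s).IsAcyclic ∧ s.ncard = n}

/-- `G` is `r`-regular. -/
def IsRegular {V : Type*} (G : SimpleGraph V) (r : ℕ) : Prop :=
  ∀ v : V, (G.neighborSet v).ncard = r
/-- The functions `w, b, q, s, t` solve, on `[0,∞)`, the system of differential equations
associated with `(r, p₀)`, including the initial conditions. -/
def SystemODE (r : ℕ) (p₀ : ℝ) (w b q s t : ℝ → ℝ) : Prop :=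
  (∀ x : ℝ, 0 ≤ x → HasDerivWithinAt w (-(r : ℝ) * s x) (Ici 0) x) ∧
  (∀ x : ℝ, 0 ≤ x → HasDerivWithinAt b (-(b x) - r * t x + r * s x) (Ici 0) x) ∧
  (∀ x : ℝ, 0 ≤ x →
    HasDerivWithinAt q (-((2 * (r : ℝ) - 2) * q x * s x / w x)) (Ici 0) x) ∧
  (∀ x : ℝ, 0 ≤ x →
    HasDerivWithinAt s (-(s x) + ((r : ℝ) - 1) * q x * s x / w x
      - ((r : ℝ) - 1) * (s x) ^ 2 / w x
      - (r : ℝ) * ((r : ℝ) - 2) * s x * t x / (((r : ℝ) - 1) * b x)) (Ici 0) x) ∧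
  (∀ x : ℝ, 0 ≤ x →
    HasDerivWithinAt t (-(2 * t x) + 2 * ((r : ℝ) - 1) * (s x) ^ 2 / w x
      - 2 * (r : ℝ) * ((r : ℝ) - 2) * (t x) ^ 2 / (((r : ℝ) - 1) * b x)) (Ici 0) x) ∧
  w 0 = (1 - p₀) ^ (r + 1) ∧
  b 0 = r * p₀ * (1 - p₀) ^ r ∧
  q 0 = (1 - p₀) ^ (2 * r) ∧
  s 0 = ((r : ℝ) - 1) * p₀ * (1 - p₀) ^ (2 * r - 1) ∧
  t 0 = ((r : ℝ) - 1) ^ 2 * p₀ ^ 2 * (1 - p₀) ^ (2 * r - 2)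

set_option linter.unusedSectionVars false
section Combinatorics

variable {V : Type*} (G : SimpleGraph V) (B : V → ℕ → Prop)

/-- `w` is a neighbour of `u` other than the (optional) excluded vertex `x`. -/
def Nb (u : V) (x : Option V) (w : V) : Prop := G.Adj u w ∧ x ≠ some w

/-- `sel k u x`: the vertex `u` is selected in round `k`, in the process where the vertex `x`
(if any) is never selected. -/
def sel : ℕ → V → Option V → Prop
  | 0, u, _ => B u 0
  | (k + 1), u, x => ¬ B u 0 ∧ B u (k + 1) ∧ ∃ w, Nb G u x w ∧
      (∃ j : Fin (k + 1), sel j.1 w (some u) ∧ ∀ i, j.1 < i → i < k + 1 → ¬ B u i) ∧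
      ∀ w', Nb G u x w' → w' ≠ w → ∀ j : Fin (k + 1), ¬ sel j.1 w' (some u)
termination_by k => k
decreasing_by all_goals exact j.2

lemma sel_zero (u : V) (x : Option V) : sel G B 0 u x ↔ B u 0 := by
  rw [sel]

lemma sel_succ (k : ℕ) (u : V) (x : Option V) : sel G B (k + 1) u x ↔
    ¬ B u 0 ∧ B u (k + 1) ∧ ∃ w, Nb G u x w ∧
      (∃ j < k + 1, sel G B j w (some u) ∧ ∀ i, j < i → i < k + 1 → ¬ B u i) ∧
      ∀ w', Nb G u x w' → w' ≠ w → ∀ j < k + 1, ¬ sel G B j w' (some u) := by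
  rw [sel]
  constructor
  · rintro ⟨h0, h1, w, hw, ⟨j, hj, hji⟩, h2⟩
    exact ⟨h0, h1, w, hw, ⟨j.1, j.2, hj, hji⟩, fun w' hw' hne j hj => h2 w' hw' hne ⟨j, hj⟩⟩
  · rintro ⟨h0, h1, w, hw, ⟨j, hjl, hj, hji⟩, h2⟩
    exact ⟨h0, h1, w, hw, ⟨⟨j, hjl⟩, hj, hji⟩, fun w' hw' hne j => h2 w' hw' hne j.1 j.2⟩

lemma sel_lt_false (k' : ℕ) : ∀ k < k', ∀ u x, sel G B k u x → sel G B k' u x → False := by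
  induction k' using Nat.strong_induction_on with
  | _ k' ih =>
    intro k hk u x h h'
    obtain ⟨m, rfl⟩ : ∃ m, k' = m + 1 := ⟨k' - 1, by omega⟩
    rw [sel_succ] at h'
    obtain ⟨h0, h1, w, hw, ⟨j, hjl, hj, hji⟩, h2⟩ := h'
    rcases k with _ | k
    · exact h0 ((sel_zero G B u x).1 h)
    · rw [sel_succ] at h
      obtain ⟨-, g1, w₂, hw₂, ⟨j₂, hjl₂, hj₂, hji₂⟩, g2⟩ := h
      have hww : w₂ = w := by
        by_contra hne
        exact h2 w₂ hw₂ hne j₂ (by omega) hj₂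
      subst hww
      have hjj : j = j₂ := by
        rcases lt_trichotomy j j₂ with hlt | heq | hlt
        · exact (ih j₂ (by omega) j hlt _ _ hj hj₂).elim
        · exact heq
        · exact (ih j (by omega) j₂ hlt _ _ hj₂ hj).elim
      subst hjj
      exact hji (k + 1) (by omega) hk g1

lemma sel_unique {k k' : ℕ} {u : V} {x : Option V} (h : sel G B k u x) (h' : sel G B k' u x) :
    k = k' := by
  rcases lt_trichotomy k k' with hlt | heq | hlt
  · exact (sel_lt_false G B k' k hlt u x h h').elim
  · exact heq
  · exact (sel_lt_false G B k k' hlt u x h' h).elim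

lemma sel_agree {u v : V} (huv : G.Adj u v) (m : ℕ) (hm : ∀ j < m, ¬ sel G B j v (some u))
    (k : ℕ) (hk : k ≤ m) : sel G B k u none ↔ sel G B k u (some v) := by
  rcases k with _ | k
  · rw [sel_zero, sel_zero]
  · rw [sel_succ, sel_succ]
    constructor
    · rintro ⟨h0, h1, w, hw, ⟨j, hjl, hj, hji⟩, h2⟩
      refine ⟨h0, h1, w, ⟨hw.1, ?_⟩, ⟨j, hjl, hj, hji⟩, fun w' hw' hne => h2 w' ⟨hw'.1, by simp⟩ hne⟩
      rintro heq
      obtain rfl := Option.some.inj heq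
      exact hm j (by omega) hj
    · rintro ⟨h0, h1, w, hw, ⟨j, hjl, hj, hji⟩, h2⟩
      refine ⟨h0, h1, w, ⟨hw.1, by simp⟩, ⟨j, hjl, hj, hji⟩, fun w' hw' hne => ?_⟩
      by_cases hv : w' = v
      · subst hv
        exact fun j hj => hm j (by omega)
      · exact h2 w' ⟨hw'.1, fun h => hv (Option.some.inj h).symm⟩ hne

lemma sel_some_of_none {u v : V} (huv : G.Adj u v) {j : ℕ} (hv : ∀ i < j, ¬ sel G B i v none)
    (hu : sel G B j u none) : sel G B j u (some v) := by
  by_cases h : ∀ i < j, ¬ sel G B i v (some u)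
  · exact (sel_agree G B huv j h j le_rfl).1 hu
  · push Not at h
    obtain ⟨i, hij, hi⟩ := h
    exfalso
    by_cases h' : ∀ i' < i, ¬ sel G B i' u (some v)
    · exact hv i hij ((sel_agree G B huv.symm i h' i le_rfl).2 hi)
    · push Not at h'
      obtain ⟨i', hi'i, hi'⟩ := h'
      have : ∀ l < i', ¬ sel G B l v (some u) := by
        intro l hl hsl
        have := sel_unique G B hsl hi
        omega
      have h3 := (sel_agree G B huv i' this i' le_rfl).2 hi'
      have := sel_unique G B h3 hu
      omega

lemma sel_two_false {k j j' : ℕ} {v u u' : V} (hv : sel G B k v none) (hu : G.Adj v u)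
    (hu' : G.Adj v u') (hne : u ≠ u') (hj : j < k) (hj' : j' < k) (h : sel G B j u none)
    (h' : sel G B j' u' none) : False := by
  have hno : ∀ i < k, ¬ sel G B i v none := fun i hi hs => by
    have := sel_unique G B hs hv
    omega
  have a := sel_some_of_none G B hu.symm (fun i hi => hno i (by omega)) h
  have a' := sel_some_of_none G B hu'.symm (fun i hi => hno i (by omega)) h'
  obtain ⟨m, rfl⟩ : ∃ m, k = m + 1 := ⟨k - 1, by omega⟩
  rw [sel_succ] at hv
  obtain ⟨-, -, w, hw, -, h2⟩ := hv
  have e1 : u = w := by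
    by_contra hh
    exact h2 u ⟨hu, by simp⟩ hh j hj a
  have e2 : u' = w := by
    by_contra hh
    exact h2 u' ⟨hu', by simp⟩ hh j' hj' a'
  exact hne (e1.trans e2.symm)

/-- `u` is white after round `N` (ignoring the excluded vertex). -/
def whiteX (N : ℕ) (u : V) (x : Option V) : Prop :=
  ¬ B u 0 ∧ ∀ w, Nb G u x w → ∀ k < N + 1, ¬ sel G B k w (some u)

/-- there is a white chain of length `l` starting at `u`, moving away from `x`. -/
def chain (N : ℕ) : ℕ → V → Option V → Prop
  | 0, _, _ => True
  | (l + 1), u, x => whiteX G B N u x ∧ ∃ w, Nb G u x w ∧ chain N l w (some u)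

lemma white_not_sel {N : ℕ} {v : V} (hv : whiteX G B N v none) (k : ℕ) (hk : k < N + 1) :
    ¬ sel G B k v none := by
  intro h
  rcases k with _ | k
  · exact hv.1 ((sel_zero G B v none).1 h)
  · rw [sel_succ] at h
    obtain ⟨-, -, w, hw, ⟨j, hjl, hj, -⟩, -⟩ := h
    exact hv.2 w hw j (by omega) hj

lemma white_nb_not_sel {N : ℕ} {v u : V} (hv : whiteX G B N v none) (huv : G.Adj v u) (k : ℕ)
    (hk : k < N + 1) : ¬ sel G B k u none := by
  intro h
  refine hv.2 u ⟨huv, by simp⟩ k hk (sel_some_of_none G B huv.symm (fun i hi => ?_) h)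
  exact white_not_sel G B hv i (by omega)

/-- selected vertices kept in the forest -/
def keptP (N : ℕ) (v : V) : Prop :=
  ∃ k < N + 1, sel G B k v none ∧ ∀ u, G.Adj v u → ¬ sel G B k u none

/-- white vertices kept in the forest -/
def keptW (N L : ℕ) (v : V) : Prop :=
  whiteX G B N v none ∧ ∀ u, G.Adj v u → ¬ chain G B N L u (some v)

lemma acyclic_of_core (S : Set V)
    (h : ∀ C : Set V, C.Finite → C.Nonempty → C ⊆ S →
      (∀ v ∈ C, ∃ a ∈ C, ∃ b ∈ C, a ≠ b ∧ G.Adj v a ∧ G.Adj v b) → False) :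
    (G.induce S).IsAcyclic := by
  intro v c hc
  refine h (Subtype.val '' {x | x ∈ c.support}) ((List.finite_toSet c.support).image _)
    ⟨v.1, v, c.start_mem_support, rfl⟩ (by rintro _ ⟨x, -, rfl⟩; exact x.2) ?_
  rintro _ ⟨x, hx, rfl⟩
  have h2 := hc.ncard_neighborSet_toSubgraph_eq_two hx
  obtain ⟨a, b, hab, hs⟩ := Set.ncard_eq_two.1 h2
  have ha : a ∈ c.toSubgraph.neighborSet x := by rw [hs]; simp
  have hb : b ∈ c.toSubgraph.neighborSet x := by rw [hs]; simp
  rw [SimpleGraph.Subgraph.mem_neighborSet] at ha hb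
  refine ⟨a.1, ⟨a, ?_, rfl⟩, b.1, ⟨b, ?_, rfl⟩, fun e => hab (Subtype.ext e), ha.adj_sub, hb.adj_sub⟩
  · exact c.mem_verts_toSubgraph.1 ha.snd_mem
  · exact c.mem_verts_toSubgraph.1 hb.snd_mem

lemma kept_acyclic (N L : ℕ) :
    (G.induce {v | keptP G B N v ∨ keptW G B N L v}).IsAcyclic := by
  classical
  apply acyclic_of_core
  intro C hfin hne hCS hC
  by_cases hW : ∃ v ∈ C, keptW G B N L v
  · obtain ⟨v, hvC, hv⟩ := hW
    have hnb : ∀ v ∈ C, whiteX G B N v none → ∀ u ∈ C, G.Adj v u → whiteX G B N u none := by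
      intro v _ hv u huC huv
      rcases hCS huC with hp | hw
      · obtain ⟨k, hk, hs, -⟩ := hp
        exact (white_nb_not_sel G B hv huv k hk hs).elim
      · exact hw.1
    have key : ∀ l, ∀ v ∈ C, whiteX G B N v none → ∀ u ∈ C, G.Adj v u →
        chain G B N l u (some v) := by
      intro l
      induction l with
      | zero => intros; trivial
      | succ l ih =>
        intro v hvC hv u huC huv
        have hu := hnb v hvC hv u huC huv
        obtain ⟨a, ha, b, hb, hab, hua, hub⟩ := hC u huC
        refine ⟨⟨hu.1, fun w hw => hu.2 w ⟨hw.1, by simp⟩⟩, ?_⟩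
        by_cases hav : a = v
        · refine ⟨b, ⟨hub, ?_⟩, ih u huC hu b hb hub⟩
          intro e
          exact hab (hav.trans (Option.some.inj e))
        · exact ⟨a, ⟨hua, fun e => hav (Option.some.inj e).symm⟩, ih u huC hu a ha hua⟩
    obtain ⟨a, ha, -, -, -, hva, -⟩ := hC v hvC
    exact hv.2 a hva (key L v hvC hv.1 a ha hva)
  · push Not at hW
    have hP : ∀ v ∈ C, keptP G B N v := fun v hv => (hCS hv).resolve_right (hW v hv)
    choose! τ hτ1 hτ2 hτ3 using hP
    obtain ⟨v, hvC, hmax⟩ := hfin.exists_maximalFor τ C hne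
    obtain ⟨a, ha, b, hb, hab, hva, hvb⟩ := hC v hvC
    have hlt : ∀ u ∈ C, G.Adj v u → τ u < τ v := by
      intro u hu hvu
      rcases lt_trichotomy (τ u) (τ v) with h | h | h
      · exact h
      · exact (hτ3 v hvC u hvu (h ▸ hτ2 u hu)).elim
      · have := hmax hu h.le
        omega
    exact sel_two_false G B (hτ2 v hvC) hva hvb hab (hlt a ha hva) (hlt b hb hvb) (hτ2 a ha)
      (hτ2 b hb)

lemma le_tau [Finite V] (S : Set V) (h : (G.induce S).IsAcyclic) : S.ncard ≤ tau G := by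
  apply le_csSup
  · refine ⟨Nat.card V, ?_⟩
    rintro n ⟨s, -, rfl⟩
    rw [← Set.ncard_univ]
    exact Set.ncard_le_ncard (Set.subset_univ s)
  · exact ⟨S, h, rfl⟩

end Combinatorics
section Branch

variable {V : Type*} (G : SimpleGraph V)

/-- the branch of depth `k` at `u` away from `x` -/
def Br : ℕ → V → Option V → Set V
  | 0, u, _ => {u}
  | (k + 1), u, x => {u} ∪ {y | ∃ w, Nb G u x w ∧ y ∈ Br k w (some u)}

lemma Br_self (k : ℕ) (u : V) (x : Option V) : u ∈ Br G k u x := by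
  cases k <;> simp [Br]

lemma Br_succ (k : ℕ) : ∀ u x, Br G k u x ⊆ Br G (k + 1) u x := by
  induction k with
  | zero => intro u x y hy; simp only [Br, Set.mem_singleton_iff] at hy; subst hy; exact Br_self G _ _ _
  | succ k ih =>
    intro u x y hy
    rcases hy with hy | ⟨w, hw, hy⟩
    · exact Or.inl hy
    · exact Or.inr ⟨w, hw, ih _ _ hy⟩

lemma Br_mono {k k' : ℕ} (h : k ≤ k') (u : V) (x : Option V) : Br G k u x ⊆ Br G k' u x := by
  induction k', h using Nat.le_induction with
  | base => exact subset_rfl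
  | succ n _ ih => exact ih.trans (Br_succ G n u x)

lemma Br_walk (k : ℕ) : ∀ (u w y : V) (h : G.Adj u w), y ∈ Br G k w (some u) →
    ∃ p : G.Walk w y, List.IsChain (· ≠ ·) (SimpleGraph.Walk.cons h p).edges ∧ p.length ≤ k := by
  induction k with
  | zero =>
    intro u w y h hy
    simp only [Br, Set.mem_singleton_iff] at hy
    subst hy
    exact ⟨.nil, by simp, by simp⟩
  | succ k ih =>
    intro u w y h hy
    rcases hy with hy | ⟨w', hw', hy⟩
    · rw [Set.mem_singleton_iff] at hy
      subst hy
      exact ⟨.nil, by simp, by simp⟩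
    · obtain ⟨p, hp, hl⟩ := ih w w' y hw'.1 hy
      refine ⟨.cons hw'.1 p, ?_, by simpa using hl⟩
      rw [SimpleGraph.Walk.edges_cons, SimpleGraph.Walk.edges_cons, List.isChain_cons_cons,
        ← SimpleGraph.Walk.edges_cons (h := hw'.1)]
      refine ⟨?_, hp⟩
      intro e
      rw [Sym2.eq_iff] at e
      rcases e with ⟨h1, -⟩ | ⟨h1, -⟩
      · exact h.ne h1
      · exact hw'.2 (by rw [h1])

lemma walk_edges_unique {g : ℕ} (hg : (g : ℕ∞) ≤ G.egirth) {u y : V} (p p' : G.Walk u y)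
    (hp : List.IsChain (· ≠ ·) p.edges) (hp' : List.IsChain (· ≠ ·) p'.edges)
    (hl : p.length + p'.length < g) : p.edges = p'.edges := by
  classical
  let H : SimpleGraph V := SimpleGraph.fromEdgeSet {e | e ∈ p.edges ∨ e ∈ p'.edges}
  have hHe : ∀ e ∈ H.edgeSet, e ∈ p.edges ∨ e ∈ p'.edges := by
    intro e he
    rw [SimpleGraph.edgeSet_fromEdgeSet] at he
    exact he.1
  have hHG : H ≤ G := by
    rw [← SimpleGraph.edgeSet_subset_edgeSet]
    intro e he
    rcases hHe e he with h | h
    · exact p.edges_subset_edgeSet h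
    · exact p'.edges_subset_edgeSet h
  have hpH : ∀ e ∈ p.edges, e ∈ H.edgeSet := by
    intro e he
    rw [SimpleGraph.edgeSet_fromEdgeSet]
    exact ⟨Or.inl he, G.not_isDiag_of_mem_edgeSet (p.edges_subset_edgeSet he)⟩
  have hpH' : ∀ e ∈ p'.edges, e ∈ H.edgeSet := by
    intro e he
    rw [SimpleGraph.edgeSet_fromEdgeSet]
    exact ⟨Or.inr he, G.not_isDiag_of_mem_edgeSet (p'.edges_subset_edgeSet he)⟩
  have hac : H.IsAcyclic := by
    intro v c hc
    have h1 := SimpleGraph.egirth_le_length (hc.mapLe hHG)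
    have h2 : (g : ℕ∞) ≤ ((c.mapLe hHG).length : ℕ∞) := hg.trans h1
    rw [SimpleGraph.Walk.length_map] at h2
    have h3 : g ≤ c.length := by exact_mod_cast h2
    have h4 : c.length ≤ (p.edges ++ p'.edges).length := by
      rw [← SimpleGraph.Walk.length_edges]
      have hnd : c.edges.Nodup := hc.isTrail.edges_nodup
      rw [← List.toFinset_card_of_nodup hnd]
      refine le_trans (Finset.card_le_card ?_) (List.toFinset_card_le _)
      intro e he
      rw [List.mem_toFinset] at he ⊢
      rw [List.mem_append]
      exact hHe e (c.edges_subset_edgeSet he)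
    rw [List.length_append, SimpleGraph.Walk.length_edges, SimpleGraph.Walk.length_edges] at h4
    omega
  have q1 : (p.transfer H hpH).IsPath := by
    rw [hac.isPath_iff_isChain, SimpleGraph.Walk.edges_transfer]; exact hp
  have q2 : (p'.transfer H hpH').IsPath := by
    rw [hac.isPath_iff_isChain, SimpleGraph.Walk.edges_transfer]; exact hp'
  have := (hac.subsingleton_path u y).elim ⟨_, q1⟩ ⟨_, q2⟩
  have h5 : p.transfer H hpH = p'.transfer H hpH' := congrArg Subtype.val this
  have h6 := congrArg SimpleGraph.Walk.edges h5
  rwa [SimpleGraph.Walk.edges_transfer, SimpleGraph.Walk.edges_transfer] at h6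

lemma Br_disjoint {K : ℕ} (hg : ((2 * K + 3 : ℕ) : ℕ∞) ≤ G.egirth) {u w w' : V}
    (h : G.Adj u w) (h' : G.Adj u w') (hne : w ≠ w') :
    Disjoint (Br G K w (some u)) (Br G K w' (some u)) := by
  rw [Set.disjoint_left]
  intro y hy hy'
  obtain ⟨p, hp, hl⟩ := Br_walk G K u w y h hy
  obtain ⟨p', hp', hl'⟩ := Br_walk G K u w' y h' hy'
  have := walk_edges_unique G hg _ _ hp hp' (by simp; omega)
  rw [SimpleGraph.Walk.edges_cons, SimpleGraph.Walk.edges_cons, List.cons.injEq,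
    Sym2.eq_iff] at this
  rcases this.1 with ⟨-, e⟩ | ⟨e, -⟩
  · exact hne e
  · exact h'.ne e

lemma Br_not_mem {K : ℕ} (hg : ((2 * K + 3 : ℕ) : ℕ∞) ≤ G.egirth) {u w : V}
    (h : G.Adj u w) : u ∉ Br G K w (some u) := by
  intro hy
  obtain ⟨p, hp, hl⟩ := Br_walk G K u w u h hy
  have := walk_edges_unique G hg _ .nil hp (by simp) (by simp; omega)
  simp at this

lemma sel_dep (B B' : V → ℕ → Prop) (k : ℕ) : ∀ u x,
    (∀ v ∈ Br G k u x, ∀ i, B v i ↔ B' v i) → (sel G B k u x ↔ sel G B' k u x) := by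
  induction k using Nat.strong_induction_on with
  | _ k ih =>
    intro u x h
    rcases k with _ | k
    · rw [sel_zero, sel_zero]
      exact h u (Br_self G _ _ _) 0
    · have hu := h u (Br_self G _ _ _)
      have hc : ∀ w, Nb G u x w → ∀ j < k + 1,
          (sel G B j w (some u) ↔ sel G B' j w (some u)) := by
        intro w hw j hj
        refine ih j hj w (some u) fun v hv => h v ?_
        exact Or.inr ⟨w, hw, Br_mono G (by omega : j ≤ k) _ _ hv⟩
      rw [sel_succ, sel_succ]
      refine and_congr (not_congr (hu 0)) (and_congr (hu (k + 1)) (exists_congr fun w => ?_))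
      refine and_congr_right fun hw => and_congr ?_ ?_
      · refine exists_congr fun j => and_congr_right fun hj => and_congr (hc w hw j hj) ?_
        exact forall_congr' fun i => forall_congr' fun _ => forall_congr' fun _ => not_congr (hu i)
      · refine forall_congr' fun w' => forall_congr' fun hw' => forall_congr' fun _ =>
          forall_congr' fun j => forall_congr' fun hj => not_congr (hc w' hw' j hj)

lemma whiteX_dep (B B' : V → ℕ → Prop) (N : ℕ) (u : V) (x : Option V)
    (h : ∀ v ∈ Br G (N + 1) u x, ∀ i, B v i ↔ B' v i) :
    whiteX G B N u x ↔ whiteX G B' N u x := by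
  refine and_congr (not_congr (h u (Br_self G _ _ _) 0)) (forall_congr' fun w =>
    forall_congr' fun hw => forall_congr' fun k => forall_congr' fun hk => not_congr ?_)
  exact sel_dep G B B' k w (some u) fun v hv =>
    h v (Or.inr ⟨w, hw, Br_mono G (by omega : k ≤ N) _ _ hv⟩)

lemma chain_dep (B B' : V → ℕ → Prop) (N l : ℕ) : ∀ u x,
    (∀ v ∈ Br G (N + l) u x, ∀ i, B v i ↔ B' v i) →
      (chain G B N l u x ↔ chain G B' N l u x) := by
  induction l with
  | zero => intros; exact Iff.rfl
  | succ l ih =>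
    intro u x h
    refine and_congr (whiteX_dep G B B' N u x fun v hv => h v (Br_mono G (by omega) _ _ hv))
      (exists_congr fun w => and_congr_right fun hw => ih w (some u) fun v hv => h v ?_)
    exact Or.inr ⟨w, hw, hv⟩

end Branch
section Probability

/-- the event `A` depends only on the coordinates in `S` -/
def DepOn {I : Type*} (A : Set (I → Bool)) (S : Set I) : Prop :=
  ∀ ω ω' : I → Bool, (∀ i ∈ S, ω i = ω' i) → (ω ∈ A → ω' ∈ A)

lemma DepOn.mono {I : Type*} {A : Set (I → Bool)} {S T : Set I} (h : DepOn A S) (hST : S ⊆ T) :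
    DepOn A T := fun ω ω' hω => h ω ω' fun i hi => hω i (hST hi)

lemma depOn_of_iff {I : Type*} {A : Set (I → Bool)} {S : Set I}
    (h : ∀ ω ω' : I → Bool, (∀ i ∈ S, ω i = ω' i) → (ω ∈ A ↔ ω' ∈ A)) : DepOn A S :=
  fun ω ω' hω => (h ω ω' hω).1

variable {I : Type*} [Fintype I] (ν : I → Measure Bool) [∀ i, IsProbabilityMeasure (ν i)]

lemma indep_two {A A' : Set (I → Bool)} {S S' : Set I} (hA : DepOn A S) (hA' : DepOn A' S')
    (hd : Disjoint S S') : (Measure.pi ν).real (A ∩ A') =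
      (Measure.pi ν).real A * (Measure.pi ν).real A' := by
  classical
  have hind : iIndepFun (fun i (ω : I → Bool) => ω i) (Measure.pi ν) :=
    iIndepFun_pi (X := fun _ b => b) (fun i => aemeasurable_id)
  have h2 := hind.indepFun_finset S.toFinset S'.toFinset (by simpa using hd)
    (fun i => measurable_pi_apply i)
  have key : ∀ {A : Set (I → Bool)} {S : Set I}, DepOn A S →
      A = (fun (ω : I → Bool) (i : S.toFinset) => ω i) ⁻¹'
        ((fun (ω : I → Bool) (i : S.toFinset) => ω i) '' A) := by
    intro A S hA
    apply subset_antisymm (Set.subset_preimage_image _ _)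
    rintro ω ⟨ω', hω', he⟩
    refine hA ω' ω (fun i hi => ?_) hω'
    exact congrFun he ⟨i, by simpa using hi⟩
  have h3 := h2.measure_inter_preimage_eq_mul _ _
    (MeasurableSet.of_discrete (s := ((fun (ω : I → Bool) (i : S.toFinset) => ω i) '' A)))
    (MeasurableSet.of_discrete (s := ((fun (ω : I → Bool) (i : S'.toFinset) => ω i) '' A')))
  rw [← key hA, ← key hA'] at h3
  simp only [measureReal_def, h3, ENNReal.toReal_mul]

lemma indep_fin {κ : Type*} (s : Finset κ) (A : κ → Set (I → Bool)) (S : κ → Set I)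
    (hA : ∀ a ∈ s, DepOn (A a) (S a)) (hd : ∀ a ∈ s, ∀ b ∈ s, a ≠ b → Disjoint (S a) (S b)) :
    (Measure.pi ν).real (⋂ a ∈ s, A a) = ∏ a ∈ s, (Measure.pi ν).real (A a) := by
  classical
  induction s using Finset.induction_on with
  | empty => simp
  | insert a s ha ih =>
    rw [Finset.prod_insert ha, Finset.set_biInter_insert, ← ih
      (fun b hb => hA b (Finset.mem_insert_of_mem hb))
      (fun b hb c hc => hd b (Finset.mem_insert_of_mem hb) c (Finset.mem_insert_of_mem hc))]
    refine indep_two ν (S' := ⋃ b ∈ s, S b) (hA a (Finset.mem_insert_self a s)) ?_ ?_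
    · intro ω ω' hω h
      rw [Set.mem_iInter₂] at h ⊢
      intro b hb
      refine hA b (Finset.mem_insert_of_mem hb) ω ω' (fun i hi => hω i ?_) (h b hb)
      exact Set.mem_biUnion hb hi
    · rw [Set.disjoint_iUnion₂_right]
      intro b hb
      refine hd a (Finset.mem_insert_self a s) b (Finset.mem_insert_of_mem hb) ?_
      rintro rfl
      exact ha hb

end Probability

section RandomBits

variable {V : Type} [Fintype V] (G : SimpleGraph V) {N : ℕ}

/-- the random bit of the vertex `v` in round `i` -/
def bit (N : ℕ) (ω : V × Fin (N + 1) → Bool) (v : V) (i : ℕ) : Prop :=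
  ω (v, Fin.ofNat (N + 1) i) = true

/-- coordinates sitting ovr a set of vertices -/
def ovr (N : ℕ) (D : Set V) : Set (V × Fin (N + 1)) := {i | i.1 ∈ D}

lemma ovr_disjoint {D D' : Set V} (h : Disjoint D D') : Disjoint (ovr N D) (ovr N D') := by
  rw [Set.disjoint_left] at h ⊢
  intro i hi hi'
  exact h hi hi'

lemma bit_congr {ω ω' : V × Fin (N + 1) → Bool} {D : Set V} (h : ∀ i ∈ ovr N D, ω i = ω' i) :
    ∀ v ∈ D, ∀ i, bit N ω v i ↔ bit N ω' v i := by
  intro v hv i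
  unfold bit
  rw [h (v, _) hv]

lemma sel_depOn (k : ℕ) (u : V) (x : Option V) :
    DepOn {ω | sel G (bit N ω) k u x} (ovr N (Br G k u x)) :=
  depOn_of_iff fun _ _ h => sel_dep G _ _ k u x (bit_congr h)

lemma nosel_depOn (k K : ℕ) (hk : k ≤ K + 1) (u : V) (x : Option V) :
    DepOn {ω | ∀ j < k, ¬ sel G (bit N ω) j u x} (ovr N (Br G K u x)) :=
  depOn_of_iff fun _ _ h => forall_congr' fun j => forall_congr' fun hj => not_congr
    (sel_dep G _ _ j u x fun v hv => bit_congr h v (Br_mono G (by omega) u x hv))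

lemma chain_depOn (l : ℕ) (u : V) (x : Option V) :
    DepOn {ω | chain G (bit N ω) N l u x} (ovr N (Br G (N + l) u x)) :=
  depOn_of_iff fun _ _ h => chain_dep G _ _ N l u x (bit_congr h)

open Classical in
/-- the finite set of admissible neighbours -/
noncomputable def nbs (u : V) (x : Option V) : Finset V := Finset.univ.filter (Nb G u x)

lemma mem_nbs {u w : V} {x : Option V} : w ∈ nbs G u x ↔ Nb G u x w := by
  simp [nbs]

lemma card_nbs_none {r : ℕ} (hG : IsRegular G r) (u : V) : (nbs G u none).card = r := by
  classical
  rw [← hG u, ← Set.ncard_coe_finset]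
  congr 1
  ext w
  simp [nbs, Nb]

lemma card_nbs_some {r : ℕ} (hG : IsRegular G r) {u v : V} (h : G.Adj u v) :
    (nbs G u (some v)).card = r - 1 := by
  classical
  have : nbs G u (some v) = (nbs G u none).erase v := by
    ext w
    simp only [mem_nbs, Finset.mem_erase, Nb, ne_eq, Option.some.injEq, reduceCtorEq,
      not_false_eq_true, and_true]
    tauto
  rw [this, Finset.card_erase_of_mem, card_nbs_none G hG]
  rw [mem_nbs]
  exact ⟨h, by simp⟩

variable (ν : Fin (N + 1) → Measure Bool) [∀ i, IsProbabilityMeasure (ν i)]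

/-- the probability measure on all random bits -/
noncomputable def PP (V : Type) [Fintype V] (ν : Fin (N + 1) → Measure Bool) :
    Measure (V × Fin (N + 1) → Bool) := Measure.pi (fun i => ν i.2)

instance : IsProbabilityMeasure (PP V ν) := by unfold PP; infer_instance

lemma star_indep {K : ℕ} (hg : ((2 * K + 3 : ℕ) : ℕ∞) ≤ G.egirth) (u : V) (x : Option V)
    (A : Set (V × Fin (N + 1) → Bool)) (hA : DepOn A (ovr N {u}))
    (E : V → Set (V × Fin (N + 1) → Bool))
    (hE : ∀ w, Nb G u x w → DepOn (E w) (ovr N (Br G K w (some u)))) :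
    (PP V ν).real (A ∩ ⋂ w ∈ nbs G u x, E w) =
      (PP V ν).real A * ∏ w ∈ nbs G u x, (PP V ν).real (E w) := by
  unfold PP
  rw [indep_two (fun i : V × Fin (N + 1) => ν i.2) (S := ovr N {u})
    (S' := ⋃ w ∈ nbs G u x, ovr N (Br G K w (some u))) hA ?_ ?_,
    indep_fin (fun i : V × Fin (N + 1) => ν i.2) (nbs G u x) E
      (fun w => ovr N (Br G K w (some u)))]
  · intro w hw
    exact hE w ((mem_nbs G).1 hw)
  · intro a ha b hb hab
    exact ovr_disjoint (Br_disjoint G hg ((mem_nbs G).1 ha).1 ((mem_nbs G).1 hb).1 hab)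
  · intro ω ω' hω h
    rw [Set.mem_iInter₂] at h ⊢
    intro b hb
    refine hE b ((mem_nbs G).1 hb) ω ω' (fun i hi => hω i ?_) (h b hb)
    exact Set.mem_biUnion hb hi
  · rw [Set.disjoint_iUnion₂_right]
    intro w hw
    apply ovr_disjoint
    rw [Set.disjoint_singleton_left]
    exact Br_not_mem G hg ((mem_nbs G).1 hw).1

lemma bit_depOn (u : V) (i : ℕ) (P : Prop) :
    DepOn {ω | bit N ω u i ↔ P} {(u, Fin.ofNat (N + 1) i)} := by
  apply depOn_of_iff
  intro ω ω' h
  have := h (u, Fin.ofNat (N + 1) i) rfl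
  simp only [Set.mem_ofPred_eq, bit, this]

lemma ofNat_inj {i j : ℕ} (hi : i ≤ N) (hj : j ≤ N) (h : Fin.ofNat (N + 1) i = Fin.ofNat (N + 1) j) :
    i = j := by
  have := congrArg Fin.val h
  simpa [Fin.ofNat, Nat.mod_eq_of_lt (Nat.lt_succ_of_le hi),
    Nat.mod_eq_of_lt (Nat.lt_succ_of_le hj)] using this

lemma prob_bit (ε : ℕ → ℝ)
    (hε : ∀ i : ℕ, i ≤ N → (ν (Fin.ofNat (N + 1) i)).real {true} = ε i) (u : V) {i : ℕ} (hi : i ≤ N) : (PP V ν).real {ω | bit N ω u i} = ε i := by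
  rw [← hε i hi]
  have h := (measurePreserving_eval (fun i : V × Fin (N + 1) => ν i.2) (u, Fin.ofNat (N + 1) i))
  have := h.measureReal_preimage (s := {true}) (MeasurableSet.of_discrete.nullMeasurableSet)
  rw [← this]
  rfl

lemma prob_not_bit (ε : ℕ → ℝ)
    (hε : ∀ i : ℕ, i ≤ N → (ν (Fin.ofNat (N + 1) i)).real {true} = ε i) (u : V) {i : ℕ} (hi : i ≤ N) :
    (PP V ν).real {ω | ¬ bit N ω u i} = 1 - ε i := by
  rw [← prob_bit ν ε hε u hi, ← probReal_compl_eq_one_sub MeasurableSet.of_discrete]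
  rfl

end RandomBits
section Law

variable {V : Type} [Fintype V] (G : SimpleGraph V) {N : ℕ}
  (ν : Fin (N + 1) → Measure Bool) [∀ i, IsProbabilityMeasure (ν i)] (ε : ℕ → ℝ)

lemma prob_nosel (k : ℕ) (u : V) (x : Option V) :
    (PP V ν).real {ω | ∀ j < k, ¬ sel G (bit N ω) j u x} =
      1 - ∑ j ∈ Finset.range k, (PP V ν).real {ω | sel G (bit N ω) j u x} := by
  rw [← measureReal_biUnion_finset, ← probReal_compl_eq_one_sub MeasurableSet.of_discrete]
  · congr 1
    ext ω
    simp
  · intro a _ b _ hab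
    refine Set.disjoint_left.2 fun ω ha hb => hab (sel_unique G _ ha hb)
  · intro b _
    exact MeasurableSet.of_discrete

/-- the event on the bits of `u` used for selection in round `k + 1` -/
def bitsEv (N : ℕ) (u : V) (j k : ℕ) : Set (V × Fin (N + 1) → Bool) :=
  {ω | ¬ bit N ω u 0 ∧ bit N ω u (k + 1) ∧ ∀ i, j < i → i < k + 1 → ¬ bit N ω u i}

lemma bitsEv_depOn (u : V) (j k : ℕ) : DepOn (bitsEv N u j k) (ovr N {u}) := by
  apply depOn_of_iff
  intro ω ω' h
  have := bit_congr h u rfl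
  simp only [bitsEv, Set.mem_ofPred_eq, this]

lemma prob_bits (hε : ∀ i : ℕ, i ≤ N → (ν (Fin.ofNat (N + 1) i)).real {true} = ε i)
    (u : V) (j k : ℕ) (hk : k + 1 ≤ N) :
    (PP V ν).real (bitsEv N u j k) =
      (1 - ε 0) * ε (k + 1) * ∏ i ∈ Finset.Ioo j (k + 1), (1 - ε i) := by
  classical
  have h1 : bitsEv N u j k = ⋂ i ∈ insert 0 (insert (k + 1) (Finset.Ioo j (k + 1))),
      {ω : V × Fin (N + 1) → Bool | bit N ω u i ↔ i = k + 1} := by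
    ext ω
    simp only [bitsEv, Set.mem_ofPred_eq, Finset.set_biInter_insert, Set.mem_inter_iff,
      Set.mem_iInter, Finset.mem_Ioo]
    refine and_congr (by simp) (and_congr (by simp) ?_)
    refine forall_congr' fun i => ?_
    constructor
    · rintro h ⟨h1, h2⟩
      have : i ≠ k + 1 := by omega
      simp [this, h h1 h2]
    · intro h h1 h2
      have : i ≠ k + 1 := by omega
      simpa [this] using h ⟨h1, h2⟩
  have hle : ∀ i ∈ insert 0 (insert (k + 1) (Finset.Ioo j (k + 1))), i ≤ N := by
    intro i hi
    simp only [Finset.mem_insert, Finset.mem_Ioo] at hi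
    omega
  have hP : ∀ i ≤ N, i ≠ k + 1 → (PP V ν).real
      {ω : V × Fin (N + 1) → Bool | bit N ω u i ↔ i = k + 1} = 1 - ε i := by
    intro i hi hne
    simp only [hne, iff_false]
    exact prob_not_bit ν ε hε u hi
  have h2 := indep_fin (fun i : V × Fin (N + 1) => ν i.2)
    (insert 0 (insert (k + 1) (Finset.Ioo j (k + 1))))
    (fun i => {ω : V × Fin (N + 1) → Bool | bit N ω u i ↔ i = k + 1})
    (fun i => {(u, Fin.ofNat (N + 1) i)}) (fun i _ => bit_depOn u i _) (by
      intro a ha b hb hab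
      rw [Set.disjoint_singleton]
      intro e
      exact hab (ofNat_inj (hle a ha) (hle b hb) (Prod.ext_iff.1 e).2))
  rw [h1]
  change (PP V ν).real _ = ∏ i ∈ _, (PP V ν).real _ at h2
  rw [h2, Finset.prod_insert (by simp), Finset.prod_insert (by simp), hP 0 (by omega) (by omega),
    mul_assoc]
  congr 2
  · simp only [iff_true]
    exact prob_bit ν ε hε u hk
  · refine Finset.prod_congr rfl fun i hi => ?_
    rw [Finset.mem_Ioo] at hi
    exact hP i (by omega) (by omega)

lemma prob_sel_succ (hε : ∀ i : ℕ, i ≤ N → (ν (Fin.ofNat (N + 1) i)).real {true} = ε i)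
    {K : ℕ} (hg : ((2 * K + 3 : ℕ) : ℕ∞) ≤ G.egirth) (k : ℕ) (hkK : k ≤ K) (hkN : k + 1 ≤ N)
    (f : ℕ → ℝ) (u : V) (x : Option V)
    (hf : ∀ j < k + 1, ∀ w, Nb G u x w → (PP V ν).real {ω | sel G (bit N ω) j w (some u)} = f j) :
    (PP V ν).real {ω | sel G (bit N ω) (k + 1) u x} =
      (nbs G u x).card * ((1 - ε 0) * ε (k + 1) *
        (∑ j ∈ Finset.range (k + 1), f j * ∏ i ∈ Finset.Ioo j (k + 1), (1 - ε i)) *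
        (1 - ∑ j ∈ Finset.range (k + 1), f j) ^ ((nbs G u x).card - 1)) := by
  classical
  let E : V → ℕ → V → Set (V × Fin (N + 1) → Bool) := fun w j w' =>
    if w' = w then {ω | sel G (bit N ω) j w (some u)}
    else {ω | ∀ i < k + 1, ¬ sel G (bit N ω) i w' (some u)}
  have hset : {ω : V × Fin (N + 1) → Bool | sel G (bit N ω) (k + 1) u x} =
      ⋃ a ∈ nbs G u x ×ˢ Finset.range (k + 1),
        (bitsEv N u a.2 k ∩ ⋂ w' ∈ nbs G u x, E a.1 a.2 w') := by
    ext ω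
    simp only [Set.mem_ofPred_eq, sel_succ, Set.mem_iUnion, Finset.mem_product, Finset.mem_range,
      mem_nbs, Set.mem_inter_iff, Set.mem_iInter, Prod.exists, exists_prop]
    constructor
    · rintro ⟨h0, h1, w, hw, ⟨j, hjl, hj, hji⟩, h2⟩
      refine ⟨w, j, ⟨hw, hjl⟩, ⟨h0, h1, hji⟩, fun w' hw' => ?_⟩
      by_cases e : w' = w
      · simp only [E, e, if_true]; exact hj
      · simp only [E, e, if_false]; exact h2 w' hw' e
    · rintro ⟨w, j, ⟨hw, hjl⟩, ⟨h0, h1, hji⟩, h⟩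
      refine ⟨h0, h1, w, hw, ⟨j, hjl, ?_, hji⟩, fun w' hw' e => ?_⟩
      · have := h w hw
        simpa only [E, if_true, Set.mem_ofPred_eq] using this
      · have := h w' hw'
        simpa only [E, e, if_false, Set.mem_ofPred_eq] using this
  have hterm : ∀ a ∈ nbs G u x ×ˢ Finset.range (k + 1), (PP V ν).real
      (bitsEv N u a.2 k ∩ ⋂ w' ∈ nbs G u x, E a.1 a.2 w') =
      ((1 - ε 0) * ε (k + 1) * ∏ i ∈ Finset.Ioo a.2 (k + 1), (1 - ε i)) *
        (f a.2 * (1 - ∑ j ∈ Finset.range (k + 1), f j) ^ ((nbs G u x).card - 1)) := by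
    rintro ⟨w, j⟩ ha
    rw [Finset.mem_product, Finset.mem_range] at ha
    obtain ⟨hw, hj⟩ := ha
    simp only at hw hj ⊢
    rw [star_indep G ν hg u x _ (bitsEv_depOn u j k) (E w j), prob_bits ν ε hε u j k hkN]
    · congr 1
      rw [← Finset.mul_prod_erase _ _ hw]
      congr 1
      · simp only [E, if_true]
        exact hf j hj w ((mem_nbs G).1 hw)
      · rw [← Finset.card_erase_of_mem hw]
        apply Finset.prod_eq_pow_card
        intro w' hw'
        rw [Finset.mem_erase] at hw'
        simp only [E, hw'.1, if_false]
        rw [prob_nosel]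
        congr 1
        exact Finset.sum_congr rfl fun i hi =>
          hf i (Finset.mem_range.1 hi) w' ((mem_nbs G).1 hw'.2)
    · intro w' hw'
      by_cases e : w' = w
      · simp only [E, e, if_true]
        apply (sel_depOn G j w (some u)).mono
        intro i hi
        exact Br_mono G (by omega) _ _ hi
      · simp only [E, e, if_false]
        exact nosel_depOn G _ _ (by omega) _ _
  rw [hset, measureReal_biUnion_finset, Finset.sum_congr rfl hterm, Finset.sum_product]
  · simp only [Finset.sum_const, nsmul_eq_mul]
    congr 1
    rw [Finset.mul_sum, Finset.sum_mul]
    exact Finset.sum_congr rfl fun j _ => by ring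
  · rintro ⟨w, j⟩ ha ⟨w₂, j₂⟩ hb hab
    rw [Finset.mem_coe, Finset.mem_product, Finset.mem_range] at ha hb
    refine Set.disjoint_left.2 ?_
    rintro ω ⟨-, h1⟩ ⟨-, h2⟩
    rw [Set.mem_iInter₂] at h1 h2
    have a1 : sel G (bit N ω) j w (some u) := by
      have := h1 w ha.1
      simpa only [E, if_true, Set.mem_ofPred_eq] using this
    by_cases e : w = w₂
    · subst e
      have a2 : sel G (bit N ω) j₂ w (some u) := by
        have := h2 w ha.1
        simpa only [E, if_true, Set.mem_ofPred_eq] using this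
      exact hab (by rw [sel_unique G _ a1 a2])
    · have a2 := h2 w ha.1
      simp only [E, e, if_false] at a2
      exact a2 j ha.2 a1
  · intro b _
    exact MeasurableSet.of_discrete

/-- the law of the selection time, as a recursion -/
def IsLaw (r N : ℕ) (ε f : ℕ → ℝ) : Prop :=
  f 0 = ε 0 ∧ ∀ k < N, f (k + 1) = ((r - 1 : ℕ) : ℝ) * ((1 - ε 0) * ε (k + 1) *
        (∑ j ∈ Finset.range (k + 1), f j * ∏ i ∈ Finset.Ioo j (k + 1), (1 - ε i)) *
        (1 - ∑ j ∈ Finset.range (k + 1), f j) ^ (r - 1 - 1))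

lemma prob_sel_some (hε : ∀ i : ℕ, i ≤ N → (ν (Fin.ofNat (N + 1) i)).real {true} = ε i)
    {K : ℕ} (hg : ((2 * K + 3 : ℕ) : ℕ∞) ≤ G.egirth) (hNK : N ≤ K) {r : ℕ} (hG : IsRegular G r)
    {f : ℕ → ℝ} (hf : IsLaw r N ε f) (k : ℕ) (hk : k ≤ N) : ∀ (u v : V), G.Adj u v →
    (PP V ν).real {ω | sel G (bit N ω) k u (some v)} = f k := by
  induction k using Nat.strong_induction_on with
  | _ k ih =>
    intro u v huv
    rcases k with _ | k
    · simp only [sel_zero]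
      rw [prob_bit ν ε hε u (by omega), hf.1]
    · rw [prob_sel_succ G ν ε hε hg k (by omega) hk f u (some v), card_nbs_some G hG huv,
        hf.2 k (by omega)]
      intro j hj w hw
      exact ih j hj (by omega) w u hw.1.symm

lemma prob_sel_none (hε : ∀ i : ℕ, i ≤ N → (ν (Fin.ofNat (N + 1) i)).real {true} = ε i)
    {K : ℕ} (hg : ((2 * K + 3 : ℕ) : ℕ∞) ≤ G.egirth) (hNK : N ≤ K) {r : ℕ} (hG : IsRegular G r)
    {f : ℕ → ℝ} (hf : IsLaw r N ε f) (k : ℕ) (hk : k + 1 ≤ N) (u : V) :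
    (PP V ν).real {ω | sel G (bit N ω) (k + 1) u none} =
      r * ((1 - ε 0) * ε (k + 1) *
        (∑ j ∈ Finset.range (k + 1), f j * ∏ i ∈ Finset.Ioo j (k + 1), (1 - ε i)) *
        (1 - ∑ j ∈ Finset.range (k + 1), f j) ^ (r - 1)) := by
  rw [prob_sel_succ G ν ε hε hg k (by omega) hk f u none, card_nbs_none G hG]
  intro j hj w hw
  exact prob_sel_some G ν ε hε hg hNK hG hf j (by omega) w u hw.1.symm

end Law
section Expectation

variable {V : Type} [Fintype V] (G : SimpleGraph V) {N : ℕ}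
  (ν : Fin (N + 1) → Measure Bool) [∀ i, IsProbabilityMeasure (ν i)] (ε : ℕ → ℝ)

lemma bitp_depOn (u : V) (i : ℕ) : DepOn {ω | bit N ω u i} (ovr N {u}) := by
  apply depOn_of_iff
  intro ω ω' h
  exact bit_congr h u rfl i

lemma notbit_depOn (u : V) (i : ℕ) : DepOn {ω | ¬ bit N ω u i} (ovr N {u}) := by
  apply depOn_of_iff
  intro ω ω' h
  exact not_congr (bit_congr h u rfl i)

lemma prob_chain (hε : ∀ i : ℕ, i ≤ N → (ν (Fin.ofNat (N + 1) i)).real {true} = ε i)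
    {K L : ℕ} (hg : ((2 * K + 3 : ℕ) : ℕ∞) ≤ G.egirth) (hNK : N + L ≤ K) {r : ℕ}
    (hG : IsRegular G r) {f : ℕ → ℝ} (hf : IsLaw r N ε f) (l : ℕ) (hl : l ≤ L) :
    ∀ (u v : V), G.Adj u v →
    (PP V ν).real {ω | chain G (bit N ω) N l u (some v)} ≤
      (((r - 1 : ℕ) : ℝ) * ((1 - ε 0) *
        (1 - ∑ j ∈ Finset.range (N + 1), f j) ^ (r - 1 - 1))) ^ l := by
  classical
  induction l with
  | zero => intro u v _; simp
  | succ l ih =>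
    intro u v huv
    let E : V → V → Set (V × Fin (N + 1) → Bool) := fun w w' =>
      if w' = w then {ω | chain G (bit N ω) N l w (some u)}
      else {ω | ∀ i < N + 1, ¬ sel G (bit N ω) i w' (some u)}
    have hsub : {ω : V × Fin (N + 1) → Bool | chain G (bit N ω) N (l + 1) u (some v)} ⊆
        ⋃ w ∈ nbs G u (some v), ({ω | ¬ bit N ω u 0} ∩ ⋂ w' ∈ nbs G u (some v), E w w') := by
      rintro ω ⟨⟨h0, h1⟩, w, hw, hc⟩
      rw [Set.mem_iUnion₂]
      refine ⟨w, (mem_nbs G).2 hw, h0, ?_⟩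
      rw [Set.mem_iInter₂]
      intro w' hw'
      by_cases e : w' = w
      · simp only [E, e, if_true]; exact hc
      · simp only [E, e, if_false]; exact h1 w' ((mem_nbs G).1 hw')
    have hF : ∀ w', Nb G u (some v) w' →
        (PP V ν).real {ω | ∀ i < N + 1, ¬ sel G (bit N ω) i w' (some u)} =
          1 - ∑ j ∈ Finset.range (N + 1), f j := by
      intro w' hw'
      rw [prob_nosel]
      congr 1
      refine Finset.sum_congr rfl fun i hi => ?_
      rw [Finset.mem_range] at hi
      exact prob_sel_some G ν ε hε hg (by omega) hG hf i (by omega) w' u hw'.1.symm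
    have hF0 : ∀ w', Nb G u (some v) w' → 0 ≤ 1 - ∑ j ∈ Finset.range (N + 1), f j := by
      intro w' hw'
      rw [← hF w' hw']
      exact measureReal_nonneg
    have hε0 : 0 ≤ 1 - ε 0 := by
      rw [← prob_not_bit ν ε hε u (by omega : 0 ≤ N)]
      exact measureReal_nonneg
    have hterm : ∀ w ∈ nbs G u (some v), (PP V ν).real
        ({ω | ¬ bit N ω u 0} ∩ ⋂ w' ∈ nbs G u (some v), E w w') ≤
        (1 - ε 0) * ((((r - 1 : ℕ) : ℝ) * ((1 - ε 0) *
          (1 - ∑ j ∈ Finset.range (N + 1), f j) ^ (r - 1 - 1))) ^ l *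
          (1 - ∑ j ∈ Finset.range (N + 1), f j) ^ (r - 1 - 1)) := by
      intro w hw
      rw [star_indep G ν hg u (some v) _ (notbit_depOn u 0) (E w),
        prob_not_bit ν ε hε u (by omega : 0 ≤ N)]
      · refine mul_le_mul_of_nonneg_left ?_ hε0
        rw [← Finset.mul_prod_erase _ _ hw]
        have hp : ∏ w' ∈ (nbs G u (some v)).erase w, (PP V ν).real (E w w') =
            (1 - ∑ j ∈ Finset.range (N + 1), f j) ^ (r - 1 - 1) := by
          rw [← card_nbs_some G hG huv, ← Finset.card_erase_of_mem hw]
          apply Finset.prod_eq_pow_card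
          intro w' hw'
          rw [Finset.mem_erase] at hw'
          simp only [E, hw'.1, if_false]
          exact hF w' ((mem_nbs G).1 hw'.2)
        rw [hp]
        refine mul_le_mul_of_nonneg_right ?_ (pow_nonneg (hF0 w ((mem_nbs G).1 hw)) _)
        simp only [E, if_true]
        exact ih (by omega) w u ((mem_nbs G).1 hw).1.symm
      · intro w' hw'
        by_cases e : w' = w
        · simp only [E, e, if_true]
          apply (chain_depOn G l w (some u)).mono
          intro i hi
          exact Br_mono G (by omega) _ _ hi
        · simp only [E, e, if_false]
          exact nosel_depOn G _ _ (by omega) _ _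
    refine (measureReal_mono (μ := PP V ν) hsub (measure_ne_top _ _)).trans
      ((measureReal_biUnion_finset_le _ _).trans
      ((Finset.sum_le_sum hterm).trans (le_of_eq ?_)))
    rw [Finset.sum_const, card_nbs_some G hG huv, nsmul_eq_mul]
    ring

lemma prob_keptW (hε : ∀ i : ℕ, i ≤ N → (ν (Fin.ofNat (N + 1) i)).real {true} = ε i)
    {K L : ℕ} (hg : ((2 * K + 3 : ℕ) : ℕ∞) ≤ G.egirth) (hNK : N + L ≤ K) {r : ℕ}
    (hG : IsRegular G r) {f : ℕ → ℝ} (hf : IsLaw r N ε f) (v : V) :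
    (1 - ε 0) * (1 - ∑ j ∈ Finset.range (N + 1), f j) ^ r -
      r * (((r - 1 : ℕ) : ℝ) * ((1 - ε 0) *
        (1 - ∑ j ∈ Finset.range (N + 1), f j) ^ (r - 1 - 1))) ^ L ≤
    (PP V ν).real {ω | keptW G (bit N ω) N L v} := by
  classical
  have hwhite : (PP V ν).real {ω | whiteX G (bit N ω) N v none} =
      (1 - ε 0) * (1 - ∑ j ∈ Finset.range (N + 1), f j) ^ r := by
    have hset : {ω : V × Fin (N + 1) → Bool | whiteX G (bit N ω) N v none} =
        {ω | ¬ bit N ω v 0} ∩ ⋂ w ∈ nbs G v none,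
          {ω | ∀ i < N + 1, ¬ sel G (bit N ω) i w (some v)} := by
      ext ω
      simp only [Set.mem_ofPred_eq, Set.mem_inter_iff, Set.mem_iInter, mem_nbs, whiteX]
    rw [hset, star_indep G ν hg v none _ (notbit_depOn v 0),
      prob_not_bit ν ε hε v (by omega : 0 ≤ N)]
    · congr 1
      rw [← card_nbs_none G hG v]
      apply Finset.prod_eq_pow_card
      intro w hw
      rw [prob_nosel]
      congr 1
      refine Finset.sum_congr rfl fun i hi => ?_
      rw [Finset.mem_range] at hi
      exact prob_sel_some G ν ε hε hg (by omega) hG hf i (by omega) w v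
        ((mem_nbs G).1 hw).1.symm
    · intro w hw
      exact nosel_depOn G _ _ (by omega) _ _
  have hsub : {ω : V × Fin (N + 1) → Bool | whiteX G (bit N ω) N v none} ⊆
      {ω | keptW G (bit N ω) N L v} ∪ ⋃ u ∈ nbs G v none,
        {ω | chain G (bit N ω) N L u (some v)} := by
    intro ω hω
    by_cases h : ∀ u, G.Adj v u → ¬ chain G (bit N ω) N L u (some v)
    · exact Or.inl ⟨hω, h⟩
    · push Not at h
      obtain ⟨u, hu, hc⟩ := h
      refine Or.inr (Set.mem_iUnion₂.2 ⟨u, (mem_nbs G).2 ⟨hu, by simp⟩, hc⟩)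
  have h1 := (measureReal_mono (μ := PP V ν) hsub).trans (measureReal_union_le _ _)
  have h2 : (PP V ν).real (⋃ u ∈ nbs G v none, {ω | chain G (bit N ω) N L u (some v)}) ≤
      r * (((r - 1 : ℕ) : ℝ) * ((1 - ε 0) *
        (1 - ∑ j ∈ Finset.range (N + 1), f j) ^ (r - 1 - 1))) ^ L := by
    refine (measureReal_biUnion_finset_le _ _).trans ((Finset.sum_le_sum fun u hu =>
      prob_chain G ν ε hε hg hNK hG hf L le_rfl u v ((mem_nbs G).1 hu).1.symm).trans ?_)
    rw [Finset.sum_const, card_nbs_none G hG, nsmul_eq_mul]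
  rw [hwhite] at h1
  linarith

lemma prob_keptP (hε : ∀ i : ℕ, i ≤ N → (ν (Fin.ofNat (N + 1) i)).real {true} = ε i)
    {K : ℕ} (hg : ((2 * K + 3 : ℕ) : ℕ∞) ≤ G.egirth) (hNK : N ≤ K) {r : ℕ}
    (hG : IsRegular G r) {f : ℕ → ℝ} (hf : IsLaw r N ε f) (v : V) :
    ε 0 * (1 - ε 0) ^ r + ∑ k ∈ Finset.range N, (r * ((1 - ε 0) * ε (k + 1) *
        (∑ j ∈ Finset.range (k + 1), f j * ∏ i ∈ Finset.Ioo j (k + 1), (1 - ε i)) *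
        (1 - ∑ j ∈ Finset.range (k + 1), f j) ^ (r - 1)) - r * (ε (k + 1) * f (k + 1))) ≤
    (PP V ν).real {ω | keptP G (bit N ω) N v} := by
  classical
  let Ev : ℕ → Set (V × Fin (N + 1) → Bool) := fun k =>
    {ω | sel G (bit N ω) k v none ∧ ∀ u, G.Adj v u → ¬ sel G (bit N ω) k u none}
  have hset : {ω : V × Fin (N + 1) → Bool | keptP G (bit N ω) N v} =
      ⋃ k ∈ Finset.range (N + 1), Ev k := by
    ext ω
    simp only [Set.mem_ofPred_eq, Set.mem_iUnion, Finset.mem_range, keptP, Ev, exists_prop]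
  rw [hset, measureReal_biUnion_finset, Finset.sum_range_succ', add_comm]
  · apply add_le_add
    · refine Finset.sum_le_sum fun k hk => ?_
      rw [Finset.mem_range] at hk
      rw [← prob_sel_none G ν ε hε hg hNK hG hf k (by omega) v]
      have hsub : {ω : V × Fin (N + 1) → Bool | sel G (bit N ω) (k + 1) v none} ⊆
          Ev (k + 1) ∪ ⋃ u ∈ nbs G v none,
            ({ω | bit N ω v (k + 1)} ∩ {ω | sel G (bit N ω) (k + 1) u (some v)}) := by
        intro ω hω
        by_cases h : ∀ u, G.Adj v u → ¬ sel G (bit N ω) (k + 1) u none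
        · exact Or.inl ⟨hω, h⟩
        · push Not at h
          obtain ⟨u, hu, hc⟩ := h
          refine Or.inr (Set.mem_iUnion₂.2 ⟨u, (mem_nbs G).2 ⟨hu, by simp⟩, ?_, ?_⟩)
          · exact ((sel_succ G _ k v none).1 hω).2.1
          · refine sel_some_of_none G _ hu.symm (fun i hi hs => ?_) hc
            have := sel_unique G _ hs hω
            omega
      have h1 := (measureReal_mono (μ := PP V ν) hsub).trans (measureReal_union_le _ _)
      have h2 : (PP V ν).real (⋃ u ∈ nbs G v none,
            ({ω | bit N ω v (k + 1)} ∩ {ω | sel G (bit N ω) (k + 1) u (some v)})) ≤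
          r * (ε (k + 1) * f (k + 1)) := by
        refine (measureReal_biUnion_finset_le _ _).trans ((Finset.sum_le_sum
          (g := fun _ => ε (k + 1) * f (k + 1)) fun u hu => le_of_eq ?_).trans ?_)
        · have hadj := ((mem_nbs G).1 hu).1
          have h3 := indep_two (fun i : V × Fin (N + 1) => ν i.2) (bitp_depOn v (k + 1))
            ((sel_depOn G (k + 1) u (some v)).mono
              (fun i hi => Br_mono G (by omega : k + 1 ≤ K) _ _ hi :
                ovr N (Br G (k + 1) u (some v)) ⊆ ovr N (Br G K u (some v))))
            (ovr_disjoint (Set.disjoint_singleton_left.2 (Br_not_mem G hg hadj)))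
          change (PP V ν).real _ = (PP V ν).real _ * (PP V ν).real _ at h3
          rw [h3, prob_bit ν ε hε v (by omega),
            prob_sel_some G ν ε hε hg hNK hG hf (k + 1) (by omega) u v hadj.symm]
        · rw [Finset.sum_const, card_nbs_none G hG, nsmul_eq_mul]
      linarith
    · have h0 : Ev 0 = {ω | bit N ω v 0} ∩ ⋂ w ∈ nbs G v none, {ω | ¬ bit N ω w 0} := by
        ext ω
        simp only [Ev, Set.mem_ofPred_eq, Set.mem_inter_iff, Set.mem_iInter, mem_nbs, sel_zero, Nb]
        simp
      rw [h0, star_indep G ν hg v none _ (bitp_depOn v 0), prob_bit ν ε hε v (by omega)]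
      · apply le_of_eq
        congr 1
        rw [← card_nbs_none G hG v]
        symm
        apply Finset.prod_eq_pow_card
        intro w _
        exact prob_not_bit ν ε hε w (by omega)
      · intro w hw
        apply (notbit_depOn w 0).mono
        intro i hi
        have : i.1 = w := hi
        change i.1 ∈ Br G K w (some v)
        rw [this]
        exact Br_self G _ _ _
  · intro a _ b _ hab
    exact Set.disjoint_left.2 fun ω ha hb => hab (sel_unique G _ ha.1 hb.1)
  · intro b _
    exact MeasurableSet.of_discrete

theorem tau_ge_of_law (hε : ∀ i : ℕ, i ≤ N → (ν (Fin.ofNat (N + 1) i)).real {true} = ε i)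
    {K L : ℕ} (hg : ((2 * K + 3 : ℕ) : ℕ∞) ≤ G.egirth) (hNK : N + L ≤ K) {r : ℕ}
    (hG : IsRegular G r) {f : ℕ → ℝ} (hf : IsLaw r N ε f) :
    ((ε 0 * (1 - ε 0) ^ r + ∑ k ∈ Finset.range N, (r * ((1 - ε 0) * ε (k + 1) *
        (∑ j ∈ Finset.range (k + 1), f j * ∏ i ∈ Finset.Ioo j (k + 1), (1 - ε i)) *
        (1 - ∑ j ∈ Finset.range (k + 1), f j) ^ (r - 1)) - r * (ε (k + 1) * f (k + 1)))) +
    ((1 - ε 0) * (1 - ∑ j ∈ Finset.range (N + 1), f j) ^ r -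
      r * (((r - 1 : ℕ) : ℝ) * ((1 - ε 0) *
        (1 - ∑ j ∈ Finset.range (N + 1), f j) ^ (r - 1 - 1))) ^ L)) * (Fintype.card V : ℝ) ≤
    (tau G : ℝ) := by
  classical
  set c := ((ε 0 * (1 - ε 0) ^ r + ∑ k ∈ Finset.range N, (r * ((1 - ε 0) * ε (k + 1) *
        (∑ j ∈ Finset.range (k + 1), f j * ∏ i ∈ Finset.Ioo j (k + 1), (1 - ε i)) *
        (1 - ∑ j ∈ Finset.range (k + 1), f j) ^ (r - 1)) - r * (ε (k + 1) * f (k + 1)))) +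
    ((1 - ε 0) * (1 - ∑ j ∈ Finset.range (N + 1), f j) ^ r -
      r * (((r - 1 : ℕ) : ℝ) * ((1 - ε 0) *
        (1 - ∑ j ∈ Finset.range (N + 1), f j) ^ (r - 1 - 1))) ^ L)) with hc
  let S : (V × Fin (N + 1) → Bool) → Set V := fun ω =>
    {v | keptP G (bit N ω) N v ∨ keptW G (bit N ω) N L v}
  have hprob : ∀ v, c ≤ (PP V ν).real {ω | v ∈ S ω} := by
    intro v
    have h : {ω | v ∈ S ω} = {ω | keptP G (bit N ω) N v} ∪ {ω | keptW G (bit N ω) N L v} := rfl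
    rw [h, measureReal_union _ MeasurableSet.of_discrete]
    · exact add_le_add (prob_keptP G ν ε hε hg (by omega) hG hf v)
        (prob_keptW G ν ε hε hg hNK hG hf v)
    · refine Set.disjoint_left.2 fun ω ha hb => ?_
      obtain ⟨k, hk, hs, -⟩ := ha
      exact white_not_sel G _ hb.1 k hk hs
  have hcard : ∀ ω, ((S ω).ncard : ℝ) = ∑ v, Set.indicator {ω | v ∈ S ω} (fun _ => (1 : ℝ)) ω := by
    intro ω
    have h : S ω = ((Finset.univ.filter (fun v => v ∈ S ω) : Finset V) : Set V) := by
      ext v; simp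
    have h2 : (S ω).ncard = (Finset.univ.filter (fun v => v ∈ S ω) : Finset V).card := by
      conv_lhs => rw [h]
      exact Set.ncard_coe_finset _
    rw [h2, ← Finset.sum_boole]
    refine Finset.sum_congr rfl fun v _ => ?_
    by_cases hv : v ∈ S ω
    · rw [if_pos hv, Set.indicator_of_mem (show ω ∈ {ω | v ∈ S ω} from hv)]
    · rw [if_neg hv, Set.indicator_of_notMem (show ω ∉ {ω | v ∈ S ω} from hv)]
  have hintg : ∫ ω, ((S ω).ncard : ℝ) ∂(PP V ν) = ∑ v, (PP V ν).real {ω | v ∈ S ω} := by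
    simp_rw [hcard]
    rw [integral_finsetSum _ (fun _ _ => Integrable.of_finite)]
    refine Finset.sum_congr rfl fun v _ => ?_
    rw [integral_indicator_const _ MeasurableSet.of_discrete]
    simp
  obtain ⟨ω, hω⟩ := exists_integral_le (μ := PP V ν) (f := fun ω => ((S ω).ncard : ℝ))
    Integrable.of_finite
  rw [hintg] at hω
  have h1 : c * (Fintype.card V : ℝ) ≤ ∑ v, (PP V ν).real {ω | v ∈ S ω} := by
    calc c * (Fintype.card V : ℝ) = ∑ _v : V, c := by simp [mul_comm]
      _ ≤ _ := Finset.sum_le_sum fun v _ => hprob v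
  have h2 : ((S ω).ncard : ℝ) ≤ tau G := by
    exact_mod_cast le_tau G (S ω) (kept_acyclic G (bit N ω) N L)
  linarith

end Expectation
section Analysis

/-- A solution of a homogeneous linear equation that vanishes at `0` vanishes on `[0,∞)`. -/
lemma lin_zero {y a : ℝ → ℝ}
    (hy : ∀ x : ℝ, 0 ≤ x → HasDerivWithinAt y (a x * y x) (Ici 0) x)
    (ha : ContinuousOn a (Ici 0)) (h0 : y 0 = 0) : ∀ x : ℝ, 0 ≤ x → y x = 0 := by
  intro X hX
  obtain ⟨C, hC⟩ := (isCompact_Icc (a := (0 : ℝ)) (b := X)).exists_bound_of_continuousOn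
    (ha.mono Icc_subset_Ici_self)
  have hcont : ContinuousOn y (Icc 0 X) := fun x hx =>
    ((hy x hx.1).continuousWithinAt).mono Icc_subset_Ici_self
  have := norm_le_gronwallBound_of_norm_deriv_right_le (δ := 0) (K := C) (ε := 0) hcont
    (fun x hx => (hy x hx.1).mono (Ici_subset_Ici.2 hx.1)) (by simp [h0])
    (fun x hx => by
      rw [norm_mul, add_zero]
      exact mul_le_mul_of_nonneg_right (hC x ⟨hx.1, hx.2.le⟩) (norm_nonneg _)) X ⟨hX, le_rfl⟩
  rw [gronwallBound_ε0_δ0] at this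
  exact norm_le_zero_iff.1 this

/-- Reduction of the system to two unknown functions. -/
lemma reduce (m : ℕ) (p₀ : ℝ) (hp₀ : p₀ ∈ Ioo (0 : ℝ) 1) (w b q s t : ℝ → ℝ)
    (hsol : SystemODE (m + 3) p₀ w b q s t)
    (hpos : ∀ x : ℝ, 0 ≤ x → 0 < w x ∧ 0 < b x ∧ 0 < q x ∧ 0 < s x ∧ 0 < t x) :
    ∃ F H : ℝ → ℝ, (∀ x, 0 ≤ x → 0 < F x) ∧ (∀ x, 0 ≤ x → 0 < H x) ∧ F 0 = 1 - p₀ ∧ H 0 = p₀ ∧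
      (∀ x, 0 ≤ x → HasDerivWithinAt F
        (-((1 - p₀) * (m + 2) * F x ^ (m + 1) * H x)) (Ici 0) x) ∧
      (∀ x, 0 ≤ x → HasDerivWithinAt H
        (-(H x) + (1 - p₀) * (m + 2) * F x ^ (m + 1) * H x) (Ici 0) x) ∧
      (∀ x, 0 ≤ x → w x = (1 - p₀) * F x ^ (m + 3)) ∧
      (∀ x, 0 ≤ x → q x = (1 - p₀) ^ 2 * F x ^ (2 * m + 4)) ∧
      (∀ x, 0 ≤ x → b x = (1 - p₀) * (m + 3) * F x ^ (m + 2) * H x) := by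
  obtain ⟨hw, hb, hq, hs, ht, hw0, hb0, hq0, hs0, ht0⟩ := hsol
  obtain ⟨hp0, hp1⟩ := hp₀
  set u : ℝ := 1 - p₀ with hu
  have hupos : 0 < u := by rw [hu]; linarith
  have hm : (0 : ℝ) ≤ m := Nat.cast_nonneg m
  have cw : ContinuousOn w (Ici 0) := fun x hx => (hw x hx).continuousWithinAt
  have cb : ContinuousOn b (Ici 0) := fun x hx => (hb x hx).continuousWithinAt
  have cq : ContinuousOn q (Ici 0) := fun x hx => (hq x hx).continuousWithinAt
  have cs : ContinuousOn s (Ici 0) := fun x hx => (hs x hx).continuousWithinAt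
  have ct : ContinuousOn t (Ici 0) := fun x hx => (ht x hx).continuousWithinAt
  have nw : ∀ x ∈ Ici (0 : ℝ), w x ≠ 0 := fun x hx => (hpos x hx).1.ne'
  have nb : ∀ x ∈ Ici (0 : ℝ), b x ≠ 0 := fun x hx => (hpos x hx).2.1.ne'
  have nq : ∀ x ∈ Ici (0 : ℝ), q x ≠ 0 := fun x hx => (hpos x hx).2.2.1.ne'
  have ns : ∀ x ∈ Ici (0 : ℝ), s x ≠ 0 := fun x hx => (hpos x hx).2.2.2.1.ne'
  have hr1 : ((m : ℝ) + 2) ≠ 0 := by positivity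
  have hr0 : ((m : ℝ) + 3) ≠ 0 := by positivity
  have e1 : ((m + 3 : ℕ) : ℝ) - 1 = m + 2 := by push_cast; ring
  have e2 : ((m + 3 : ℕ) : ℝ) - 2 = m + 1 := by push_cast; ring
  have e3 : 2 * ((m + 3 : ℕ) : ℝ) - 2 = 2 * m + 4 := by push_cast; ring
  have e0 : ((m + 3 : ℕ) : ℝ) = m + 3 := by push_cast; ring
  simp only [e1, e2, e3] at hw hb hq hs ht hs0 ht0
  simp only [e0] at hw hb hq hs ht hb0 hs0 ht0
  -- t q = s ^ 2
  have htq : ∀ x, 0 ≤ x → t x * q x - s x ^ 2 = 0 := by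
    apply lin_zero (a := fun x => -2 - 2 * ((m : ℝ) + 3) * (m + 1) * t x / ((m + 2) * b x)
      - (2 * m + 4) * s x / w x)
    · intro x hx
      refine (((ht x hx).mul (hq x hx)).sub ((hs x hx).pow 2)).congr_deriv ?_
      have h1 := nw x hx
      have h2 := nb x hx
      push_cast
      field_simp
      ring
    · refine (continuousOn_const.sub ?_).sub ?_
      · exact (continuousOn_const.mul ct).div (continuousOn_const.mul cb)
          fun x hx => mul_ne_zero hr1 (nb x hx)
      · exact (continuousOn_const.mul cs).div cw nw
    · rw [ht0, hq0, hs0]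
      have : 2 * (m + 3) - 1 = 2 * m + 5 := by omega
      rw [this]
      have : 2 * (m + 3) - 2 = 2 * m + 4 := by omega
      rw [this]
      ring
  have htq' : ∀ x, 0 ≤ x → t x = s x ^ 2 / q x := by
    intro x hx
    rw [eq_div_iff (nq x hx)]
    linarith [htq x hx]
  have hsw : ∀ x, 0 ≤ x → ((m : ℝ) + 3) * (s x * w x) - (m + 2) * (q x * b x) = 0 := by
    apply lin_zero (a := fun x => -1 - ((m : ℝ) + 3) * s x ^ 2 *
      ((m + 1) * ((m + 3) * (s x * w x)) + (2 * m + 4) * ((m + 2) * (q x * b x))) /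
      (((m + 3) * (s x * w x)) * ((m + 2) * (q x * b x))))
    · intro x hx
      refine ((((hs x hx).mul (hw x hx)).const_mul ((m : ℝ) + 3)).sub
        (((hq x hx).mul (hb x hx)).const_mul ((m : ℝ) + 2))).congr_deriv ?_
      have h1 := nw x hx
      have h2 := nb x hx
      have h3 := nq x hx
      have h4 := ns x hx
      rw [htq' x hx]
      field_simp
      ring
    · refine continuousOn_const.sub ?_
      refine ContinuousOn.div (by fun_prop) (by fun_prop) fun x hx => ?_
      exact mul_ne_zero (mul_ne_zero hr0 (mul_ne_zero (ns x hx) (nw x hx)))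
        (mul_ne_zero hr1 (mul_ne_zero (nq x hx) (nb x hx)))
    · rw [hw0, hq0, hs0, hb0]
      have : 2 * (m + 3) - 1 = 2 * m + 5 := by omega
      rw [this]
      ring
  have hsw' : ∀ x, 0 ≤ x → s x = (m + 2) * (q x * b x) / ((m + 3) * w x) := by
    intro x hx
    rw [eq_div_iff (mul_ne_zero hr0 (nw x hx))]
    linarith [hsw x hx]
  let F : ℝ → ℝ := fun x => (w x / u) ^ (((m : ℝ) + 3)⁻¹)
  have Fpos : ∀ x, 0 ≤ x → 0 < F x := fun x hx =>
    Real.rpow_pos_of_pos (div_pos (hpos x hx).1 hupos) _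
  have Fw : ∀ x, 0 ≤ x → w x = u * F x ^ (m + 3) := by
    intro x hx
    have : F x ^ (m + 3) = w x / u := by
      have := Real.rpow_inv_natCast_pow (div_pos (hpos x hx).1 hupos).le
        (by omega : m + 3 ≠ 0)
      rwa [e0] at this
    rw [this]
    field_simp
  have Fd : ∀ x, 0 ≤ x → HasDerivWithinAt F (-(s x / w x) * F x) (Ici 0) x := by
    intro x hx
    have hwu := div_pos (hpos x hx).1 hupos
    refine (((hw x hx).div_const u).rpow_const (p := ((m : ℝ) + 3)⁻¹) (Or.inl hwu.ne')).congr_deriv ?_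
    rw [Real.rpow_sub_one hwu.ne']
    change _ * (F x / _) = _
    have h1 := nw x hx
    field_simp
  have F0 : F 0 = u := by
    have h1 := Fw 0 le_rfl
    rw [hw0] at h1
    have h2 : F 0 ^ (m + 3) = u ^ (m + 3) := by
      have : u * F 0 ^ (m + 3) = u * u ^ (m + 3) := by rw [← h1]; ring
      exact mul_left_cancel₀ hupos.ne' this
    exact (pow_left_inj₀ (Fpos 0 le_rfl).le hupos.le (by omega)).1 h2
  have cF : ContinuousOn F (Ici 0) := fun x hx => (Fd x hx).continuousWithinAt
  have Fq : ∀ x, 0 ≤ x → q x - u ^ 2 * F x ^ (2 * m + 4) = 0 := by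
    apply lin_zero (a := fun x => -((2 * (m : ℝ) + 4) * s x / w x))
    · intro x hx
      refine ((hq x hx).sub (((Fd x hx).pow (2 * m + 4)).const_mul (u ^ 2))).congr_deriv ?_
      have h1 := nw x hx
      have : 2 * m + 4 - 1 = 2 * m + 3 := by omega
      rw [this]
      push_cast
      field_simp
      ring
    · exact ((continuousOn_const.mul cs).div cw nw).neg
    · rw [hq0, F0]; ring
  have Fq' : ∀ x, 0 ≤ x → q x = u ^ 2 * F x ^ (2 * m + 4) := fun x hx => by
    linarith [Fq x hx]
  let H : ℝ → ℝ := fun x => b x / (u * (m + 3) * F x ^ (m + 2))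
  have Hb : ∀ x, 0 ≤ x → b x = u * (m + 3) * F x ^ (m + 2) * H x := by
    intro x hx
    have h1 := (Fpos x hx).ne'
    simp only [H]
    field_simp
  have Hs : ∀ x, 0 ≤ x → s x = (m + 2) * u ^ 2 * F x ^ (2 * m + 3) * H x := by
    intro x hx
    have h1 := (Fpos x hx).ne'
    rw [hsw' x hx, Fq' x hx, Fw x hx, Hb x hx]
    field_simp
    ring
  have Fd' : ∀ x, 0 ≤ x → HasDerivWithinAt F (-(u * (m + 2) * F x ^ (m + 1) * H x)) (Ici 0) x := by
    intro x hx
    refine (Fd x hx).congr_deriv ?_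
    have h1 := (Fpos x hx).ne'
    rw [Hs x hx, Fw x hx]
    field_simp
    ring
  refine ⟨F, H, Fpos, ?_, F0, ?_, Fd', ?_, Fw, Fq', Hb⟩
  · intro x hx
    have h1 := Fpos x hx
    have h2 := (hpos x hx).2.1
    simp only [H]
    positivity
  · simp only [H]
    rw [hb0, F0]
    field_simp
    ring
  · intro x hx
    have h1 := (Fpos x hx).ne'
    refine ((hb x hx).div (((Fd' x hx).pow (m + 2)).const_mul (u * (m + 3)))
      (by simp only [Pi.pow_apply]; positivity)).congr_deriv ?_
    simp only [Pi.pow_apply]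
    have h2 : m + 2 - 1 = m + 1 := by omega
    rw [h2]
    rw [htq' x hx, Hs x hx, Fq' x hx, Hb x hx]
    push_cast
    field_simp
    ring

lemma hist_eq (ε f Hd : ℕ → ℝ) (h0 : Hd 0 = f 0)
    (hs : ∀ k, Hd (k + 1) = (1 - ε (k + 1)) * Hd k + f (k + 1)) (k : ℕ) :
    ∑ j ∈ Finset.range (k + 1), f j * ∏ i ∈ Finset.Ioo j (k + 1), (1 - ε i) = Hd k := by
  induction k with
  | zero =>
    have : Finset.Ioo 0 (0 + 1) = ∅ := rfl
    simp [h0, this, -zero_add]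
  | succ k ih =>
    rw [Finset.sum_range_succ, hs, ← ih, Finset.mul_sum]
    congr 1
    · refine Finset.sum_congr rfl fun j hj => ?_
      rw [Finset.mem_range] at hj
      have : Finset.Ioo j (k + 1 + 1) = insert (k + 1) (Finset.Ioo j (k + 1)) := by
        ext i
        simp only [Finset.mem_Ioo, Finset.mem_insert]
        omega
      rw [this, Finset.prod_insert (by simp)]
      ring
    · have : Finset.Ioo (k + 1) (k + 1 + 1) = ∅ := by
        ext i
        simp only [Finset.mem_Ioo, Finset.notMem_empty, iff_false]
        omega
      rw [this]
      simp

lemma F_anti {c : ℝ} (hc : 0 < c) {m : ℕ} {F H : ℝ → ℝ}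
    (Fpos : ∀ x, 0 ≤ x → 0 < F x) (Hpos : ∀ x, 0 ≤ x → 0 < H x)
    (Fd : ∀ x, 0 ≤ x → HasDerivWithinAt F (-(c * F x ^ (m + 1) * H x)) (Ici 0) x) :
    AntitoneOn F (Ici 0) := by
  refine antitoneOn_of_hasDerivWithinAt_nonpos (convex_Ici 0)
    (fun x hx => (Fd x hx).continuousWithinAt)
    (f' := fun x => -(c * F x ^ (m + 1) * H x)) ?_ ?_
  · intro x hx
    rw [interior_Ici] at hx ⊢
    exact (Fd x (le_of_lt hx)).mono Ioi_subset_Ici_self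
  · intro x hx
    rw [interior_Ici] at hx
    have h1 := Fpos x (le_of_lt hx)
    have h2 := Hpos x (le_of_lt hx)
    have : 0 < c * F x ^ (m + 1) * H x := by positivity
    linarith

lemma H_step {c : ℝ} (hc : 0 < c) {m : ℕ} {F H : ℝ → ℝ}
    (Fpos : ∀ x, 0 ≤ x → 0 < F x) (Hpos : ∀ x, 0 ≤ x → 0 < H x)
    (Fd : ∀ x, 0 ≤ x → HasDerivWithinAt F (-(c * F x ^ (m + 1) * H x)) (Ici 0) x)
    (Hd : ∀ x, 0 ≤ x → HasDerivWithinAt H (-(H x) + c * F x ^ (m + 1) * H x) (Ici 0) x)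
    {x y : ℝ} (hx : 0 ≤ x) (hxy : x ≤ y) :
    H y ≤ H x + (F x - F y) - (F x - F y) / (c * F x ^ (m + 1)) := by
  have hsub : Ici x ⊆ Ici (0 : ℝ) := Ici_subset_Ici.2 hx
  have hFx := Fpos x hx
  have hA : 0 < c * F x ^ (m + 1) := by positivity
  have hanti : AntitoneOn (fun z => H z + F z - F z / (c * F x ^ (m + 1))) (Ici x) := by
    have hder : ∀ z, 0 ≤ z → HasDerivWithinAt (fun z => H z + F z - F z / (c * F x ^ (m + 1)))
        (-(H z) + c * F z ^ (m + 1) * H z + -(c * F z ^ (m + 1) * H z)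
          - -(c * F z ^ (m + 1) * H z) / (c * F x ^ (m + 1))) (Ici 0) z := fun z hz =>
      ((Hd z hz).add (Fd z hz)).sub ((Fd z hz).div_const _)
    refine antitoneOn_of_hasDerivWithinAt_nonpos (convex_Ici x)
      (fun z hz => ((hder z (hsub hz)).continuousWithinAt).mono hsub)
      (f' := fun z => (-(H z) + c * F z ^ (m + 1) * H z + -(c * F z ^ (m + 1) * H z)
          - -(c * F z ^ (m + 1) * H z) / (c * F x ^ (m + 1)))) ?_ ?_
    · intro z hz
      exact (hder z (hsub (interior_subset hz))).mono (interior_subset.trans hsub)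
    · intro z hz
      have hz0 : x ≤ z := interior_subset hz
      have hz1 : 0 ≤ z := hx.trans hz0
      have h1 := F_anti hc Fpos Hpos Fd (mem_Ici.2 hx) (mem_Ici.2 hz1) hz0
      have h2 : F z ^ (m + 1) ≤ F x ^ (m + 1) := pow_le_pow_left₀ (Fpos z hz1).le h1 _
      have h3 := Hpos z hz1
      have h4 : c * F z ^ (m + 1) * H z / (c * F x ^ (m + 1)) ≤ H z := by
        rw [div_le_iff₀ hA]
        nlinarith [mul_le_mul_of_nonneg_left h2 (mul_pos hc h3).le]
      rw [neg_div]
      linarith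
  have := hanti (mem_Ici.2 le_rfl) (mem_Ici.2 hxy) hxy
  simp only at this
  rw [sub_div]
  linarith

lemma discretize {p₀ : ℝ} (hp₀ : p₀ ∈ Ioo (0 : ℝ) 1) {m : ℕ} {F H : ℝ → ℝ}
    (Fpos : ∀ x, 0 ≤ x → 0 < F x) (Hpos : ∀ x, 0 ≤ x → 0 < H x)
    (F0 : F 0 = 1 - p₀) (H0 : H 0 = p₀)
    (Fd : ∀ x, 0 ≤ x → HasDerivWithinAt F
      (-((1 - p₀) * (m + 2) * F x ^ (m + 1) * H x)) (Ici 0) x)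
    (Hd : ∀ x, 0 ≤ x → HasDerivWithinAt H
      (-(H x) + (1 - p₀) * (m + 2) * F x ^ (m + 1) * H x) (Ici 0) x)
    {T : ℝ} (hT : 0 < T) {e : ℝ} (he : 0 < e) :
    ∃ (N : ℕ) (ε f : ℕ → ℝ), IsLaw (m + 3) N ε f ∧ (∀ i ≤ N, 0 ≤ ε i ∧ ε i ≤ 1) ∧ ε 0 = p₀ ∧
      1 - ∑ j ∈ Finset.range (N + 1), f j = F T ∧
      ((m : ℝ) + 3) / (2 * (m + 2)) * ((1 - p₀) ^ 2 - F T ^ 2) - e ≤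
      ∑ k ∈ Finset.range N, (((m + 3 : ℕ) : ℝ) * ((1 - ε 0) * ε (k + 1) *
        (∑ j ∈ Finset.range (k + 1), f j * ∏ i ∈ Finset.Ioo j (k + 1), (1 - ε i)) *
        (1 - ∑ j ∈ Finset.range (k + 1), f j) ^ (m + 3 - 1))
          - ((m + 3 : ℕ) : ℝ) * (ε (k + 1) * f (k + 1))) := by
  obtain ⟨hp0, hp1⟩ := hp₀
  set c : ℝ := (1 - p₀) * (m + 2) with hcdef
  have hu : 0 < 1 - p₀ := by linarith
  have hc : 0 < c := by positivity
  have hanti := F_anti hc Fpos Hpos Fd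
  have cF : ContinuousOn F (Icc 0 T) := fun x hx =>
    ((Fd x hx.1).continuousWithinAt).mono Icc_subset_Ici_self
  have cH : ContinuousOn H (Icc 0 T) := fun x hx =>
    ((Hd x hx.1).continuousWithinAt).mono Icc_subset_Ici_self
  obtain ⟨x0, hx0, hmin⟩ := isCompact_Icc.exists_isMinOn (nonempty_Icc.2 hT.le) cH
  have hη : 0 < H x0 := Hpos x0 hx0.1
  have hFT := Fpos T hT.le
  set e0 : ℝ := min 1 (e / (m + 3)) with he0def
  have he0 : 0 < e0 := by rw [he0def]; positivity
  have he01 : e0 ≤ 1 := min_le_left _ _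
  have he02 : (m + 3) * e0 ≤ e := by
    have : e0 ≤ e / (m + 3) := min_le_right _ _
    rw [le_div_iff₀ (by positivity)] at this
    linarith
  have huc := (isCompact_Icc (a := (0 : ℝ)) (b := T)).uniformContinuousOn_of_continuous cF
  rw [Metric.uniformContinuousOn_iff] at huc
  obtain ⟨d, hd, huc⟩ := huc (e0 * (c * F T ^ (m + 1) * H x0)) (by positivity)
  obtain ⟨N, hN⟩ := exists_nat_gt (max (T / d) 1)
  have hN1 : (1 : ℝ) < N := lt_of_le_of_lt (le_max_right _ _) hN
  have hN0 : (0 : ℝ) < N := by linarith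
  have hNd : T / N < d := by
    have : T / d < N := lt_of_le_of_lt (le_max_left _ _) hN
    rw [div_lt_iff₀ hd] at this
    rw [div_lt_iff₀ hN0]
    linarith
  let τ : ℕ → ℝ := fun k => k * (T / N)
  have τ0 : ∀ k, 0 ≤ τ k := fun k => by simp only [τ]; positivity
  have τstep : ∀ k, τ (k + 1) = τ k + T / N := fun k => by simp only [τ]; push_cast; ring
  have τmono : ∀ k, τ k ≤ τ (k + 1) := fun k => by
    rw [τstep]
    have : 0 < T / N := by positivity
    linarith
  have τN : τ N = T := by simp only [τ]; field_simp
  have τle : ∀ k ≤ N, τ k ≤ T := by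
    intro k hk
    rw [← τN]
    simp only [τ]
    have : (k : ℝ) ≤ N := by exact_mod_cast hk
    gcongr
  let Φ : ℕ → ℝ := fun k => F (τ k)
  have Φpos : ∀ k, 0 < Φ k := fun k => Fpos _ (τ0 k)
  have Φ0 : Φ 0 = 1 - p₀ := by simp only [Φ, τ]; simp [F0]
  have ΦN : Φ N = F T := by simp only [Φ, τN]
  have Φstep : ∀ k, Φ (k + 1) ≤ Φ k := fun k =>
    hanti (mem_Ici.2 (τ0 k)) (mem_Ici.2 (τ0 (k + 1))) (τmono k)
  let f : ℕ → ℝ := fun k => Nat.casesOn k p₀ (fun k => Φ k - Φ (k + 1))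
  have f0 : f 0 = p₀ := rfl
  have fs : ∀ k, f (k + 1) = Φ k - Φ (k + 1) := fun _ => rfl
  have fnn : ∀ k, 0 ≤ f (k + 1) := fun k => by rw [fs]; linarith [Φstep k]
  let h : ℕ → ℝ := fun k => Nat.rec p₀ (fun k hk => hk + f (k + 1) - f (k + 1) / (c * Φ k ^ (m + 1))) k
  have h0 : h 0 = p₀ := rfl
  have hs : ∀ k, h (k + 1) = h k + f (k + 1) - f (k + 1) / (c * Φ k ^ (m + 1)) := fun _ => rfl
  have hge : ∀ k, H (τ k) ≤ h k := by
    intro k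
    induction k with
    | zero => simp only [τ]; simp [H0, h0]
    | succ k ih =>
      rw [hs, fs]
      have := H_step hc Fpos Hpos Fd Hd (τ0 k) (τmono k)
      simp only [Φ]
      linarith
  have hpos : ∀ k, 0 < h k := fun k => (Hpos _ (τ0 k)).trans_le (hge k)
  let ε : ℕ → ℝ := fun k => Nat.casesOn k p₀ (fun k => f (k + 1) / (c * Φ k ^ (m + 1) * h k))
  have ε0 : ε 0 = p₀ := rfl
  have εs : ∀ k, ε (k + 1) = f (k + 1) / (c * Φ k ^ (m + 1) * h k) := fun _ => rfl
  have hrec : ∀ k, h (k + 1) = (1 - ε (k + 1)) * h k + f (k + 1) := by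
    intro k
    have h1 := (hpos k).ne'
    have h2 := (Φpos k).ne'
    rw [hs, εs]
    field_simp
    ring
  have hhist := hist_eq ε f h (by rw [h0, f0]) hrec
  have hsum : ∀ k, 1 - ∑ j ∈ Finset.range (k + 1), f j = Φ k := by
    intro k
    induction k with
    | zero => simp [f0, Φ0]
    | succ k ih =>
      rw [Finset.sum_range_succ, fs]
      linarith
  have εnn : ∀ k, 0 ≤ ε (k + 1) := by
    intro k
    rw [εs]
    have h1 := hpos k
    have h2 := Φpos k
    have h3 := fnn k
    positivity
  have εle : ∀ k < N, ε (k + 1) ≤ e0 := by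
    intro k hk
    have h1 := hpos k
    have h2 := Φpos k
    have hk1 : τ k ∈ Icc 0 T := ⟨τ0 k, τle k hk.le⟩
    have hk2 : τ (k + 1) ∈ Icc 0 T := ⟨τ0 _, τle _ hk⟩
    rw [εs, div_le_iff₀ (by positivity)]
    have hh : H x0 ≤ h k := (hmin hk1).trans (hge k)
    have hΦ : F T ≤ Φ k := hanti (mem_Ici.2 (τ0 k)) (mem_Ici.2 hT.le) hk1.2
    have hdist : dist (τ k) (τ (k + 1)) < d := by
      rw [τstep, Real.dist_eq]
      have : τ k - (τ k + T / N) = -(T / N) := by ring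
      rw [this, abs_neg, abs_of_pos (by positivity)]
      exact hNd
    have h5 := huc _ hk1 _ hk2 hdist
    rw [Real.dist_eq] at h5
    have h6 := (le_abs_self _).trans h5.le
    calc f (k + 1) ≤ e0 * (c * F T ^ (m + 1) * H x0) := h6
      _ ≤ e0 * (c * Φ k ^ (m + 1) * h k) := by gcongr
  have hterm : ∀ k, (1 - ε 0) * ε (k + 1) * h k * Φ k ^ (m + 1) * (m + 2) = f (k + 1) := by
    intro k
    have h1 := (hpos k).ne'
    have h2 := (Φpos k).ne'
    rw [εs, ε0, hcdef]
    have := hu.ne'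
    field_simp
  refine ⟨N, ε, f, ⟨by rw [f0, ε0], ?_⟩, ?_, ε0, ?_, ?_⟩
  · intro k hk
    rw [hhist, hsum, ← hterm k]
    have : m + 3 - 1 - 1 = m + 1 := by omega
    rw [this]
    have : m + 3 - 1 = m + 2 := by omega
    rw [this]
    push_cast
    ring
  · intro i hi
    cases i with
    | zero => rw [ε0]; exact ⟨hp0.le, hp1.le⟩
    | succ k => exact ⟨εnn k, (εle k hi).trans he01⟩
  · rw [hsum, ΦN]
  · set A : ℝ := ((m : ℝ) + 3) / (2 * (m + 2)) with hA
    have key : ∀ k ∈ Finset.range N,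
        (A * Φ k ^ 2 - (m + 3) * e0 * Φ k) - (A * Φ (k + 1) ^ 2 - (m + 3) * e0 * Φ (k + 1)) ≤
        (((m + 3 : ℕ) : ℝ) * ((1 - ε 0) * ε (k + 1) *
        (∑ j ∈ Finset.range (k + 1), f j * ∏ i ∈ Finset.Ioo j (k + 1), (1 - ε i)) *
        (1 - ∑ j ∈ Finset.range (k + 1), f j) ^ (m + 3 - 1))
          - ((m + 3 : ℕ) : ℝ) * (ε (k + 1) * f (k + 1))) := by
      intro k hk
      rw [Finset.mem_range] at hk
      rw [hhist, hsum]
      have h31 : m + 3 - 1 = m + 2 := by omega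
      rw [h31]
      have h1 : (1 - ε 0) * ε (k + 1) * h k * Φ k ^ (m + 2) = f (k + 1) * Φ k / (m + 2) := by
        rw [← hterm k]
        field_simp
        ring
      rw [h1]
      have h2 : ε (k + 1) * f (k + 1) ≤ e0 * f (k + 1) :=
        mul_le_mul_of_nonneg_right (εle k hk) (fnn k)
      have h3 : ((m : ℝ) + 3) * (ε (k + 1) * f (k + 1)) ≤ (m + 3) * (e0 * f (k + 1)) :=
        mul_le_mul_of_nonneg_left h2 (by positivity)
      have h4 : A * (Φ k ^ 2 - Φ (k + 1) ^ 2) ≤ (m + 3) * (f (k + 1) * Φ k / (m + 2)) := by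
        have : ((m : ℝ) + 3) * (f (k + 1) * Φ k / (m + 2)) = A * (2 * (f (k + 1) * Φ k)) := by
          rw [hA]
          field_simp
        rw [this]
        refine mul_le_mul_of_nonneg_left ?_ (by positivity)
        rw [fs]
        nlinarith [sq_nonneg (Φ k - Φ (k + 1))]
      push_cast
      rw [fs] at h3 h4 ⊢
      linarith
    refine le_trans ?_ (Finset.sum_le_sum key)
    rw [Finset.sum_range_sub' (fun k => A * Φ k ^ 2 - (m + 3) * e0 * Φ k), Φ0, ΦN]
    have h7 : (m + 3) * e0 * (1 - p₀ - F T) ≤ e * 1 := by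
      refine (mul_le_mul_of_nonneg_left (by linarith : 1 - p₀ - F T ≤ 1) (by positivity)).trans ?_
      linarith
    linarith

end Analysis

/-- Under the hypotheses that the solutions of the system of differential
equations associated with `(r, p₀)` are positive, `ŵ` converges to `Lw`, and
`(r−1)q̂/ŵ` converges to a limit `< 1`, every `r`-regular graph of sufficiently large girth
on `n` vertices has an induced forest on at least
`(p₀(1−p₀)^r + ∫₀^∞ b̂ + Lw − δ)·n` vertices. -/
theorem tau_ge_of_systemODE_with_white_limit
    (r : ℕ) (hr : 3 ≤ r) (p₀ : ℝ) (hp₀ : p₀ ∈ Ioo (0 : ℝ) 1)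
    (w b q s t : ℝ → ℝ)
    (hsol : SystemODE r p₀ w b q s t)
    (hpos : ∀ x : ℝ, 0 ≤ x → 0 < w x ∧ 0 < b x ∧ 0 < q x ∧ 0 < s x ∧ 0 < t x)
    (Lw Lq : ℝ)
    (hLw : Tendsto w atTop (nhds Lw))
    (hLq : Tendsto (fun x => ((r : ℝ) - 1) * q x / w x) atTop (nhds Lq))
    (hLq1 : Lq < 1)
    (δ : ℝ) (hδ : 0 < δ) :
    ∃ g : ℕ, 0 < g ∧
      ∀ (W : Type) [Fintype W] (G : SimpleGraph W),
        IsRegular G r → (g : ℕ∞) ≤ G.egirth →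
        (p₀ * (1 - p₀) ^ r + (∫ x in Ioi (0 : ℝ), b x) + Lw - δ) * (Fintype.card W : ℝ)
          ≤ (tau G : ℝ) := by
  obtain ⟨m, rfl⟩ : ∃ m, r = m + 3 := ⟨r - 3, by omega⟩
  obtain ⟨F, H, Fpos, Hpos, F0, H0, Fd, Hd, hw, hq, hb⟩ := reduce m p₀ hp₀ w b q s t hsol hpos
  obtain ⟨hp0, hp1⟩ := id hp₀
  have hu : 0 < 1 - p₀ := by linarith
  have e1 : ((m + 3 : ℕ) : ℝ) - 1 = m + 2 := by push_cast; ring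
  -- limit of `F`
  obtain ⟨Fi, hFi⟩ : ∃ Fi, Tendsto F atTop (nhds Fi) := by
    refine ⟨(Lw / (1 - p₀)) ^ (((m + 3 : ℕ) : ℝ)⁻¹), ?_⟩
    refine ((hLw.div_const (1 - p₀)).rpow_const (Or.inr (by positivity))).congr' ?_
    filter_upwards [eventually_ge_atTop (0 : ℝ)] with x hx
    rw [hw x hx, mul_div_cancel_left₀ _ hu.ne']
    exact Real.pow_rpow_inv_natCast (Fpos x hx).le (by omega)
  have hLw' : Lw = (1 - p₀) * Fi ^ (m + 3) := by
    refine tendsto_nhds_unique hLw (((hFi.pow (m + 3)).const_mul (1 - p₀)).congr' ?_)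
    filter_upwards [eventually_ge_atTop (0 : ℝ)] with x hx
    rw [hw x hx]
  set A : ℝ := ((m : ℝ) + 3) / (2 * (m + 2)) with hA
  have hintg : ∫ x in Ioi (0 : ℝ), b x = A * ((1 - p₀) ^ 2 - Fi ^ 2) := by
    have hder : ∀ x, 0 ≤ x → HasDerivWithinAt (fun x => -A * F x ^ 2) (b x) (Ici 0) x := by
      intro x hx
      refine (((Fd x hx).pow 2).const_mul (-A)).congr_deriv ?_
      rw [hb x hx, hA]
      push_cast
      field_simp
      ring
    rw [integral_Ioi_of_hasDerivAt_of_nonneg (g := fun x => -A * F x ^ 2) (l := -A * Fi ^ 2)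
      (hder 0 le_rfl).continuousWithinAt
      (fun x hx => (hder x (le_of_lt hx)).hasDerivAt (Ici_mem_nhds hx))
      (fun x hx => (hpos x (le_of_lt hx)).2.1.le) ((hFi.pow 2).const_mul (-A))]
    rw [F0]
    ring
  rw [hintg, hLw']
  have hlim : Tendsto (fun x => p₀ * (1 - p₀) ^ (m + 3) + A * ((1 - p₀) ^ 2 - F x ^ 2) +
      (1 - p₀) * F x ^ (m + 3)) atTop (nhds (p₀ * (1 - p₀) ^ (m + 3) +
      A * ((1 - p₀) ^ 2 - Fi ^ 2) + (1 - p₀) * Fi ^ (m + 3))) :=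
    ((((hFi.pow 2).const_sub _).const_mul A).const_add _).add
      ((hFi.pow (m + 3)).const_mul (1 - p₀))
  have hev := ((hlim.eventually (lt_mem_nhds (sub_lt_self _ (by positivity : 0 < δ / 3)))).and
    (hLq.eventually (gt_mem_nhds hLq1))).and (eventually_gt_atTop (0 : ℝ))
  obtain ⟨T, ⟨hT1, hT2⟩, hT⟩ := hev.exists
  have hFT := Fpos T hT.le
  have hlam : ((m : ℝ) + 2) * ((1 - p₀) * F T ^ (m + 1)) < 1 := by
    refine lt_of_eq_of_lt ?_ hT2
    rw [e1, hq T hT.le, hw T hT.le]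
    field_simp
    ring
  obtain ⟨L, hL⟩ := exists_pow_lt_of_lt_one (by positivity : 0 < δ / 3 / ((m : ℝ) + 3)) hlam
  rw [lt_div_iff₀ (by positivity)] at hL
  obtain ⟨N, ε, f, hf, hε01, hε0, hfT, hsum⟩ :=
    discretize hp₀ Fpos Hpos F0 H0 Fd Hd hT (by positivity : 0 < δ / 3)
  refine ⟨2 * (N + L) + 3, by omega, ?_⟩
  intro W _ G hG hgirth
  let ν : Fin (N + 1) → Measure Bool := fun i =>
    ENNReal.ofReal (ε i) • Measure.dirac true + ENNReal.ofReal (1 - ε i) • Measure.dirac false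
  have hle : ∀ i : Fin (N + 1), 0 ≤ ε i ∧ ε i ≤ 1 := fun i => hε01 i (by omega)
  have : ∀ i, IsProbabilityMeasure (ν i) := by
    intro i
    constructor
    simp only [ν, Measure.add_apply, Measure.smul_apply, measure_univ, smul_eq_mul, mul_one]
    rw [← ENNReal.ofReal_add (hle i).1 (by linarith [(hle i).2])]
    simp
  have hν : ∀ i : ℕ, i ≤ N → (ν (Fin.ofNat (N + 1) i)).real {true} = ε i := by
    intro i hi
    have hv : ((Fin.ofNat (N + 1) i : Fin (N + 1)) : ℕ) = i := by
      simp only [Fin.ofNat]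
      exact Nat.mod_eq_of_lt (by omega)
    simp only [ν, Measure.real, Measure.add_apply, Measure.smul_apply, smul_eq_mul, hv]
    simp [(hε01 i hi).1]
  have hmain := tau_ge_of_law G ν ε hν hgirth le_rfl hG hf
  refine le_trans (mul_le_mul_of_nonneg_right ?_ (Nat.cast_nonneg _)) hmain
  rw [hfT, hε0] at *
  have h31 : m + 3 - 1 - 1 = m + 1 := by omega
  have h32 : ((m + 3 - 1 : ℕ) : ℝ) = m + 2 := by
    have : m + 3 - 1 = m + 2 := by omega
    rw [this]; push_cast; ring
  rw [h31, h32]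
  have e0 : ((m + 3 : ℕ) : ℝ) * (((m : ℝ) + 2) * ((1 - p₀) * F T ^ (m + 1))) ^ L ≤ δ / 3 := by
    push_cast; linarith
  linarith

end InducedForest
end

section
/- Let r ≥ 3 be an integer and p₀ ∈ (0,1). Let ŵ, b̂, q̂, ŝ, t̂ : [0,∞) → ℝ be everywhere-positive differentiable functions solving the system of differential equations associated with (r,p₀), with ∫₀^∞ b̂(x) dx finite. Then for every δ > 0 there exists a positive integer g such that every r-regular graph G on n vertices with girth at least g satisfies τ(G) ≥ (p₀(1−p₀)^r + ∫₀^∞ b̂(x) dx − δ)·n. -/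
open MeasureTheory ProbabilityTheory Filter Set

namespace InducedForest

section Comb
variable {W : Type} (G : SimpleGraph W)

/-- `Sel G D i u v`: the vertex `u` is selected at time `i` when the neighbour `v` (if any) is
held inert. -/
def Sel (D : W → ℕ) : ℕ → W → Option W → Prop
  | 0, u, _ => D u = 0
  | i + 1, u, v => ∃ c, G.Adj u c ∧ some c ≠ v ∧ (∃ j, ∃ _ : j ≤ i, Sel D j c (some u) ∧
      D u = i + 1 - j) ∧ ∀ c', G.Adj u c' → some c' ≠ v → c' ≠ c → ∀ j, ∀ _ : j ≤ i,
        ¬ Sel D j c' (some u)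
  termination_by i => i
  decreasing_by all_goals omega

variable {G}

lemma sel_zero_s1 (D : W → ℕ) (u : W) (v : Option W) : Sel G D 0 u v ↔ D u = 0 := by
  rw [Sel]

lemma sel_succ_s1 (D : W → ℕ) (i : ℕ) (u : W) (v : Option W) :
    Sel G D (i + 1) u v ↔ ∃ c, G.Adj u c ∧ some c ≠ v ∧ (∃ j, j ≤ i ∧ Sel G D j c (some u) ∧
      D u = i + 1 - j) ∧ ∀ c', G.Adj u c' → some c' ≠ v → c' ≠ c → ∀ j, j ≤ i →
        ¬ Sel G D j c' (some u) := by
  rw [Sel]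
  simp only [exists_prop]

lemma sel_unique_s1 (D : W → ℕ) : ∀ (i j : ℕ) (u : W) (v : Option W),
    Sel G D i u v → Sel G D j u v → i = j := by
  have key : ∀ (i j : ℕ) (u : W) (v : Option W), i < j →
    Sel G D i u v → Sel G D j u v → False := by
    intro i
    induction i using Nat.strong_induction_on with
    | _ i ih =>
    intro j u v hij hi hj
    obtain ⟨j, rfl⟩ : ∃ k, j = k + 1 := ⟨j - 1, by omega⟩
    rw [sel_succ_s1] at hj
    obtain ⟨c, hc, hcv, ⟨a, ha, hsa, hDa⟩, hoth⟩ := hj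
    rcases i with _ | i
    · rw [sel_zero_s1] at hi
      omega
    · rw [sel_succ_s1] at hi
      obtain ⟨c', hc', hcv', ⟨a', ha', hsa', hDa'⟩, hoth'⟩ := hi
      by_cases hcc : c' = c
      · subst hcc
        rcases lt_trichotomy a a' with h | h | h
        · exact ih a (by omega) a' _ _ h hsa hsa'
        · omega
        · exact ih a' (by omega) a _ _ h hsa' hsa
      · exact hoth c' hc' hcv' hcc a' (by omega) hsa'
  intro i j u v hi hj
  rcases lt_trichotomy i j with h | h | h
  · exact (key _ _ _ _ h hi hj).elim
  · exact h
  · exact (key _ _ _ _ h hj hi).elim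

lemma sel_some_of_none_s1 {D : W → ℕ} {i : ℕ} {u v : W} (h : Sel G D i u none)
    (hn : ∀ j < i, ¬ Sel G D j v (some u)) : Sel G D i u (some v) := by
  rcases i with _ | i
  · rw [sel_zero_s1] at h ⊢; exact h
  · rw [sel_succ_s1] at h ⊢
    obtain ⟨c, hc, -, ⟨a, ha, hsa, hDa⟩, hoth⟩ := h
    refine ⟨c, hc, ?_, ⟨a, ha, hsa, hDa⟩, fun c' hc' _ hne => hoth c' hc' (by simp) hne⟩
    intro hcv
    obtain rfl := Option.some.inj hcv
    exact hn a (by omega) hsa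

lemma sel_none_of_some {D : W → ℕ} {i : ℕ} {u v : W} (h : Sel G D i u (some v))
    (hn : ∀ j < i, ¬ Sel G D j v (some u)) : Sel G D i u none := by
  rcases i with _ | i
  · rw [sel_zero_s1] at h ⊢; exact h
  · rw [sel_succ_s1] at h ⊢
    obtain ⟨c, hc, -, ⟨a, ha, hsa, hDa⟩, hoth⟩ := h
    refine ⟨c, hc, by simp, ⟨a, ha, hsa, hDa⟩, fun c' hc' _ hne j hj hs => ?_⟩
    by_cases hcv : c' = v
    · subst hcv
      exact hn j (by omega) hs
    · exact hoth c' hc' (by simpa using hcv) hne j hj hs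

/-- Selected at time `i` without conflict. -/
def Good (G : SimpleGraph W) (D : W → ℕ) (i : ℕ) (v : W) : Prop :=
  Sel G D i v none ∧ ∀ u, G.Adj v u → ¬ Sel G D i u (some v)

lemma good_ne {D : W → ℕ} {i : ℕ} {u v : W} (huv : G.Adj u v) (hu : Good G D i u)
    (hv : Good G D i v) : False := by
  have aux : ∀ {u v : W}, G.Adj u v → Good G D i u → Good G D i v →
      ∃ j < i, Sel G D j v (some u) := by
    intro u v huv hu hv
    by_contra hcon
    push Not at hcon
    exact hv.2 u huv.symm (sel_some_of_none_s1 hu.1 hcon)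
  have aux2 : ∀ {u v : W} {j j' : ℕ}, Good G D i u → Good G D i v → Sel G D j v (some u) →
      Sel G D j' u (some v) → j ≤ j' → j < i → False := by
    intro u v j j' hu hv hj hj' hjj hji
    have := sel_none_of_some hj (fun k hk hs => by
      have := sel_unique_s1 D _ _ _ _ hs hj'
      omega)
    have := sel_unique_s1 D _ _ _ _ this hv.1
    omega
  obtain ⟨j, hj, hsj⟩ := aux huv hu hv
  obtain ⟨j', hj', hsj'⟩ := aux huv.symm hv hu
  rcases le_total j j' with h | h
  · exact aux2 hu hv hsj hsj' h hj
  · exact aux2 hv hu hsj' hsj h hj'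

lemma good_parent {D : W → ℕ} {k : ℕ} {v : W} (hv : Good G D k v) :
    ∃ c, ∀ u i, G.Adj u v → i < k → Good G D i u → u = c := by
  rcases k with _ | k
  · exact ⟨v, fun u i _ h => absurd h (by omega)⟩
  have hk := hv.1
  rw [sel_succ_s1] at hk
  obtain ⟨c, hc, -, ⟨a, ha, hsa, hDa⟩, hoth⟩ := hk
  refine ⟨c, fun u i huv hik hu => ?_⟩
  by_contra hne
  have h1 : ∀ j < k + 1, ¬ Sel G D j u (some v) := fun j hj =>
    hoth u huv.symm (by simp) hne j (by omega)
  have h2 := sel_some_of_none_s1 hv.1 h1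
  refine h1 i hik (sel_some_of_none_s1 hu.1 fun j hj hs => ?_)
  have := sel_unique_s1 D _ _ _ _ hs h2
  omega

/-- The random forest. -/
def forest (G : SimpleGraph W) (D : W → ℕ) (N : ℕ) : Set W := {v | ∃ i ≤ N, Good G D i v}

lemma forest_acyclic (D : W → ℕ) (N : ℕ) : (G.induce (forest G D N)).IsAcyclic := by
  classical
  have hch : ∀ v : forest G D N, ∃ i, Good G D i v.1 := fun v => by
    obtain ⟨i, -, h⟩ := v.2
    exact ⟨i, h⟩
  choose S hS using hch
  intro v p hp
  obtain ⟨x, hx, hmax⟩ := p.support.toFinset.exists_max_image S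
    ⟨v, by simp⟩
  have hx' : x ∈ p.support := by simpa using hx
  have hq := hp.rotate hx'
  set q := p.rotate x hx' with hqdef
  have hmem : ∀ y ∈ q.support, S y ≤ S x := by
    intro y hy
    refine hmax y ?_
    have : y ∈ p.support := by
      simpa [hqdef] using hy
    simpa using this
  obtain ⟨c, hc⟩ := good_parent (hS x)
  have hnb : ∀ y ∈ q.support, (G.induce (forest G D N)).Adj x y → y.1 = c := by
    intro y hy hadj
    have hadj' : G.Adj x.1 y.1 := by simpa using hadj
    refine hc y.1 (S y) hadj'.symm ?_ (hS y)
    refine lt_of_le_of_ne (hmem y hy) fun heq => ?_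
    have h := hS y
    rw [heq] at h
    exact good_ne hadj' (hS x) h
  have h1 := hnb q.snd (by simp) (q.adj_snd hq.not_nil)
  have h2 := hnb q.penultimate (by simp) (q.adj_penultimate hq.not_nil).symm
  exact hq.snd_ne_penultimate (Subtype.ext (h1.trans h2.symm))

/-! ### Locality -/

lemma path_unique_of_girth {g : ℕ} (hg : (g : ℕ∞) ≤ G.egirth) {u x : W} (p q : G.Walk u x)
    (hp : p.IsPath) (hq : q.IsPath) (hlen : p.length + q.length < g) : p = q := by
  classical
  let H : SimpleGraph W := SimpleGraph.fromEdgeSet {e | e ∈ p.edges ∨ e ∈ q.edges}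
  have hH : ∀ e, e ∈ H.edgeSet → e ∈ p.edges ++ q.edges := by
    intro e he
    simp only [H, SimpleGraph.edgeSet_fromEdgeSet] at he
    simpa using he.1
  have hHG : H ≤ G := by
    intro a b hab
    have : s(a, b) ∈ p.edges ++ q.edges := hH _ hab
    rcases List.mem_append.1 this with h | h
    · exact p.edges_subset_edgeSet h
    · exact q.edges_subset_edgeSet h
  have hpe : ∀ e ∈ p.edges, e ∈ H.edgeSet := by
    intro e he
    simp only [H, SimpleGraph.edgeSet_fromEdgeSet]
    exact ⟨Or.inl he, G.not_isDiag_of_mem_edgeSet (p.edges_subset_edgeSet he)⟩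
  have hqe : ∀ e ∈ q.edges, e ∈ H.edgeSet := by
    intro e he
    simp only [H, SimpleGraph.edgeSet_fromEdgeSet]
    exact ⟨Or.inr he, G.not_isDiag_of_mem_edgeSet (q.edges_subset_edgeSet he)⟩
  have hac : H.IsAcyclic := by
    intro a c hc
    have h1 : c.length ≤ p.length + q.length := by
      have hnd := hc.edges_nodup
      have hsub : c.edges ⊆ p.edges ++ q.edges := fun e he => hH e (c.edges_subset_edgeSet he)
      have := (hnd.subperm hsub).length_le
      simpa using this
    have h2 : (c.mapLe hHG).IsCycle := hc.mapLe hHG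
    have h3 := SimpleGraph.le_egirth.1 hg _ _ h2
    have h4 : (c.mapLe hHG).length = c.length := by simp
    rw [h4] at h3
    have : g ≤ c.length := by exact_mod_cast h3
    omega
  have h5 := (SimpleGraph.isAcyclic_iff_path_unique.1 hac)
    ⟨p.transfer H hpe, hp.transfer hpe⟩ ⟨q.transfer H hqe, hq.transfer hqe⟩
  have h6 : p.transfer H hpe = q.transfer H hqe := by simpa using h5
  have h7 := congrArg (fun w => w.support) h6
  simp only [SimpleGraph.Walk.support_transfer] at h7
  exact SimpleGraph.Walk.ext_support h7

/-- The set of vertices whose labels may influence `Sel G D i u v` for `i ≤ k`. -/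
def Reach (G : SimpleGraph W) (k : ℕ) (u : W) (v : Option W) : Set W :=
  {x | ∃ p : G.Walk u x, p.IsPath ∧ p.length ≤ k ∧ ∀ y, v = some y → y ∉ p.support}

lemma reach_self (k : ℕ) {u : W} {v : Option W} (hv : ∀ y, v = some y → G.Adj u y) :
    u ∈ Reach G k u v := by
  refine ⟨SimpleGraph.Walk.nil, by simp, by simp, fun y hy => ?_⟩
  simpa using (hv y hy).ne'

lemma reach_not_mem (k : ℕ) {u c : W} : u ∉ Reach G k c (some u) := by
  rintro ⟨p, -, -, h⟩
  exact h u rfl p.end_mem_support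

lemma reach_succ {g : ℕ} (hg : (g : ℕ∞) ≤ G.egirth) {k i : ℕ} {u c : W} {v : Option W}
    (hki : i + 1 ≤ k) (hkg : k + 1 < g) (hc : G.Adj u c) (hcv : some c ≠ v)
    (hv : ∀ y, v = some y → G.Adj u y) : Reach G i c (some u) ⊆ Reach G k u v := by
  classical
  rintro x ⟨p, hp, hlen, hav⟩
  have hu := hav u rfl
  refine ⟨p.cons hc, hp.cons hu, by simp; omega, ?_⟩
  rintro y hy hmem
  have hyu := hv y hy
  rw [SimpleGraph.Walk.support_cons, List.mem_cons] at hmem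
  rcases hmem with rfl | hmem
  · exact hyu.ne rfl
  · have hpath : ((p.takeUntil y hmem).cons hc).IsPath :=
      (hp.takeUntil hmem).cons fun h => hu (p.support_takeUntil_subset_support hmem h)
    have hlen2 := p.length_takeUntil_le_length hmem
    have heq := path_unique_of_girth hg _ (SimpleGraph.Walk.cons hyu SimpleGraph.Walk.nil)
      hpath (by simpa using hyu.ne) (by simp; omega)
    have h8 := congrArg (fun w => w.snd) heq
    simp at h8
    exact hcv (by rw [hy, h8])

lemma reach_disjoint {g : ℕ} (hg : (g : ℕ∞) ≤ G.egirth) {k : ℕ} {u c c' : W}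
    (hkg : 2 * k + 2 < g) (hc : G.Adj u c) (hc' : G.Adj u c') (hne : c ≠ c') :
    Disjoint (Reach G k c (some u)) (Reach G k c' (some u)) := by
  rw [Set.disjoint_left]
  rintro x ⟨p, hp, hlen, hav⟩ ⟨q, hq, hlen', hav'⟩
  have heq := path_unique_of_girth hg (p.cons hc) (q.cons hc') (hp.cons (hav u rfl))
    (hq.cons (hav' u rfl)) (by simp; omega)
  have h8 := congrArg (fun w => w.snd) heq
  simp at h8
  exact hne h8

lemma sel_local {g : ℕ} (hg : (g : ℕ∞) ≤ G.egirth) {D D' : W → ℕ} :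
    ∀ (i k : ℕ) (u : W) (v : Option W), i ≤ k → k + 1 < g →
    (∀ y, v = some y → G.Adj u y) →
    (∀ x ∈ Reach G k u v, D x = D' x) → (Sel G D i u v ↔ Sel G D' i u v) := by
  intro i
  induction i using Nat.strong_induction_on with
  | _ i ih =>
  intro k u v hik hkg hv hD
  have hu := hD u (reach_self k hv)
  rcases i with _ | i
  · rw [sel_zero_s1, sel_zero_s1, hu]
  · rw [sel_succ_s1, sel_succ_s1]
    have hch : ∀ c, G.Adj u c → some c ≠ v → ∀ j ≤ i,
        (Sel G D j c (some u) ↔ Sel G D' j c (some u)) := by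
      intro c hc hcv j hj
      refine ih j (by omega) i c (some u) hj (by omega) ?_ ?_
      · rintro y hy
        obtain rfl := Option.some.inj hy
        exact hc.symm
      · intro x hx
        exact hD x (reach_succ hg hik hkg hc hcv hv hx)
    refine exists_congr fun c => and_congr_right fun hc => and_congr_right fun hcv =>
      and_congr ?_ ?_
    · refine exists_congr fun j => and_congr_right fun hj => ?_
      rw [hch c hc hcv j hj, hu]
    · refine forall_congr' fun c' => forall_congr' fun hc' => forall_congr' fun hcv' =>
        forall_congr' fun _ => forall_congr' fun j => forall_congr' fun hj => ?_
      rw [hch c' hc' hcv' j hj]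
end Comb

section Prob

variable {W : Type} [Fintype W] (ν : Measure ℕ) [IsProbabilityMeasure ν]

lemma indep_two_s1 {S T : Set W} (hST : Disjoint S T) {E E' : Set (W → ℕ)}
    (hE : ∀ D D' : W → ℕ, (∀ x ∈ S, D x = D' x) → D ∈ E → D' ∈ E)
    (hE' : ∀ D D' : W → ℕ, (∀ x ∈ T, D x = D' x) → D ∈ E' → D' ∈ E') :
    (Measure.pi fun _ : W => ν).real (E ∩ E') =
      (Measure.pi fun _ : W => ν).real E * (Measure.pi fun _ : W => ν).real E' := by
  classical
  have h := (iIndepFun_pi (μ := fun _ : W => ν) (X := fun _ (x : ℕ) => x)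
    (fun i => measurable_id.aemeasurable)).indepFun_finset S.toFinset T.toFinset
    (by simpa using hST) (fun i => measurable_pi_apply i)
  have h1 : E = (fun (a : W → ℕ) (i : S.toFinset) => a i) ⁻¹'
      ((fun (a : W → ℕ) (i : S.toFinset) => a i) '' E) := by
    refine Set.Subset.antisymm (Set.subset_preimage_image _ _) ?_
    rintro D ⟨D', hD', heq⟩
    refine hE D' D (fun x hx => ?_) hD'
    exact congrFun heq ⟨x, by simpa using hx⟩
  have h2 : E' = (fun (a : W → ℕ) (i : T.toFinset) => a i) ⁻¹'
      ((fun (a : W → ℕ) (i : T.toFinset) => a i) '' E') := by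
    refine Set.Subset.antisymm (Set.subset_preimage_image _ _) ?_
    rintro D ⟨D', hD', heq⟩
    refine hE' D' D (fun x hx => ?_) hD'
    exact congrFun heq ⟨x, by simpa using hx⟩
  have h3 := h.measure_inter_preimage_eq_mul
    ((fun (a : W → ℕ) (i : S.toFinset) => a i) '' E)
    ((fun (a : W → ℕ) (i : T.toFinset) => a i) '' E')
    (MeasurableSet.of_discrete) (MeasurableSet.of_discrete)
  rw [← h1, ← h2] at h3
  simp only [measureReal_def, h3, ENNReal.toReal_mul]

lemma indep_prod {J : Type} [DecidableEq J] (A : Finset J) (R : J → Set W)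
    (E : J → Set (W → ℕ))
    (hE : ∀ j ∈ A, ∀ D D' : W → ℕ, (∀ x ∈ R j, D x = D' x) → D ∈ E j → D' ∈ E j)
    (hR : ∀ j ∈ A, ∀ k ∈ A, j ≠ k → Disjoint (R j) (R k)) :
    (Measure.pi fun _ : W => ν).real (⋂ j ∈ A, E j) =
      ∏ j ∈ A, (Measure.pi fun _ : W => ν).real (E j) := by
  induction A using Finset.induction_on with
  | empty => simp
  | insert a A ha ih =>
    rw [Finset.prod_insert ha, Finset.set_biInter_insert]
    rw [← ih (fun j hj => hE j (Finset.mem_insert_of_mem hj))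
      (fun j hj k hk => hR j (Finset.mem_insert_of_mem hj) k (Finset.mem_insert_of_mem hk))]
    refine indep_two_s1 ν (S := R a) (T := ⋃ j ∈ A, R j) ?_ (hE a (Finset.mem_insert_self _ _)) ?_
    · simp only [Set.disjoint_iUnion_right]
      intro j hj
      exact hR a (Finset.mem_insert_self _ _) j (Finset.mem_insert_of_mem hj)
        (by rintro rfl; exact ha hj)
    · intro D D' hDD hD
      simp only [Set.mem_iInter] at hD ⊢
      intro j hj
      exact hE j (Finset.mem_insert_of_mem hj) D D'
        (fun x hx => hDD x (Set.mem_biUnion (show j ∈ (A : Set J) from hj) hx)) (hD j hj)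

variable {ν} {G : SimpleGraph W}

lemma prob_label (u : W) (d : ℕ) :
    (Measure.pi fun _ : W => ν).real {D | D u = d} = ν.real {d} := by
  have := (measurePreserving_eval (fun _ : W => ν) u).measureReal_preimage
    (s := {d}) (MeasurableSet.of_discrete).nullMeasurableSet
  exact this

lemma prob_none {a : ℕ → ℝ} {k : ℕ} {u : W} {v : Option W}
    (h : ∀ j ≤ k, (Measure.pi fun _ : W => ν).real {D | Sel G D j u v} = a j) :
    (Measure.pi fun _ : W => ν).real {D | ∀ j, j ≤ k → ¬ Sel G D j u v} =
      1 - ∑ j ∈ Finset.range (k + 1), a j := by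
  have h1 : {D : W → ℕ | ∀ j, j ≤ k → ¬ Sel G D j u v} =
      (⋃ j ∈ Finset.range (k + 1), {D | Sel G D j u v})ᶜ := by
    ext D
    simp
  rw [h1, probReal_compl_eq_one_sub (MeasurableSet.of_discrete),
    measureReal_biUnion_finset _ (fun _ _ => MeasurableSet.of_discrete)]
  · congr 1
    refine Finset.sum_congr rfl fun j hj => h j ?_
    simp at hj; omega
  · intro i _ j _ hij
    rw [Function.onFun, Set.disjoint_left]
    intro D hi hj
    exact hij (sel_unique_s1 D _ _ _ _ hi hj)

/-- A generalization of the event `Sel G D (i + 1) u v`, which is the case `k = i`. -/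
def Ev (G : SimpleGraph W) (i k : ℕ) (u : W) (v : Option W) : Set (W → ℕ) :=
  {D | ∃ c, G.Adj u c ∧ some c ≠ v ∧ (∃ j, j ≤ i ∧ Sel G D j c (some u) ∧
      D u = i + 1 - j) ∧ ∀ c', G.Adj u c' → some c' ≠ v → c' ≠ c → ∀ j, j ≤ k →
        ¬ Sel G D j c' (some u)}

open Classical in
lemma prob_Ev {g : ℕ} (hg : (g : ℕ∞) ≤ G.egirth) {a : ℕ → ℝ} {i k : ℕ} (hik : i ≤ k)
    (hk : 2 * k + 2 < g) {u : W} {v : Option W}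
    (h : ∀ j ≤ k, ∀ c, G.Adj u c →
      (Measure.pi fun _ : W => ν).real {D | Sel G D j c (some u)} = a j) :
    (Measure.pi fun _ : W => ν).real (Ev G i k u v) =
      (Finset.univ.filter fun c => G.Adj u c ∧ some c ≠ v).card *
      ((∑ j ∈ Finset.range (i + 1), a j * ν.real {i + 1 - j}) *
      (1 - ∑ j ∈ Finset.range (k + 1), a j) ^
        ((Finset.univ.filter fun c => G.Adj u c ∧ some c ≠ v).card - 1)) := by
  set ch := Finset.univ.filter fun c => G.Adj u c ∧ some c ≠ v with hch
  have hmem : ∀ c, c ∈ ch ↔ G.Adj u c ∧ some c ≠ v := by simp [hch]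
  have huch : u ∉ ch := by simp [hch]
  let Y : W × ℕ → W → Set (W → ℕ) := fun x y =>
    if y = u then {D | D u = i + 1 - x.2} else
    if y = x.1 then {D | Sel G D x.2 y (some u)} else
      {D | ∀ j, j ≤ k → ¬ Sel G D j y (some u)}
  let R : W → Set W := fun y => if y = u then {u} else Reach G k y (some u)
  have hEv : Ev G i k u v = ⋃ x ∈ ch ×ˢ Finset.range (i + 1), ⋂ y ∈ insert u ch, Y x y := by
    ext D
    simp only [Ev, Set.mem_ofPred_eq, Set.mem_iUnion, Set.mem_iInter, Finset.mem_product,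
      Finset.mem_range, exists_prop, Prod.exists, Y]
    constructor
    · rintro ⟨c, hc, hcv, ⟨j, hj, hs, hD⟩, hoth⟩
      refine ⟨c, j, ⟨(hmem c).2 ⟨hc, hcv⟩, by omega⟩, fun y hy => ?_⟩
      split_ifs with h1 h2
      · exact hD
      · rw [h2]; exact hs
      · have := (hmem y).1 ((Finset.mem_insert.1 hy).resolve_left h1)
        exact hoth y this.1 this.2 h2
    · rintro ⟨c, j, ⟨hc, hj⟩, hall⟩
      have hc' := (hmem c).1 hc
      refine ⟨c, hc'.1, hc'.2, ⟨j, by omega, ?_, ?_⟩, fun c' h1 h2 hne => ?_⟩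
      · have := hall c (Finset.mem_insert_of_mem hc)
        rw [if_neg hc'.1.ne', if_pos rfl] at this
        exact this
      · have := hall u (Finset.mem_insert_self _ _)
        rw [if_pos rfl] at this
        exact this
      · have := hall c' (Finset.mem_insert_of_mem ((hmem c').2 ⟨h1, h2⟩))
        rw [if_neg h1.ne', if_neg hne] at this
        exact this
  have hprod : ∀ x ∈ ch ×ˢ Finset.range (i + 1),
      (Measure.pi fun _ : W => ν).real (⋂ y ∈ insert u ch, Y x y) =
        a x.2 * ν.real {i + 1 - x.2} *
          (1 - ∑ j ∈ Finset.range (k + 1), a j) ^ (ch.card - 1) := by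
    rintro ⟨c, j⟩ hx
    simp only [Finset.mem_product, Finset.mem_range] at hx
    obtain ⟨hc, hj⟩ := hx
    have hc' := (hmem c).1 hc
    rw [indep_prod ν _ R]
    · rw [Finset.prod_insert huch, ← Finset.mul_prod_erase _ _ hc]
      have e1 : (Measure.pi fun _ : W => ν).real (Y (c, j) u) = ν.real {i + 1 - j} := by
        simp only [Y, if_pos]
        exact prob_label u _
      have e2 : (Measure.pi fun _ : W => ν).real (Y (c, j) c) = a j := by
        simp only [Y, if_neg hc'.1.ne', if_pos]
        exact h j (by omega) c hc'.1
      have e3 : ∀ y ∈ ch.erase c, (Measure.pi fun _ : W => ν).real (Y (c, j) y) =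
          (1 - ∑ j ∈ Finset.range (k + 1), a j) := by
        intro y hy
        obtain ⟨hyc, hy⟩ := Finset.mem_erase.1 hy
        have hy' := (hmem y).1 hy
        simp only [Y, if_neg hy'.1.ne', if_neg hyc]
        exact prob_none fun j hj => h j hj y hy'.1
      rw [e1, e2, Finset.prod_congr rfl e3, Finset.prod_const, Finset.card_erase_of_mem hc]
      ring
    · intro y hy D D' hDD
      by_cases hyu : y = u
      · subst hyu
        simp only [Y, R, if_pos] at hDD ⊢
        intro hD
        have := hDD y rfl
        simp only [Set.mem_ofPred_eq] at hD ⊢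
        omega
      · have hy' := (hmem y).1 ((Finset.mem_insert.1 hy).resolve_left hyu)
        have hloc : ∀ j ≤ k, (Sel G D j y (some u) ↔ Sel G D' j y (some u)) := by
          intro j hj
          refine sel_local hg j k y (some u) hj (by omega) ?_ ?_
          · rintro z hz
            obtain rfl := Option.some.inj hz
            exact hy'.1.symm
          · simpa only [R, if_neg hyu] using hDD
        by_cases hyc : y = c
        · simp only [Y, if_neg hyu, if_pos hyc]
          exact (hloc j (by omega)).1
        · simp only [Y, if_neg hyu, if_neg hyc]
          exact fun hD j hj hs => hD j hj ((hloc j hj).2 hs)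
    · intro y hy z hz hyz
      simp only [R]
      rcases Finset.mem_insert.1 hy with rfl | hy
      · rw [if_pos rfl, if_neg hyz.symm]
        simpa using reach_not_mem k
      · have hy' := (hmem y).1 hy
        rw [if_neg hy'.1.ne']
        rcases Finset.mem_insert.1 hz with rfl | hz
        · rw [if_pos rfl]
          simpa using reach_not_mem k
        · have hz' := (hmem z).1 hz
          rw [if_neg hz'.1.ne']
          exact reach_disjoint hg hk hy'.1 hz'.1 hyz
  rw [hEv, measureReal_biUnion_finset _ (fun _ _ => MeasurableSet.of_discrete),
    Finset.sum_congr rfl hprod, Finset.sum_product]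
  · simp only [Finset.sum_const, nsmul_eq_mul, Finset.sum_mul]
  · rintro ⟨c, j⟩ hx ⟨c', j'⟩ hx' hne
    simp only [Finset.coe_product, Set.mem_prod, Finset.mem_coe, Finset.mem_range] at hx hx'
    rw [Function.onFun, Set.disjoint_left]
    intro D hD hD'
    simp only [Set.mem_iInter] at hD hD'
    have hc := (hmem c).1 hx.1
    have hc' := (hmem c').1 hx'.1
    have h1 : Sel G D j c (some u) := by
      have := hD c (Finset.mem_insert_of_mem hx.1)
      simp only [Y, if_neg hc.1.ne', if_pos] at this
      exact this
    have h2 : D ∈ Y (c', j') c := hD' c (Finset.mem_insert_of_mem hx.1)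
    simp only [Y, if_neg hc.1.ne'] at h2
    split_ifs at h2 with hcc
    · refine hne (Prod.ext hcc ?_)
      exact sel_unique_s1 D _ _ _ _ h1 h2
    · exact h2 j (by omega) h1

end Prob

section Law

/-- The Euler scheme. -/
noncomputable def eul (r : ℕ) (p ε : ℝ) : ℕ → ℝ × ℝ
  | 0 => (1 - p, p)
  | i + 1 =>
    ((eul r p ε i).1 - ε * ((1 - p) * (r - 1) * (eul r p ε i).1 ^ (r - 2) * (eul r p ε i).2),
      (eul r p ε i).2 + ε * (-(eul r p ε i).2 +
        (1 - p) * (r - 1) * (eul r p ε i).1 ^ (r - 2) * (eul r p ε i).2))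

/-- The law of the selection time. -/
noncomputable def law (r : ℕ) (p ε : ℝ) : ℕ → ℝ
  | 0 => p
  | i + 1 => ε * ((1 - p) * (r - 1) * (eul r p ε i).1 ^ (r - 2) * (eul r p ε i).2)

lemma sum_law (r : ℕ) (p ε : ℝ) (k : ℕ) :
    1 - ∑ j ∈ Finset.range (k + 1), law r p ε j = (eul r p ε k).1 := by
  induction k with
  | zero => simp [law, eul]
  | succ k ih =>
    rw [Finset.sum_range_succ, eul, ← ih, law]
    simp only [← ih]
    ring

lemma conv_law (r : ℕ) (p ε : ℝ) (i : ℕ) :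
    ∑ j ∈ Finset.range (i + 1), law r p ε j * (1 - ε) ^ (i - j) = (eul r p ε i).2 := by
  induction i with
  | zero => simp [law, eul]
  | succ i ih =>
    rw [Finset.sum_range_succ]
    have : ∀ j ∈ Finset.range (i + 1), law r p ε j * (1 - ε) ^ (i + 1 - j) =
        (1 - ε) * (law r p ε j * (1 - ε) ^ (i - j)) := by
      intro j hj
      have hj' : j ≤ i := by simp at hj; omega
      rw [Nat.sub_add_comm hj', pow_succ]
      ring
    rw [Finset.sum_congr rfl this, ← Finset.mul_sum, ih]
    simp only [law, eul, Nat.sub_self, pow_zero]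
    ring

variable {ν : Measure ℕ} {r : ℕ} {p ε : ℝ}

lemma conv_law' (hν : ∀ d, ν.real {d + 1} = (1 - p) * ε * (1 - ε) ^ d) (i : ℕ) :
    ∑ j ∈ Finset.range (i + 1), law r p ε j * ν.real {i + 1 - j} =
      (1 - p) * ε * (eul r p ε i).2 := by
  rw [← conv_law, Finset.mul_sum]
  refine Finset.sum_congr rfl fun j hj => ?_
  have hj' : j ≤ i := by simp at hj; omega
  rw [Nat.sub_add_comm hj', hν]
  ring

variable {W : Type} [Fintype W] [IsProbabilityMeasure ν] {G : SimpleGraph W}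

open Classical in
lemma card_ch_none (hG : IsRegular G r) (u : W) :
    (Finset.univ.filter fun c => G.Adj u c ∧ some c ≠ (none : Option W)).card = r := by
  have h := hG u
  rw [Set.ncard_eq_toFinset_card'] at h
  rw [← h]
  congr 1
  ext c
  simp

open Classical in
lemma card_ch_some (hG : IsRegular G r) {u v : W} (huv : G.Adj u v) :
    (Finset.univ.filter fun c => G.Adj u c ∧ some c ≠ some v).card = r - 1 := by
  have h := card_ch_none hG u
  rw [← h, ← Finset.card_erase_of_mem (a := v) (by simp [huv])]
  congr 1
  ext c
  simp [and_comm]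

lemma prob_sel (hr : 3 ≤ r) (hν0 : ν.real {0} = p)
    (hν : ∀ d, ν.real {d + 1} = (1 - p) * ε * (1 - ε) ^ d) (hG : IsRegular G r)
    {g : ℕ} (hg : (g : ℕ∞) ≤ G.egirth) : ∀ (i : ℕ), 2 * i + 2 < g → ∀ u v, G.Adj u v →
    (Measure.pi fun _ : W => ν).real {D | Sel G D i u (some v)} = law r p ε i := by
  intro i
  induction i using Nat.strong_induction_on with
  | _ i ih =>
  intro hi u v huv
  rcases i with _ | i
  · simp only [sel_zero_s1, law]
    rw [prob_label, hν0]
  · have h1 : {D : W → ℕ | Sel G D (i + 1) u (some v)} = Ev G i i u (some v) := by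
      ext D
      exact sel_succ_s1 D i u (some v)
    rw [h1, prob_Ev hg le_rfl (by omega)
      (fun j hj c hc => ih j (by omega) (by omega) c u hc.symm), card_ch_some hG huv,
      conv_law' hν, sum_law, law, Nat.sub_sub]
    rw [Nat.cast_sub (by omega)]
    push_cast
    ring

lemma prob_forest (hr : 3 ≤ r) (hν0 : ν.real {0} = p)
    (hν : ∀ d, ν.real {d + 1} = (1 - p) * ε * (1 - ε) ^ d) (hG : IsRegular G r)
    {g N : ℕ} (hg : (g : ℕ∞) ≤ G.egirth) (hN : 2 * N + 2 < g) (v : W) :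
    p * (1 - p) ^ r + ∑ i ∈ Finset.range N,
        ε * (r * (1 - p) * (eul r p ε i).2 * (eul r p ε (i + 1)).1 ^ (r - 1)) ≤
      (Measure.pi fun _ : W => ν).real {D | v ∈ forest G D N} := by
  classical
  let ch := Finset.univ.filter fun c => G.Adj v c ∧ some c ≠ (none : Option W)
  have hcard : ch.card = r := card_ch_none hG v
  have hmem : ∀ c, c ∈ ch ↔ G.Adj v c := by simp [ch]
  have hvch : v ∉ ch := by simp [ch]
  let Y : W → Set (W → ℕ) := fun y => if y = v then {D | D y = 0} else {D | D y = 0}ᶜ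
  let E : ℕ → Set (W → ℕ) := fun i => match i with
    | 0 => ⋂ y ∈ insert v ch, Y y
    | i + 1 => Ev G i (i + 1) v none
  have hE0 : (Measure.pi fun _ : W => ν).real (E 0) = p * (1 - p) ^ r := by
    simp only [E]
    rw [indep_prod ν (insert v ch) (fun y => {y})]
    · rw [Finset.prod_insert hvch]
      have e1 : (Measure.pi fun _ : W => ν).real (Y v) = p := by
        simp only [Y, if_pos]
        rw [prob_label, hν0]
      have e2 : ∀ y ∈ ch, (Measure.pi fun _ : W => ν).real (Y y) = 1 - p := by
        intro y hy
        have := ((hmem y).1 hy).ne'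
        simp only [Y, if_neg this]
        rw [probReal_compl_eq_one_sub (MeasurableSet.of_discrete), prob_label, hν0]
      rw [e1, Finset.prod_congr rfl e2, Finset.prod_const, hcard]
    · intro j _ D D' h
      have := h j rfl
      simp only [Y]
      split_ifs <;> simp [this]
    · intro j _ k _ hjk
      simpa using hjk
  have hEs : ∀ i ∈ Finset.range N, (Measure.pi fun _ : W => ν).real (E (i + 1)) =
      ε * (r * (1 - p) * (eul r p ε i).2 * (eul r p ε (i + 1)).1 ^ (r - 1)) := by
    intro i hi
    have hi' : i < N := by simpa using hi
    simp only [E]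
    rw [prob_Ev hg (Nat.le_succ i) (by omega)
      (fun j hj c hc => prob_sel hr hν0 hν hG hg j (by omega) c v hc.symm), card_ch_none hG v,
      conv_law' hν, sum_law]
    ring
  have hgood : ∀ i, E i ⊆ {D | Good G D i v} := by
    intro i D hD
    rcases i with _ | i
    · simp only [E, Set.mem_iInter] at hD
      refine ⟨?_, fun u hu => ?_⟩
      · rw [sel_zero_s1]
        have := hD v (Finset.mem_insert_self _ _)
        simpa [Y] using this
      · rw [sel_zero_s1]
        have := hD u (Finset.mem_insert_of_mem ((hmem u).2 hu))
        simpa [Y, hu.ne'] using this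
    · obtain ⟨c, hc, hcv, ⟨j, hj, hs, hDv⟩, hoth⟩ := hD
      refine ⟨?_, fun u hu hsu => ?_⟩
      · rw [sel_succ_s1]
        exact ⟨c, hc, hcv, ⟨j, hj, hs, hDv⟩, fun c' h1 h2 h3 j' hj' =>
          hoth c' h1 h2 h3 j' (by omega)⟩
      · by_cases huc : u = c
        · subst huc
          have := sel_unique_s1 D _ _ _ _ hs hsu
          omega
        · exact hoth u hu (by simp) huc (i + 1) le_rfl hsu
  calc _ = (Measure.pi fun _ : W => ν).real (⋃ i ∈ Finset.range (N + 1), E i) := by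
        rw [measureReal_biUnion_finset _ (fun _ _ => MeasurableSet.of_discrete),
          Finset.sum_range_succ', Finset.sum_congr rfl hEs, hE0, add_comm]
        intro i _ j _ hij
        rw [Function.onFun, Set.disjoint_left]
        intro D hi hj
        exact hij (sel_unique_s1 D _ _ _ _ (hgood i hi).1 (hgood j hj).1)
    _ ≤ _ := by
        refine measureReal_mono ?_
        intro D hD
        simp only [Set.mem_iUnion, Finset.mem_range, exists_prop] at hD
        obtain ⟨i, hi, hD⟩ := hD
        exact ⟨i, by omega, hgood i hD⟩

lemma tau_ge_ncard (S : Set W) (hS : (G.induce S).IsAcyclic) : S.ncard ≤ tau G := by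
  refine le_csSup ⟨Fintype.card W, ?_⟩ ⟨S, hS, rfl⟩
  rintro n ⟨S, -, rfl⟩
  exact (Set.ncard_le_card S).trans (by simp)

lemma tau_ge_of_label (hr : 3 ≤ r) (hν0 : ν.real {0} = p)
    (hν : ∀ d, ν.real {d + 1} = (1 - p) * ε * (1 - ε) ^ d) (hG : IsRegular G r)
    {g N : ℕ} (hg : (g : ℕ∞) ≤ G.egirth) (hN : 2 * N + 2 < g) :
    (p * (1 - p) ^ r + ∑ i ∈ Finset.range N,
        ε * (r * (1 - p) * (eul r p ε i).2 * (eul r p ε (i + 1)).1 ^ (r - 1))) *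
      (Fintype.card W : ℝ) ≤ (tau G : ℝ) := by
  classical
  set μ := Measure.pi fun _ : W => ν
  have hf : ∀ D, ((forest G D N).ncard : ℝ) =
      ∑ v : W, Set.indicator {D | v ∈ forest G D N} (fun _ => (1 : ℝ)) D := by
    intro D
    rw [Set.ncard_eq_toFinset_card']
    simp [Set.indicator_apply]
  have hint : ∀ v : W, Integrable
      (Set.indicator {D | v ∈ forest G D N} (fun _ => (1 : ℝ))) μ := fun v =>
    (integrable_const _).indicator (MeasurableSet.of_discrete)
  have hsum : Integrable (fun D => ((forest G D N).ncard : ℝ)) μ := by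
    simp_rw [hf]
    exact integrable_finsetSum _ fun v _ => hint v
  obtain ⟨D, hD⟩ := exists_integral_le hsum
  have h1 : ∫ D, ((forest G D N).ncard : ℝ) ∂μ = ∑ v : W, μ.real {D | v ∈ forest G D N} := by
    simp_rw [hf]
    rw [integral_finsetSum _ fun v _ => hint v]
    refine Finset.sum_congr rfl fun v _ => ?_
    rw [integral_indicator (MeasurableSet.of_discrete)]
    simp
  have h2 : ((forest G D N).ncard : ℝ) ≤ tau G := by
    exact_mod_cast tau_ge_ncard _ (forest_acyclic D N)
  refine le_trans ?_ (hD.trans h2)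
  rw [h1]
  have h3 := Finset.sum_le_sum (s := (Finset.univ : Finset W))
    (fun v _ => prob_forest (ν := ν) hr hν0 hν hG hg hN v)
  rw [Finset.sum_const, nsmul_eq_mul, mul_comm] at h3
  simpa using h3

lemma exists_label (hp : p ∈ Ioo (0 : ℝ) 1) (hε : ε ∈ Ioo (0 : ℝ) 1) :
    ∃ ν : Measure ℕ, IsProbabilityMeasure ν ∧ ν.real {0} = p ∧
      ∀ d, ν.real {d + 1} = (1 - p) * ε * (1 - ε) ^ d := by
  let e : unitInterval := ⟨ε, hε.1.le, hε.2.le⟩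
  have he : e ≠ 0 := by
    intro h
    have := congrArg Subtype.val h
    simp [e] at this
    exact hε.1.ne' this
  let γ : Measure ℕ := (geometricMeasure e).map Nat.succ
  have hγ : IsProbabilityMeasure γ :=
    Measure.isProbabilityMeasure_map (measurable_of_countable _).aemeasurable
  have h0 : γ.real {0} = 0 := by
    rw [map_measureReal_apply (measurable_of_countable _) MeasurableSet.of_discrete]
    have : Nat.succ ⁻¹' {0} = ∅ := by ext; simp
    simp [this]
  have hs : ∀ d, γ.real {d + 1} = (1 - ε) ^ d * ε := by
    intro d
    rw [map_measureReal_apply (measurable_of_countable _) MeasurableSet.of_discrete]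
    have : Nat.succ ⁻¹' {d + 1} = {d} := by ext; simp
    rw [this, geometricMeasure_real_singleton he]
  have hfin : ∀ S, (ENNReal.ofReal (1 - p) • γ) S ≠ ⊤ := by
    intro S
    simp only [Measure.smul_apply, smul_eq_mul]
    exact ENNReal.mul_ne_top ENNReal.ofReal_ne_top (measure_ne_top γ S)
  refine ⟨ENNReal.ofReal p • Measure.dirac 0 + ENNReal.ofReal (1 - p) • γ, ⟨?_⟩, ?_, ?_⟩
  · simp only [Measure.coe_add, Measure.coe_smul, Pi.add_apply, Pi.smul_apply, measure_univ,
      smul_eq_mul, mul_one]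
    rw [← ENNReal.ofReal_add hp.1.le (by linarith [hp.2])]
    simp
  · rw [measureReal_add_apply (by simp) (hfin _), measureReal_ennreal_smul_apply,
      measureReal_ennreal_smul_apply, h0]
    simp [hp.1.le, measureReal_def]
  · intro d
    rw [measureReal_add_apply (by simp) (hfin _), measureReal_ennreal_smul_apply,
      measureReal_ennreal_smul_apply, hs]
    have : (0 : ℝ) ≤ 1 - p := by linarith [hp.2]
    simp [measureReal_def, ENNReal.toReal_ofReal this]
    ring
end Law

section Reduction

lemma linear_unique {y c : ℝ → ℝ} (hc : ContinuousOn c (Ici 0))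
    (hy : ∀ x, 0 ≤ x → HasDerivWithinAt y (c x * y x) (Ici 0) x) (h0 : y 0 = 0) :
    ∀ x, 0 ≤ x → y x = 0 := by
  intro x hx
  obtain ⟨K, hK⟩ := (isCompact_Icc (a := (0 : ℝ)) (b := x)).exists_bound_of_continuousOn
    (hc.mono Icc_subset_Ici_self)
  refine eq_zero_of_abs_deriv_le_mul_abs_self_of_eq_zero_right (f := y)
    (f' := fun z => c z * y z) (K := K) (a := 0) (b := x) ?_ ?_ h0 ?_ x ⟨hx, le_rfl⟩
  · exact fun z hz => ((hy z hz.1).continuousWithinAt).mono Icc_subset_Ici_self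
  · exact fun z hz => (hy z hz.1).mono (Ici_subset_Ici.2 hz.1)
  · intro z hz
    rw [norm_mul]
    exact mul_le_mul_of_nonneg_right (hK z ⟨hz.1, hz.2.le⟩) (norm_nonneg _)

lemma reduction {r : ℕ} (hr : 3 ≤ r) {p : ℝ} (hp : p ∈ Ioo (0 : ℝ) 1) {w b q s t : ℝ → ℝ}
    (hsol : SystemODE r p w b q s t)
    (hpos : ∀ x : ℝ, 0 ≤ x → 0 < w x ∧ 0 < b x ∧ 0 < q x ∧ 0 < s x ∧ 0 < t x) :
    ∃ f h : ℝ → ℝ, f 0 = 1 - p ∧ h 0 = p ∧ ∀ x, 0 ≤ x → 0 < f x ∧ 0 < h x ∧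
      b x = r * (1 - p) * h x * f x ^ (r - 1) ∧
      HasDerivWithinAt f (-((1 - p) * (r - 1) * f x ^ (r - 2) * h x)) (Ici 0) x ∧
      HasDerivWithinAt h (-h x + (1 - p) * (r - 1) * f x ^ (r - 2) * h x) (Ici 0) x := by
  obtain ⟨hw, hb, hq, hs, ht, w0, b0, q0, s0, t0⟩ := hsol
  obtain ⟨k, rfl⟩ : ∃ k, r = k + 3 := ⟨r - 3, by omega⟩
  have hm : 0 < 1 - p := by linarith [hp.2]
  set m := 1 - p with hmdef
  have e1 : 2 * (k + 3) - 1 = 2 * k + 5 := by omega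
  have e2 : 2 * (k + 3) - 2 = 2 * k + 4 := by omega
  have e3 : k + 3 - 1 = k + 2 := by omega
  have e4 : k + 3 - 2 = k + 1 := by omega
  rw [e1] at s0
  rw [e2] at t0
  rw [e3, e4]
  have cw : ContinuousOn w (Ici 0) := fun x hx => (hw x hx).continuousWithinAt
  have cb : ContinuousOn b (Ici 0) := fun x hx => (hb x hx).continuousWithinAt
  have cq : ContinuousOn q (Ici 0) := fun x hx => (hq x hx).continuousWithinAt
  have cs : ContinuousOn s (Ici 0) := fun x hx => (hs x hx).continuousWithinAt
  have ct : ContinuousOn t (Ici 0) := fun x hx => (ht x hx).continuousWithinAt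
  have nw : ∀ x ∈ Ici (0 : ℝ), w x ≠ 0 := fun x hx => (hpos x hx).1.ne'
  have nb : ∀ x ∈ Ici (0 : ℝ), b x ≠ 0 := fun x hx => (hpos x hx).2.1.ne'
  have nq : ∀ x ∈ Ici (0 : ℝ), q x ≠ 0 := fun x hx => (hpos x hx).2.2.1.ne'
  set R : ℝ := ((k + 3 : ℕ) : ℝ) with hR
  have hRk : R = k + 3 := by rw [hR]; push_cast; ring
  have hR3 : (3 : ℝ) ≤ R := by rw [hRk]; have := k.cast_nonneg (α := ℝ); linarith
  have hR1 : R - 1 ≠ 0 := by linarith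
  have hR0 : R ≠ 0 := by linarith
  -- first integrals
  have I1 : ∀ x, 0 ≤ x → s x ^ 2 - q x * t x = 0 := by
    refine linear_unique (c := fun x => -2 - 2 * (R * (R - 2) * t x / ((R - 1) * b x))
      - 2 * (R - 1) * s x / w x) ?_ ?_ ?_
    · refine ((continuousOn_const.sub (continuousOn_const.mul
        ((continuousOn_const.mul ct).div (continuousOn_const.mul cb) ?_))).sub
        ((continuousOn_const.mul cs).div cw nw))
      exact fun x hx => mul_ne_zero hR1 (nb x hx)
    · intro x hx
      have := ((hs x hx).pow 2).sub ((hq x hx).mul (ht x hx))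
      refine this.congr_deriv ?_
      have h1 := nw x hx
      have h2 := nb x hx
      push_cast
      simp only [pow_one]
      field_simp
      ring
    · rw [s0, q0, t0]; ring
  have I2 : ∀ x, 0 ≤ x → R * s x * w x - (R - 1) * b x * q x = 0 := by
    refine linear_unique (c := fun x => -1 - s x / (w x * ((R - 1) * b x * q x)) *
      ((R - 2) * (R * s x * w x) + 2 * (R - 1) * ((R - 1) * b x * q x))) ?_ ?_ ?_
    · refine continuousOn_const.sub ((cs.div (cw.mul ((continuousOn_const.mul cb).mul cq)) ?_).mul
        ((continuousOn_const.mul ((continuousOn_const.mul cs).mul cw)).add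
          (continuousOn_const.mul ((continuousOn_const.mul cb).mul cq))))
      exact fun x hx => mul_ne_zero (nw x hx) (mul_ne_zero (mul_ne_zero hR1 (nb x hx)) (nq x hx))
    · intro x hx
      have := (((hs x hx).const_mul R).mul (hw x hx)).sub
        (((hb x hx).const_mul (R - 1)).mul (hq x hx))
      refine this.congr_deriv ?_
      have h1 := nw x hx
      have h2 := nb x hx
      have h3 := nq x hx
      have ht' : t x = s x ^ 2 / q x := by
        rw [eq_div_iff h3]; linarith [I1 x hx]
      rw [ht']
      field_simp
      ring
    · rw [s0, q0, b0, w0]; ring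
  -- the function f
  let f : ℝ → ℝ := fun x => Real.exp (Real.log (w x / m) / R)
  have hf0 : ∀ x, 0 < f x := fun x => Real.exp_pos _
  have hfr : ∀ x, 0 ≤ x → w x = m * f x ^ (k + 3) := by
    intro x hx
    have h1 : f x ^ (k + 3) = w x / m := by
      simp only [f]
      rw [← Real.exp_nat_mul, mul_div_cancel₀ _ hR0, Real.exp_log (div_pos (hpos x hx).1 hm)]
    rw [h1]; field_simp
  have hfd : ∀ x, 0 ≤ x → HasDerivWithinAt f (-(f x * (s x / w x))) (Ici 0) x := by
    intro x hx
    have h1 := nw x hx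
    have := ((((hw x hx).div_const m).log (div_ne_zero h1 hm.ne')).div_const R).exp
    refine this.congr_deriv ?_
    simp only [f]
    field_simp
  have hf00 : f 0 = m := by
    simp only [f]
    have : w 0 / m = m ^ (k + 3) := by rw [w0]; field_simp; ring
    rw [this, Real.log_pow, mul_div_cancel_left₀ _ hR0, Real.exp_log hm]
  have I0 : ∀ x, 0 ≤ x → q x - m ^ 2 * f x ^ (2 * k + 4) = 0 := by
    refine linear_unique (c := fun x => -((2 * R - 2) * s x / w x)) ?_ ?_ ?_
    · exact ((continuousOn_const.mul cs).div cw nw).neg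
    · intro x hx
      have := (hq x hx).sub (((hfd x hx).pow (2 * k + 4)).const_mul (m ^ 2))
      refine this.congr_deriv ?_
      have h1 := nw x hx
      simp only [Nat.add_one_sub_one]
      rw [hRk]
      push_cast
      field_simp
      ring
    · rw [q0, hf00]; ring
  have hkey : ∀ x, 0 ≤ x → s x / w x = (R - 1) * b x / (R * f x ^ 2) := by
    intro x hx
    have h1 := I2 x hx
    have h2 := I0 x hx
    have h3 := hfr x hx
    have h4 := hf0 x
    have h5 := nw x hx
    have hqx : q x = m ^ 2 * f x ^ (2 * k + 4) := by linarith
    rw [div_eq_div_iff h5 (by positivity)]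
    have h6 : w x * (s x * (R * f x ^ 2) - (R - 1) * b x * w x) = 0 := by
      have : w x * w x = f x ^ 2 * q x := by rw [h3, hqx]; ring
      linear_combination f x ^ 2 * h1 - (R - 1) * b x * this
    rcases mul_eq_zero.1 h6 with h | h
    · exact absurd h h5
    · linarith
  refine ⟨f, fun x => b x / (R * m * f x ^ (k + 2)), hf00, ?_, fun x hx => ?_⟩
  · show b 0 / (R * m * f 0 ^ (k + 2)) = p
    rw [hf00, b0]
    field_simp
    ring
  have h4 := hf0 x
  have hbp := (hpos x hx).2.1
  have hRp : 0 < R := by linarith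
  have h5 := nw x hx
  refine ⟨hf0 x, by positivity, by field_simp, ?_, ?_⟩
  · refine (hfd x hx).congr_deriv ?_
    rw [hkey x hx]
    field_simp
    ring
  · have := (hb x hx).div (((hfd x hx).pow (k + 2)).const_mul (R * m))
      (by simp only [Pi.pow_apply]; positivity)
    refine this.congr_deriv ?_
    have hA := I1 x hx
    have hB := I2 x hx
    have hq' := I0 x hx
    have h6 := nq x hx
    have hS : s x = w x * ((R - 1) * b x / (R * f x ^ 2)) := by
      rw [← hkey x hx]; field_simp
    have hqx : q x = m ^ 2 * f x ^ (2 * k + 4) := by linarith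
    have hT : t x = s x ^ 2 / q x := by
      rw [eq_div_iff h6]; linarith
    rw [hkey x hx, hT, hqx, hS, hfr x hx]
    simp only [Nat.add_one_sub_one, Pi.pow_apply]
    push_cast
    have hk2 : ((k : ℝ) + 2) = R - 1 := by rw [hRk]; ring
    rw [hk2]
    field_simp
    ring

end Reduction

section Euler

lemma abs_pow_sub_le (n : ℕ) {a c : ℝ} (ha : a ∈ Icc (0 : ℝ) 1) (hc : c ∈ Icc (0 : ℝ) 1) :
    |a ^ n - c ^ n| ≤ n * |a - c| := by
  induction n with
  | zero => simp
  | succ n ih =>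
    have h1 : a ^ (n + 1) - c ^ (n + 1) = a * (a ^ n - c ^ n) + (a - c) * c ^ n := by ring
    rw [h1]
    refine (abs_add_le _ _).trans ?_
    rw [abs_mul, abs_mul, abs_of_nonneg ha.1, abs_of_nonneg (pow_nonneg hc.1 n)]
    have h2 : c ^ n ≤ 1 := pow_le_one₀ hc.1 hc.2
    have h3 := abs_nonneg (a ^ n - c ^ n)
    have h4 := abs_nonneg (a - c)
    push_cast
    nlinarith [ha.2]

lemma abs_pow_mul_sub_le {r n : ℕ} (hn : n ≤ r) (hr : 1 ≤ r) {a c x y : ℝ}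
    (ha : a ∈ Icc (0 : ℝ) 1) (hc : c ∈ Icc (0 : ℝ) 1) (hx : x ∈ Icc (0 : ℝ) 1) :
    |a ^ n * x - c ^ n * y| ≤ r * (|a - c| + |x - y|) := by
  have h1 : a ^ n * x - c ^ n * y = (a ^ n - c ^ n) * x + c ^ n * (x - y) := by ring
  rw [h1]
  refine (abs_add_le _ _).trans ?_
  rw [abs_mul, abs_mul, abs_of_nonneg hx.1, abs_of_nonneg (pow_nonneg hc.1 n)]
  have h2 : c ^ n ≤ 1 := pow_le_one₀ hc.1 hc.2
  have h3 := abs_pow_sub_le n ha hc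
  have h4 := abs_nonneg (a - c)
  have h5 := abs_nonneg (x - y)
  have h6 := abs_nonneg (a ^ n - c ^ n)
  have hn' : (n : ℝ) ≤ r := by exact_mod_cast hn
  have hr' : (1 : ℝ) ≤ r := by exact_mod_cast hr
  have h7 : |a ^ n - c ^ n| * x ≤ |a ^ n - c ^ n| := mul_le_of_le_one_right h6 hx.2
  have h8 : c ^ n * |x - y| ≤ |x - y| := mul_le_of_le_one_left h5 h2
  have h9 : (n : ℝ) * |a - c| ≤ r * |a - c| := mul_le_mul_of_nonneg_right hn' h4
  have h10 : 1 * |x - y| ≤ r * |x - y| := mul_le_mul_of_nonneg_right hr' h5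
  linarith

lemma taylor_le {u u' : ℝ → ℝ} {L : ℝ} (hu : ∀ x, 0 ≤ x → HasDerivWithinAt u (u' x) (Ici 0) x)
    (hL : ∀ x y, 0 ≤ x → x ≤ y → |u' y - u' x| ≤ L * (y - x)) (hL0 : 0 ≤ L) {x ε : ℝ}
    (hx : 0 ≤ x) (hε : 0 ≤ ε) : |u (x + ε) - u x - ε * u' x| ≤ L * ε ^ 2 := by
  have h := Convex.norm_image_sub_le_of_norm_hasDerivWithin_le (f := fun y => u y - u' x * y)
    (f' := fun y => u' y - u' x) (s := Icc x (x + ε)) (x := x) (y := x + ε) (C := L * ε) ?_ ?_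
    (convex_Icc _ _) ⟨le_rfl, by linarith⟩ ⟨by linarith, le_rfl⟩
  · simp only [Real.norm_eq_abs] at h
    have e1 : x + ε - x = ε := by ring
    rw [e1, abs_of_nonneg hε] at h
    have e2 : u (x + ε) - u' x * (x + ε) - (u x - u' x * x) = u (x + ε) - u x - ε * u' x := by
      ring
    rw [e2] at h
    calc _ ≤ _ := h
      _ = _ := by ring
  · intro y hy
    have h1 := ((hu y (hx.trans hy.1)).mono (show Icc x (x + ε) ⊆ Ici 0 from
      fun z hz => hx.trans hz.1)).sub ((hasDerivWithinAt_id y (Icc x (x + ε))).const_mul (u' x))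
    exact h1.congr_deriv (by simp)
  · intro y hy
    rw [Real.norm_eq_abs]
    refine (hL x y hx hy.1).trans ?_
    exact mul_le_mul_of_nonneg_left (by linarith [hy.2]) hL0

lemma lip_le {u u' : ℝ → ℝ} {L : ℝ} (hu : ∀ x, 0 ≤ x → HasDerivWithinAt u (u' x) (Ici 0) x)
    (hL : ∀ x, 0 ≤ x → |u' x| ≤ L) {x y : ℝ} (hx : 0 ≤ x) (hxy : x ≤ y) :
    |u y - u x| ≤ L * (y - x) := by
  have h := Convex.norm_image_sub_le_of_norm_hasDerivWithin_le (f := u)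
    (f' := u') (s := Ici 0) (x := x) (y := y) (C := L) hu (fun z hz => hL z hz)
    (convex_Ici _) hx (hx.trans hxy)
  simpa only [Real.norm_eq_abs, abs_of_nonneg (sub_nonneg.2 hxy)] using h

variable {r : ℕ} {p : ℝ}

lemma eul_bounds (hr : 3 ≤ r) (hp : p ∈ Ioo (0 : ℝ) 1) {ε : ℝ} (hε : 0 < ε) (hεr : ε * r ≤ 1)
    (i : ℕ) : 0 ≤ (eul r p ε i).1 ∧ 0 ≤ (eul r p ε i).2 ∧
      (eul r p ε i).1 + (eul r p ε i).2 ≤ 1 := by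
  have hr' : (3 : ℝ) ≤ r := by exact_mod_cast hr
  induction i with
  | zero =>
    simp only [eul]
    exact ⟨by linarith [hp.2], hp.1.le, by linarith⟩
  | succ i ih =>
    obtain ⟨h1, h2, h3⟩ := ih
    simp only [eul]
    set F := (eul r p ε i).1
    set H := (eul r p ε i).2
    have hm0 : 0 ≤ 1 - p := by linarith [hp.2]
    have hm1 : 1 - p ≤ 1 := by linarith [hp.1]
    have hκ0 : 0 ≤ (1 - p) * ((r : ℝ) - 1) := mul_nonneg hm0 (by linarith)
    have hκ1 : (1 - p) * ((r : ℝ) - 1) ≤ r := by nlinarith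
    have hP0 : 0 ≤ F ^ (r - 2) * H := by positivity
    have hF1 : F ≤ 1 := by linarith
    have hP1 : F ^ (r - 2) * H ≤ F := by
      have : F ^ (r - 2) = F ^ (r - 3) * F := by
        rw [← pow_succ]; congr 1; omega
      rw [this]
      have h5 : F ^ (r - 3) ≤ 1 := pow_le_one₀ h1 hF1
      have h6 : F ^ (r - 3) * H ≤ 1 := by
        refine mul_le_one₀ h5 h2 (by linarith)
      calc F ^ (r - 3) * F * H = F ^ (r - 3) * H * F := by ring
        _ ≤ 1 * F := mul_le_mul_of_nonneg_right h6 h1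
        _ = F := one_mul F
    have hκ : ε * ((1 - p) * ((r : ℝ) - 1)) ≤ 1 :=
      (mul_le_mul_of_nonneg_left hκ1 hε.le).trans hεr
    have hε1 : ε ≤ 1 := by nlinarith
    refine ⟨?_, ?_, ?_⟩
    · have : ε * ((1 - p) * ((r : ℝ) - 1) * F ^ (r - 2) * H) ≤ F := by
        calc _ = ε * ((1 - p) * ((r : ℝ) - 1)) * (F ^ (r - 2) * H) := by ring
          _ ≤ 1 * (F ^ (r - 2) * H) := mul_le_mul_of_nonneg_right hκ hP0
          _ ≤ F := by linarith
      linarith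
    · have : 0 ≤ ε * ((1 - p) * ((r : ℝ) - 1)) * (F ^ (r - 2) * H) :=
        mul_nonneg (mul_nonneg hε.le hκ0) hP0
      nlinarith
    · have : 0 ≤ ε * H := by positivity
      nlinarith

set_option maxHeartbeats 4000000 in
lemma euler_conv (hr : 3 ≤ r) (hp : p ∈ Ioo (0 : ℝ) 1) {f h : ℝ → ℝ} (hf0 : f 0 = 1 - p)
    (hh0 : h 0 = p) (hfp : ∀ x, 0 ≤ x → 0 < f x) (hhp : ∀ x, 0 ≤ x → 0 < h x)
    (hf : ∀ x, 0 ≤ x →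
      HasDerivWithinAt f (-((1 - p) * (r - 1) * f x ^ (r - 2) * h x)) (Ici 0) x)
    (hh : ∀ x, 0 ≤ x →
      HasDerivWithinAt h (-h x + (1 - p) * (r - 1) * f x ^ (r - 2) * h x) (Ici 0) x)
    {T η : ℝ} (hT : 0 < T) (hη : 0 < η) :
    ∃ N : ℕ, ∃ ε : ℝ, ε ∈ Ioo (0 : ℝ) 1 ∧
      (∫ x in (0 : ℝ)..T, r * (1 - p) * h x * f x ^ (r - 1)) - η ≤
      ∑ i ∈ Finset.range N,
        ε * (r * (1 - p) * (eul r p ε i).2 * (eul r p ε (i + 1)).1 ^ (r - 1)) := by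
  have hr' : (3 : ℝ) ≤ r := by exact_mod_cast hr
  have hm0 : 0 ≤ 1 - p := by linarith [hp.2]
  have hm1 : 1 - p ≤ 1 := by linarith [hp.1]
  set κ : ℝ := (1 - p) * ((r : ℝ) - 1) with hκdef
  have hκ0 : 0 ≤ κ := mul_nonneg hm0 (by linarith)
  have hκ1 : κ ≤ r := by rw [hκdef]; nlinarith
  have hrm0 : 0 ≤ r * (1 - p) := by positivity
  have hrm1 : r * (1 - p) ≤ r := by nlinarith
  -- bounds for the exact solution
  have hsum : ∀ x, 0 ≤ x → f x + h x ≤ 1 := by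
    have hanti : AntitoneOn (fun x => f x + h x) (Ici 0) := by
      refine antitoneOn_of_hasDerivWithinAt_nonpos (f' := fun x => -h x) (convex_Ici 0) ?_ ?_ ?_
      · exact fun x hx => ((hf x hx).add (hh x hx)).continuousWithinAt
      · intro x hx
        rw [interior_Ici] at hx ⊢
        have := ((hf x (le_of_lt hx)).add (hh x (le_of_lt hx))).mono Ioi_subset_Ici_self
        refine this.congr_deriv ?_
        ring
      · intro x hx
        rw [interior_Ici] at hx
        linarith [hhp x (le_of_lt hx)]
    intro x hx
    have := hanti (Set.mem_Ici.2 (le_refl (0 : ℝ))) hx hx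
    simp only [hf0, hh0] at this
    linarith
  have hfI : ∀ x, 0 ≤ x → f x ∈ Icc (0 : ℝ) 1 := fun x hx =>
    ⟨(hfp x hx).le, by linarith [hsum x hx, hhp x hx]⟩
  have hhI : ∀ x, 0 ≤ x → h x ∈ Icc (0 : ℝ) 1 := fun x hx =>
    ⟨(hhp x hx).le, by linarith [hsum x hx, hfp x hx]⟩
  have hPb : ∀ x, 0 ≤ x → 0 ≤ κ * f x ^ (r - 2) * h x ∧ κ * f x ^ (r - 2) * h x ≤ r := by
    intro x hx
    have h1 := hfI x hx
    have h2 := hhI x hx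
    have h3 : f x ^ (r - 2) ≤ 1 := pow_le_one₀ h1.1 h1.2
    have h4 : 0 ≤ f x ^ (r - 2) := pow_nonneg h1.1 _
    refine ⟨mul_nonneg (mul_nonneg hκ0 h4) h2.1, ?_⟩
    have h5 : f x ^ (r - 2) * h x ≤ 1 := mul_le_one₀ h3 h2.1 h2.2
    calc _ = κ * (f x ^ (r - 2) * h x) := by ring
      _ ≤ κ * 1 := mul_le_mul_of_nonneg_left h5 hκ0
      _ ≤ r := by linarith
  have lf : ∀ x y, 0 ≤ x → x ≤ y → |f y - f x| ≤ r * (y - x) := by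
    intro x y hx hxy
    refine lip_le hf (fun z hz => ?_) hx hxy
    rw [abs_neg, abs_of_nonneg (hPb z hz).1]
    exact (hPb z hz).2
  have lh : ∀ x y, 0 ≤ x → x ≤ y → |h y - h x| ≤ r * (y - x) := by
    intro x y hx hxy
    refine lip_le hh (fun z hz => ?_) hx hxy
    have h1 := hhI z hz
    have h2 := hPb z hz
    rw [abs_le]
    constructor <;> linarith [h1.1, h1.2, h2.1, h2.2]
  have lP : ∀ n ≤ r, ∀ x y, 0 ≤ x → x ≤ y →
      |f y ^ n * h y - f x ^ n * h x| ≤ 2 * r ^ 2 * (y - x) := by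
    intro n hn x y hx hxy
    have h1 := abs_pow_mul_sub_le (r := r) (n := n) hn (by omega)
      (hfI y (hx.trans hxy)) (hfI x hx) (hhI y (hx.trans hxy)) (y := h x)
    have h2 := lf x y hx hxy
    have h3 := lh x y hx hxy
    refine h1.trans ?_
    calc (r : ℝ) * (|f y - f x| + |h y - h x|) ≤ r * (r * (y - x) + r * (y - x)) :=
          mul_le_mul_of_nonneg_left (by linarith) (by linarith)
      _ = _ := by ring
  have lκ : ∀ x y, 0 ≤ x → x ≤ y →
      |κ * f y ^ (r - 2) * h y - κ * f x ^ (r - 2) * h x| ≤ 2 * r ^ 3 * (y - x) := by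
    intro x y hx hxy
    have h1 := lP (r - 2) (by omega) x y hx hxy
    have : κ * f y ^ (r - 2) * h y - κ * f x ^ (r - 2) * h x =
      κ * (f y ^ (r - 2) * h y - f x ^ (r - 2) * h x) := by ring
    rw [this, abs_mul, abs_of_nonneg hκ0]
    calc _ ≤ r * (2 * r ^ 2 * (y - x)) :=
          mul_le_mul hκ1 h1 (abs_nonneg _) (by linarith)
      _ = _ := by ring
  have tf : ∀ x ε, 0 ≤ x → 0 ≤ ε →
      |f (x + ε) - f x - ε * (-(κ * f x ^ (r - 2) * h x))| ≤ 2 * r ^ 3 * ε ^ 2 := by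
    intro x ε hx hε
    refine taylor_le hf ?_ (by positivity) hx hε
    intro x y hx hxy
    have := lκ x y hx hxy
    rw [← abs_neg]
    convert this using 2
    ring
  have th : ∀ x ε, 0 ≤ x → 0 ≤ ε →
      |h (x + ε) - h x - ε * (-h x + κ * f x ^ (r - 2) * h x)| ≤ 3 * r ^ 3 * ε ^ 2 := by
    intro x ε hx hε
    refine taylor_le hh ?_ (by positivity) hx hε
    intro x y hx hxy
    have h1 := lκ x y hx hxy
    have h2 := lh x y hx hxy
    have e : -h y + κ * f y ^ (r - 2) * h y - (-h x + κ * f x ^ (r - 2) * h x) =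
      (κ * f y ^ (r - 2) * h y - κ * f x ^ (r - 2) * h x) + -(h y - h x) := by ring
    rw [e]
    refine (abs_add_le _ _).trans ?_
    rw [abs_neg]
    have h3 : (r : ℝ) ≤ r ^ 3 := by nlinarith [sq_nonneg ((r : ℝ) - 1)]
    have h4 : (r : ℝ) * (y - x) ≤ r ^ 3 * (y - x) :=
      mul_le_mul_of_nonneg_right h3 (by linarith)
    linarith
  -- constants
  set A : ℝ := 3 * r ^ 2 with hA
  set B : ℝ := 5 * r ^ 3 with hB
  set C : ℝ := T * B * Real.exp (A * T) with hC
  have hA0 : 0 ≤ A := by positivity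
  have hB0 : 0 ≤ B := by positivity
  have hC0 : 0 ≤ C := by positivity
  set C' : ℝ := r ^ 2 * (C + r) + 2 * r ^ 3 with hC'
  have hC'0 : 0 ≤ C' := by positivity
  obtain ⟨N, hN⟩ := exists_nat_gt (T * r + T * C' * T / η + 1)
  have hq : 0 ≤ T * C' * T / η := by positivity
  have hTr : 0 < T * r := by positivity
  have hN0 : (0 : ℝ) < N := by linarith
  set ε : ℝ := T / N with hεdef
  have hε0 : 0 < ε := by positivity
  have hNε : N * ε = T := by rw [hεdef]; field_simp
  have hεr : ε * r ≤ 1 := by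
    rw [hεdef, div_mul_eq_mul_div, div_le_one hN0]; linarith
  have hε1 : ε < 1 := by nlinarith
  have hεη : T * C' * ε ≤ η := by
    rw [hεdef, ← mul_div_assoc, div_le_iff₀ hN0]
    have : T * C' * T / η ≤ N := by linarith
    rw [div_le_iff₀ hη] at this
    linarith
  have hEb := eul_bounds hr hp hε0 hεr
  refine ⟨N, ε, ⟨hε0, hε1⟩, ?_⟩
  -- global error
  have herr : ∀ i : ℕ, |(eul r p ε i).1 - f (i * ε)| + |(eul r p ε i).2 - h (i * ε)| ≤
      i * (B * ε ^ 2) * (1 + A * ε) ^ i := by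
    intro i
    induction i with
    | zero => simp [eul, hf0, hh0]
    | succ i ih =>
      have hx : 0 ≤ (i : ℝ) * ε := by positivity
      have hxe : ((i + 1 : ℕ) : ℝ) * ε = i * ε + ε := by push_cast; ring
      rw [hxe]
      have h1 := tf (i * ε) ε hx hε0.le
      have h2 := th (i * ε) ε hx hε0.le
      obtain ⟨hb1, hb2, hb3⟩ := hEb i
      have h3 := abs_pow_mul_sub_le (r := r) (n := r - 2) (by omega) (by omega)
        (a := (eul r p ε i).1) (c := f (i * ε)) (x := (eul r p ε i).2) (y := h (i * ε))
        ⟨hb1, by linarith⟩ (hfI _ hx) ⟨hb2, by linarith⟩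
      simp only [eul]
      rw [← hκdef]
      set F := (eul r p ε i).1
      set H := (eul r p ε i).2
      set X := f (i * ε)
      set Y := h (i * ε)
      set E := |F - X| + |H - Y| with hE
      have hE0 : 0 ≤ E := by positivity
      have h4 : |ε * κ * (F ^ (r - 2) * H - X ^ (r - 2) * Y)| ≤ ε * r ^ 2 * E := by
        rw [abs_mul, abs_of_nonneg (by positivity)]
        calc _ ≤ (ε * r) * (r * E) := by
              refine mul_le_mul ?_ h3 (abs_nonneg _) (by positivity)
              exact mul_le_mul_of_nonneg_left hκ1 hε0.le
          _ = _ := by ring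
      have h5 : |F - ε * (κ * F ^ (r - 2) * H) - f (i * ε + ε)| ≤
          |F - X| + ε * r ^ 2 * E + 2 * r ^ 3 * ε ^ 2 := by
        have e : F - ε * (κ * F ^ (r - 2) * H) - f (i * ε + ε) =
          (F - X) - ε * κ * (F ^ (r - 2) * H - X ^ (r - 2) * Y) -
            (f (i * ε + ε) - X - ε * (-(κ * X ^ (r - 2) * Y))) := by ring
        rw [e]
        refine (abs_sub _ _).trans ?_
        have := abs_sub (F - X) (ε * κ * (F ^ (r - 2) * H - X ^ (r - 2) * Y))
        linarith
      have h6 : |H + ε * (-H + κ * F ^ (r - 2) * H) - h (i * ε + ε)| ≤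
          |H - Y| + ε * r ^ 2 * E + 3 * r ^ 3 * ε ^ 2 := by
        have e : H + ε * (-H + κ * F ^ (r - 2) * H) - h (i * ε + ε) =
          (1 - ε) * (H - Y) + ε * κ * (F ^ (r - 2) * H - X ^ (r - 2) * Y) -
            (h (i * ε + ε) - Y - ε * (-Y + κ * X ^ (r - 2) * Y)) := by ring
        rw [e]
        refine (abs_sub _ _).trans ?_
        have h7 := abs_add_le ((1 - ε) * (H - Y)) (ε * κ * (F ^ (r - 2) * H - X ^ (r - 2) * Y))
        have h8 : |(1 - ε) * (H - Y)| ≤ |H - Y| := by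
          rw [abs_mul, abs_of_nonneg (by linarith)]
          exact mul_le_of_le_one_left (abs_nonneg _) (by linarith)
        linarith
      have h9 : (1 : ℝ) ≤ (1 + A * ε) ^ (i + 1) := one_le_pow₀ (by nlinarith)
      have h10 : 0 ≤ B * ε ^ 2 := by positivity
      calc _ ≤ (1 + A * ε) * E + B * ε ^ 2 := by
            rw [hA, hB]
            have : 0 ≤ ε * r ^ 2 * E := by positivity
            have h55 := add_le_add h5 h6
            refine h55.trans ?_
            rw [hE] at this ⊢
            linarith
        _ ≤ (1 + A * ε) * (i * (B * ε ^ 2) * (1 + A * ε) ^ i) + B * ε ^ 2 * 1 := by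
            have : 0 ≤ 1 + A * ε := by positivity
            have := mul_le_mul_of_nonneg_left ih this
            linarith
        _ ≤ (1 + A * ε) * (i * (B * ε ^ 2) * (1 + A * ε) ^ i) +
              B * ε ^ 2 * (1 + A * ε) ^ (i + 1) := by
            have := mul_le_mul_of_nonneg_left h9 h10
            linarith
        _ = _ := by push_cast; ring
  have herr' : ∀ i : ℕ, i ≤ N →
      |(eul r p ε i).1 - f (i * ε)| + |(eul r p ε i).2 - h (i * ε)| ≤ C * ε := by
    intro i hi
    refine (herr i).trans ?_
    have hiN : (i : ℝ) * ε ≤ T := by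
      rw [← hNε]
      exact mul_le_mul_of_nonneg_right (by exact_mod_cast hi) hε0.le
    have h1 : (1 + A * ε) ^ i ≤ Real.exp (A * T) := by
      calc (1 + A * ε) ^ i ≤ (Real.exp (A * ε)) ^ i := by
            refine pow_le_pow_left₀ (by positivity) ?_ i
            linarith [Real.add_one_le_exp (A * ε)]
        _ = Real.exp (A * (i * ε)) := by
            rw [← Real.exp_nat_mul]; congr 1; ring
        _ ≤ _ := Real.exp_le_exp.2 (mul_le_mul_of_nonneg_left hiN hA0)
    calc (i : ℝ) * (B * ε ^ 2) * (1 + A * ε) ^ i = ((i * ε) * (B * ε)) * (1 + A * ε) ^ i := by ring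
      _ ≤ (T * (B * ε)) * Real.exp (A * T) := by
          refine mul_le_mul ?_ h1 (by positivity) (by positivity)
          exact mul_le_mul_of_nonneg_right hiN (by positivity)
      _ = C * ε := by rw [hC]; ring
  set bb : ℝ → ℝ := fun x => r * (1 - p) * h x * f x ^ (r - 1) with hbb
  have hcont : ContinuousOn bb (Ici 0) := by
    have c1 : ContinuousOn f (Ici 0) := fun x hx => (hf x hx).continuousWithinAt
    have c2 : ContinuousOn h (Ici 0) := fun x hx => (hh x hx).continuousWithinAt
    exact (continuousOn_const.mul c2).mul (c1.pow _)
  have hII : ∀ x y, 0 ≤ x → x ≤ y → IntervalIntegrable bb volume x y := by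
    intro x y hx hxy
    refine (hcont.mono ?_).intervalIntegrable
    rw [uIcc_of_le hxy]
    exact fun z hz => hx.trans hz.1
  have hstep : ∀ i : ℕ, i < N → ∫ x in (i * ε)..(i * ε + ε), bb x ≤
      ε * (r * (1 - p) * (eul r p ε i).2 * (eul r p ε (i + 1)).1 ^ (r - 1)) + C' * ε ^ 2 := by
    intro i hi
    have hx : 0 ≤ (i : ℝ) * ε := by positivity
    have h1 : ∀ z ∈ Icc ((i : ℝ) * ε) (i * ε + ε), bb z ≤ bb (i * ε) + 2 * r ^ 3 * ε := by
      intro z hz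
      have h2 := lP (r - 1) (by omega) (i * ε) z hx hz.1
      have e : bb z - bb (i * ε) = r * (1 - p) *
          (f z ^ (r - 1) * h z - f (i * ε) ^ (r - 1) * h (i * ε)) := by
        simp only [hbb]; ring
      have h3 : bb z - bb (i * ε) ≤ r * (2 * r ^ 2 * ε) := by
        rw [e]
        refine (le_abs_self _).trans ?_
        rw [abs_mul, abs_of_nonneg hrm0]
        refine mul_le_mul hrm1 (h2.trans ?_) (abs_nonneg _) (by linarith)
        exact mul_le_mul_of_nonneg_left (by linarith [hz.2]) (by positivity)
      linarith
    have h2 : ∫ x in (i * ε)..(i * ε + ε), bb x ≤ ε * (bb (i * ε) + 2 * r ^ 3 * ε) := by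
      have := intervalIntegral.integral_mono_on (a := (i : ℝ) * ε) (b := i * ε + ε)
        (g := fun _ => bb (i * ε) + 2 * r ^ 3 * ε) (by linarith)
        (hII _ _ hx (by linarith)) intervalIntegrable_const h1
      rw [intervalIntegral.integral_const, smul_eq_mul] at this
      calc _ ≤ _ := this
        _ = _ := by ring
    obtain ⟨hb1, hb2, hb3⟩ := hEb i
    obtain ⟨hc1, hc2, hc3⟩ := hEb (i + 1)
    have h3 := abs_pow_mul_sub_le (r := r) (n := r - 1) (by omega) (by omega)
        (c := (eul r p ε (i + 1)).1) (a := f (i * ε)) (y := (eul r p ε i).2) (x := h (i * ε))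
        (hfI _ hx) ⟨hc1, by linarith⟩ (hhI _ hx)
    have h4 : |f (i * ε) - (eul r p ε (i + 1)).1| ≤ |(eul r p ε i).1 - f (i * ε)| + r * ε := by
      have e : f (i * ε) - (eul r p ε (i + 1)).1 = -((eul r p ε i).1 - f (i * ε)) +
        ε * (κ * ((eul r p ε i).1 ^ (r - 2) * (eul r p ε i).2)) := by
        simp only [eul]; rw [← hκdef]; ring
      rw [e]
      refine (abs_add_le _ _).trans ?_
      rw [abs_neg]
      have h5 : (eul r p ε i).1 ^ (r - 2) * (eul r p ε i).2 ≤ 1 :=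
        mul_le_one₀ (pow_le_one₀ hb1 (by linarith)) hb2 (by linarith)
      have h6 : 0 ≤ (eul r p ε i).1 ^ (r - 2) * (eul r p ε i).2 := by positivity
      rw [abs_of_nonneg (mul_nonneg hε0.le (mul_nonneg hκ0 h6))]
      have h7 : κ * ((eul r p ε i).1 ^ (r - 2) * (eul r p ε i).2) ≤ r * 1 :=
        mul_le_mul hκ1 h5 h6 (by linarith)
      have h8 := mul_le_mul_of_nonneg_left h7 hε0.le
      linarith
    have h5 := herr' i hi.le
    rw [abs_sub_comm (h (i * ε))] at h3
    have h6 : |f (i * ε) ^ (r - 1) * h (i * ε) -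
        (eul r p ε (i + 1)).1 ^ (r - 1) * (eul r p ε i).2| ≤ r * ((C + r) * ε) := by
      refine h3.trans (mul_le_mul_of_nonneg_left ?_ (by linarith))
      linarith
    have h7 : bb (i * ε) ≤ r * (1 - p) * (eul r p ε i).2 * (eul r p ε (i + 1)).1 ^ (r - 1) +
        r ^ 2 * (C + r) * ε := by
      have e : bb (i * ε) - r * (1 - p) * (eul r p ε i).2 * (eul r p ε (i + 1)).1 ^ (r - 1) =
        r * (1 - p) * (f (i * ε) ^ (r - 1) * h (i * ε) -
        (eul r p ε (i + 1)).1 ^ (r - 1) * (eul r p ε i).2) := by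
        simp only [hbb]; ring
      have h8 : r * (1 - p) * (f (i * ε) ^ (r - 1) * h (i * ε) -
        (eul r p ε (i + 1)).1 ^ (r - 1) * (eul r p ε i).2) ≤ r * (r * ((C + r) * ε)) := by
        refine (le_abs_self _).trans ?_
        rw [abs_mul, abs_of_nonneg hrm0]
        exact mul_le_mul hrm1 h6 (abs_nonneg _) (by linarith)
      linarith
    refine h2.trans ?_
    have h8 := mul_le_mul_of_nonneg_left h7 hε0.le
    rw [hC']
    linarith
  have hfinal : ∀ n : ℕ, n ≤ N → ∫ x in (0 : ℝ)..(n * ε), bb x ≤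
      ∑ i ∈ Finset.range n,
        ε * (r * (1 - p) * (eul r p ε i).2 * (eul r p ε (i + 1)).1 ^ (r - 1)) +
        n * (C' * ε ^ 2) := by
    intro n
    induction n with
    | zero => simp
    | succ n ih =>
      intro hn
      have hx : 0 ≤ (n : ℝ) * ε := by positivity
      have hxe : ((n + 1 : ℕ) : ℝ) * ε = n * ε + ε := by push_cast; ring
      rw [hxe, ← intervalIntegral.integral_add_adjacent_intervals (hII 0 _ le_rfl hx)
        (hII _ _ hx (by linarith)), Finset.sum_range_succ]
      have h1 := ih (by omega)
      have h2 := hstep n (by omega)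
      push_cast
      linarith
  have h1 := hfinal N le_rfl
  rw [hNε] at h1
  have h2 : N * (C' * ε ^ 2) = T * C' * ε := by rw [← hNε]; ring
  linarith
end Euler

/-- If the positive solutions of the system of differential equations
associated with `(r, p₀)` have `∫₀^∞ b̂` finite, then every `r`-regular graph of
sufficiently large girth on `n` vertices has an induced forest on at least
`(p₀(1−p₀)^r + ∫₀^∞ b̂ − δ)·n` vertices. -/
theorem tau_ge_of_systemODE
    (r : ℕ) (hr : 3 ≤ r) (p₀ : ℝ) (hp₀ : p₀ ∈ Ioo (0 : ℝ) 1)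
    (w b q s t : ℝ → ℝ)
    (hsol : SystemODE r p₀ w b q s t)
    (hpos : ∀ x : ℝ, 0 ≤ x → 0 < w x ∧ 0 < b x ∧ 0 < q x ∧ 0 < s x ∧ 0 < t x)
    (hint : IntegrableOn b (Ioi (0 : ℝ)))
    (δ : ℝ) (hδ : 0 < δ) :
    ∃ g : ℕ, 0 < g ∧
      ∀ (W : Type) [Fintype W] (G : SimpleGraph W),
        IsRegular G r → (g : ℕ∞) ≤ G.egirth →
        (p₀ * (1 - p₀) ^ r + (∫ x in Ioi (0 : ℝ), b x) - δ) * (Fintype.card W : ℝ)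
          ≤ (tau G : ℝ) := by
  obtain ⟨f, h, hf0, hh0, hfh⟩ := reduction hr hp₀ hsol hpos
  have hlim := intervalIntegral_tendsto_integral_Ioi (0 : ℝ) hint tendsto_id
  have hev : ∀ᶠ T : ℝ in atTop,
      (∫ x in Ioi (0 : ℝ), b x) - δ / 2 < ∫ x in (0 : ℝ)..T, b x :=
    hlim.eventually (lt_mem_nhds (by linarith))
  obtain ⟨T, hT1, hT0⟩ := (hev.and (eventually_gt_atTop (0 : ℝ))).exists
  have hcongr : ∫ x in (0 : ℝ)..T, b x =
      ∫ x in (0 : ℝ)..T, r * (1 - p₀) * h x * f x ^ (r - 1) := by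
    refine intervalIntegral.integral_congr fun x hx => ?_
    rw [uIcc_of_le hT0.le] at hx
    exact (hfh x hx.1).2.2.1
  obtain ⟨N, ε, hε, hle⟩ := euler_conv hr hp₀ hf0 hh0 (fun x hx => (hfh x hx).1)
    (fun x hx => (hfh x hx).2.1) (fun x hx => (hfh x hx).2.2.2.1)
    (fun x hx => (hfh x hx).2.2.2.2) hT0 (half_pos hδ)
  obtain ⟨ν, hprob, hν0, hν⟩ := exists_label hp₀ hε
  refine ⟨2 * N + 3, by omega, fun W _ G hG hg => ?_⟩
  refine le_trans ?_ (tau_ge_of_label (ν := ν) hr hν0 hν hG hg (N := N) (by omega))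
  refine mul_le_mul_of_nonneg_right ?_ (Nat.cast_nonneg _)
  linarith

end InducedForest
end

section
/- Let r ≥ 3 be an integer and p₀ ∈ (0,1). Then there exist functions ŵ, b̂, q̂, ŝ, t̂ defined on the whole nonnegative real line which solve the system of differential equations associated with (r,p₀), and they satisfy: (i) ŵ(x), b̂(x), q̂(x), ŝ(x), t̂(x) are positive for all x ≥ 0; and (ii) the integral ∫₀^∞ b̂(x) dx converges (is finite). -/
open MeasureTheory ProbabilityTheory Filter Set

namespace InducedForest

/-- One-sided solutions of an autonomous equation on `[0, τ]`. -/
def IsSol {E : Type*} [NormedAddCommGroup E] [NormedSpace ℝ E] (F : E → E) (τ : ℝ) (f : ℝ → E) :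
    Prop :=
  ContinuousOn f (Icc 0 τ) ∧ ∀ t ∈ Ico 0 τ, HasDerivWithinAt f (F (f t)) (Ici t) t

lemma exists_on_Icc {E : Type*} [NormedAddCommGroup E] [NormedSpace ℝ E] [CompleteSpace E]
    (G : E → E) (K M : NNReal) (hG : LipschitzWith K G) (hM : ∀ x, ‖G x‖ ≤ M) (x₀ : E)
    (T : ℝ) (hT : 0 ≤ T) :
    ∃ f : ℝ → E, f 0 = x₀ ∧ ∀ t ∈ Icc 0 T, HasDerivWithinAt f (G (f t)) (Icc 0 T) t := by
  have h : IsPicardLindelof (fun _ => G) (tmin := 0) (tmax := T) ⟨0, le_rfl, hT⟩ x₀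
      (M * T.toNNReal) 0 M K :=
    { lipschitzOnWith := fun t _ => hG.lipschitzOnWith
      continuousOn := fun x _ => continuousOn_const
      norm_le := fun t _ x _ => hM x
      mul_max_le := by simp [hT] }
  exact h.exists_eq_forall_mem_Icc_hasDerivWithinAt₀

lemma isSol_of_Icc {E : Type*} [NormedAddCommGroup E] [NormedSpace ℝ E] {F : E → E} {T : ℝ}
    {f : ℝ → E} (h : ∀ t ∈ Icc 0 T, HasDerivWithinAt f (F (f t)) (Icc 0 T) t) {τ : ℝ}
    (hτ : τ ≤ T) : IsSol F τ f := by
  refine ⟨fun t ht => ((h t ⟨ht.1, ht.2.trans hτ⟩).continuousWithinAt).mono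
    (Icc_subset_Icc_right hτ), fun t ht => ?_⟩
  have h1 := h t ⟨ht.1, ht.2.le.trans hτ⟩
  refine (h1.mono (Icc_subset_Icc_left ht.1)).mono_of_mem_nhdsWithin ?_
  exact Icc_mem_nhdsGE (ht.2.trans_le hτ)

/-- clamping of a point of `ℝ³` -/
noncomputable def clamp (R : ℝ) (x : ℝ × ℝ × ℝ) : ℝ × ℝ × ℝ :=
  (max (-R) (min R x.1), max (-R) (min R x.2.1), max (-R) (min R x.2.2))

lemma clamp_lip (R : ℝ) : LipschitzWith 1 (clamp R) := by
  have h (f : ℝ × ℝ × ℝ → ℝ) (hf : LipschitzWith 1 f) :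
      LipschitzWith 1 (fun x => max (-R) (min R (f x))) :=
    (hf.const_min R).const_max (-R)
  have h1 := h _ LipschitzWith.prod_fst
  have h2 := h (fun x => x.2.1) (by
    simpa using! (LipschitzWith.prod_fst (α := ℝ) (β := ℝ)).comp
      (LipschitzWith.prod_snd (α := ℝ) (β := ℝ × ℝ)))
  have h3 := h (fun x => x.2.2) (by
    simpa using! (LipschitzWith.prod_snd (α := ℝ) (β := ℝ)).comp
      (LipschitzWith.prod_snd (α := ℝ) (β := ℝ × ℝ)))
  simpa using! h1.prodMk (h2.prodMk h3)

lemma clamp_abs {R : ℝ} (hR : 0 ≤ R) (y : ℝ) : |max (-R) (min R y)| ≤ R := by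
  rw [abs_le]
  exact ⟨le_max_left _ _, max_le (by linarith) (min_le_left _ _)⟩

lemma clamp_norm {R : ℝ} (hR : 0 ≤ R) (x : ℝ × ℝ × ℝ) : ‖clamp R x‖ ≤ R := by
  simp only [clamp, Prod.norm_def, Real.norm_eq_abs]
  exact max_le (clamp_abs hR _) (max_le (clamp_abs hR _) (clamp_abs hR _))

lemma clamp_eq' {R : ℝ} {y : ℝ} (h : |y| ≤ R) : max (-R) (min R y) = y := by
  rw [abs_le] at h
  rw [min_eq_right h.2, max_eq_right h.1]

lemma clamp_eq {R : ℝ} {x : ℝ × ℝ × ℝ} (h : ‖x‖ ≤ R) : clamp R x = x := by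
  simp only [Prod.norm_def, Real.norm_eq_abs, sup_le_iff] at h
  simp only [clamp]
  rw [clamp_eq' h.1, clamp_eq' h.2.1, clamp_eq' h.2.2]

lemma lip_ball {F : ℝ × ℝ × ℝ → ℝ × ℝ × ℝ} (hF : ContDiff ℝ 1 F) (R : ℝ) :
    ∃ K, LipschitzOnWith K F (Metric.closedBall 0 R) :=
  hF.locallyLipschitz.locallyLipschitzOn.exists_lipschitzOnWith_of_compact
    (isCompact_closedBall _ _)

lemma exists_piece {F : ℝ × ℝ × ℝ → ℝ × ℝ × ℝ} (hF : ContDiff ℝ 1 F) (x₀ : ℝ × ℝ × ℝ)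
    (T : ℝ) (hT : 0 ≤ T) (R : ℝ)
    (hap : ∀ τ ∈ Icc 0 T, ∀ f : ℝ → ℝ × ℝ × ℝ, f 0 = x₀ → IsSol F τ f → ‖f τ‖ ≤ R) :
    ∃ f : ℝ → ℝ × ℝ × ℝ, f 0 = x₀ ∧
      ∀ t ∈ Icc 0 T, HasDerivWithinAt f (F (f t)) (Icc 0 T) t := by
  have hR : 0 ≤ R := (norm_nonneg _).trans (hap 0 ⟨le_rfl, hT⟩ (fun _ => x₀) rfl
    ⟨continuousOn_const, fun t ht => absurd ht (by simp)⟩)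
  have hR1 : 0 ≤ R + 1 := by linarith
  obtain ⟨K, hK⟩ := lip_ball hF (R + 1)
  obtain ⟨M, hM⟩ := (isCompact_closedBall (0 : ℝ × ℝ × ℝ) (R + 1)).exists_bound_of_continuousOn
    hF.continuous.continuousOn
  have hmem : ∀ x, clamp (R + 1) x ∈ Metric.closedBall (0 : ℝ × ℝ × ℝ) (R + 1) := fun x => by
    simpa using clamp_norm hR1 x
  have hlip : LipschitzWith K (fun x => F (clamp (R + 1) x)) := by
    have := hK.comp (clamp_lip (R + 1)).lipschitzOnWith (s := univ) (fun x _ => hmem x)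
    simpa using! this
  obtain ⟨f, hf0, hf⟩ := exists_on_Icc (fun x => F (clamp (R + 1) x)) K M.toNNReal hlip
    (fun x => (hM _ (hmem x)).trans (Real.le_coe_toNNReal M)) x₀ T hT
  have hcont : ContinuousOn f (Icc 0 T) := fun t ht => (hf t ht).continuousWithinAt
  have key : ∀ t ∈ Icc 0 T, ‖f t‖ ≤ R + 1 := by
    by_contra! hcon
    obtain ⟨t1, ht1, h1⟩ := hcon
    have hcl : IsClosed {t ∈ Icc 0 T | R + 1 ≤ ‖f t‖} :=
      isClosed_Icc.isClosed_le continuousOn_const hcont.norm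
    have hcp : IsCompact {t ∈ Icc 0 T | R + 1 ≤ ‖f t‖} :=
      isCompact_Icc.of_isClosed_subset hcl (fun t ht => ht.1)
    obtain ⟨τ, ⟨hτ, hτ2⟩, hmin⟩ := hcp.exists_isLeast ⟨t1, ht1, h1.le⟩
    have hs : IsSol F τ f := by
      have := isSol_of_Icc (F := fun x => F (clamp (R + 1) x)) hf hτ.2
      refine ⟨this.1, fun t ht => ?_⟩
      have h2 := this.2 t ht
      have h3 : ‖f t‖ ≤ R + 1 := by
        by_contra! h4
        have := hmin ⟨⟨ht.1, ht.2.le.trans hτ.2⟩, h4.le⟩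
        linarith [ht.2]
      simpa only [clamp_eq h3] using h2
    have := hap τ hτ f hf0 hs
    linarith
  refine ⟨f, hf0, fun t ht => ?_⟩
  simpa only [clamp_eq (key t ht)] using hf t ht

lemma exists_global {F : ℝ × ℝ × ℝ → ℝ × ℝ × ℝ} (hF : ContDiff ℝ 1 F) (x₀ : ℝ × ℝ × ℝ)
    (hap : ∀ T, 0 ≤ T → ∃ R, ∀ τ ∈ Icc 0 T, ∀ f : ℝ → ℝ × ℝ × ℝ, f 0 = x₀ → IsSol F τ f →
      ‖f τ‖ ≤ R) :
    ∃ f : ℝ → ℝ × ℝ × ℝ, f 0 = x₀ ∧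
      ∀ t, 0 ≤ t → HasDerivWithinAt f (F (f t)) (Ici 0) t := by
  have h1 : ∀ n : ℕ, ∃ f : ℝ → ℝ × ℝ × ℝ, f 0 = x₀ ∧
      ∀ t ∈ Icc 0 (n : ℝ), HasDerivWithinAt f (F (f t)) (Icc 0 (n : ℝ)) t := fun n => by
    obtain ⟨R, hR⟩ := hap n n.cast_nonneg
    exact exists_piece hF x₀ n n.cast_nonneg R hR
  choose f hf0 hf using h1
  have huniq : ∀ m n : ℕ, m ≤ n → EqOn (f m) (f n) (Icc 0 (m : ℝ)) := by
    intro m n hmn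
    have hmn' : (m : ℝ) ≤ n := by exact_mod_cast hmn
    obtain ⟨R, hR⟩ := hap m m.cast_nonneg
    obtain ⟨K, hK⟩ := lip_ball hF R
    have hm := isSol_of_Icc (hf m) le_rfl
    have hn := isSol_of_Icc (hf n) hmn'
    refine ODE_solution_unique_of_mem_Icc_right (v := fun _ => F)
      (s := fun _ => Metric.closedBall 0 R) (K := K) (fun t _ => hK) hm.1 hm.2 ?_ hn.1 hn.2 ?_ ?_
    · intro t ht
      have := hR t ⟨ht.1, ht.2.le⟩ (f m) (hf0 m) (isSol_of_Icc (hf m) ht.2.le)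
      simpa using this
    · intro t ht
      have := hR t ⟨ht.1, ht.2.le⟩ (f n) (hf0 n) (isSol_of_Icc (hf n) (ht.2.le.trans hmn'))
      simpa using this
    · rw [hf0, hf0]
  have hX : ∀ n : ℕ, EqOn (fun t => f ⌈t⌉₊ t) (f n) (Icc 0 (n : ℝ)) := by
    intro n t ht
    exact huniq _ _ (Nat.ceil_le.2 ht.2) ⟨ht.1, Nat.le_ceil t⟩
  refine ⟨fun t => f ⌈t⌉₊ t, by simp [hf0], fun t ht => ?_⟩
  obtain ⟨n, hn⟩ := exists_nat_gt t
  have htm : t ∈ Icc 0 (n : ℝ) := ⟨ht, hn.le⟩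
  have h2 := (hf n t htm).congr (hX n) (hX n htm)
  have h3 : f ⌈t⌉₊ t = f n t := hX n htm
  rw [← h3] at h2
  refine h2.mono_of_mem_nhdsWithin ?_
  rw [← Ici_inter_Iic]
  exact inter_mem self_mem_nhdsWithin (mem_nhdsWithin_of_mem_nhds (Iic_mem_nhds hn))


/-- The reduced vector field in logarithmic coordinates `(u, L, N)`. -/
noncomputable def fld (k : ℕ) (C κ α : ℝ) (x : ℝ × ℝ × ℝ) : ℝ × ℝ × ℝ :=
  (-(C * Real.exp x.2.1),
   -1 + (k + 2) * C * x.1 ^ (k + 1) - κ * C * Real.exp ((2 - α) * x.2.1 - x.2.2),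
   (α - 1) - α * (k + 2) * C * x.1 ^ (k + 1)
     + (k + 3) * C * x.1 ^ (k + 2) * Real.exp ((1 - α) * x.2.1 - x.2.2))

lemma fld_contDiff (k : ℕ) (C κ α : ℝ) : ContDiff ℝ 1 (fld k C κ α) := by
  unfold fld
  fun_prop

/-- Mean value inequality. -/
lemma mvt_le {g g' : ℝ → ℝ} {τ K : ℝ} (hτ : 0 ≤ τ) (hg : ContinuousOn g (Icc 0 τ))
    (hg' : ∀ t ∈ Ico 0 τ, HasDerivWithinAt g (g' t) (Ici t) t) (hb : ∀ t ∈ Ico 0 τ, g' t ≤ K) :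
    g τ ≤ g 0 + K * τ := by
  have hB : ∀ x : ℝ, HasDerivAt (fun x => g 0 + K * x) K x := fun x => by
    simpa using ((hasDerivAt_id x).const_mul K).const_add (g 0)
  exact image_le_of_deriv_right_le_deriv_boundary (B := fun x => g 0 + K * x) (B' := fun _ => K)
    hg hg' (by simp) (fun x _ => (hB x).continuousAt.continuousWithinAt)
    (fun x _ => (hB x).hasDerivWithinAt) hb ⟨hτ, le_rfl⟩

lemma IsSol.mono {E : Type*} [NormedAddCommGroup E] [NormedSpace ℝ E] {F : E → E} {τ τ' : ℝ}
    {f : ℝ → E} (h : IsSol F τ f) (hτ : τ' ≤ τ) : IsSol F τ' f :=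
  ⟨h.1.mono (Icc_subset_Icc_right hτ), fun t ht => h.2 t ⟨ht.1, ht.2.trans_le hτ⟩⟩

section apriori

variable {k : ℕ} {C κ α : ℝ} {f : ℝ → ℝ × ℝ × ℝ} {τ : ℝ}

lemma sol_c1 (h : IsSol (fld k C κ α) τ f) : ContinuousOn (fun t => (f t).1) (Icc 0 τ) :=
  h.1.fst
lemma sol_c2 (h : IsSol (fld k C κ α) τ f) : ContinuousOn (fun t => (f t).2.1) (Icc 0 τ) :=
  h.1.snd.fst
lemma sol_c3 (h : IsSol (fld k C κ α) τ f) : ContinuousOn (fun t => (f t).2.2) (Icc 0 τ) :=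
  h.1.snd.snd

lemma der1 {x : ℝ} {v : ℝ × ℝ × ℝ} {s : Set ℝ} (h : HasDerivWithinAt f v s x) :
    HasDerivWithinAt (fun t => (f t).1) v.1 s x := by
  simpa using! (hasFDerivAt_fst (𝕜 := ℝ) (p := f x)).comp_hasDerivWithinAt x h
lemma der2 {x : ℝ} {v : ℝ × ℝ × ℝ} {s : Set ℝ} (h : HasDerivWithinAt f v s x) :
    HasDerivWithinAt (fun t => (f t).2.1) v.2.1 s x := by
  have h1 : HasDerivWithinAt (fun t => (f t).2) v.2 s x := by
    simpa using! (hasFDerivAt_snd (𝕜 := ℝ) (p := f x)).comp_hasDerivWithinAt x h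
  simpa using! (hasFDerivAt_fst (𝕜 := ℝ) (p := (f x).2)).comp_hasDerivWithinAt x h1
lemma der3 {x : ℝ} {v : ℝ × ℝ × ℝ} {s : Set ℝ} (h : HasDerivWithinAt f v s x) :
    HasDerivWithinAt (fun t => (f t).2.2) v.2.2 s x := by
  have h1 : HasDerivWithinAt (fun t => (f t).2) v.2 s x := by
    simpa using! (hasFDerivAt_snd (𝕜 := ℝ) (p := f x)).comp_hasDerivWithinAt x h
  simpa using! (hasFDerivAt_snd (𝕜 := ℝ) (p := (f x).2)).comp_hasDerivWithinAt x h1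

/-- `u` is nonincreasing. -/
lemma u_le (hC : 0 < C) (hτ : 0 ≤ τ) (h : IsSol (fld k C κ α) τ f) : (f τ).1 ≤ (f 0).1 := by
  have := mvt_le (K := 0) hτ (sol_c1 h) (fun t ht => der1 (h.2 t ht)) (fun t ht => by
    simp only [fld]
    have := mul_pos hC (Real.exp_pos (f t).2.1)
    linarith)
  simpa using this

/-- The Lyapunov-type function. -/
lemma energy (hC : 0 < C) (hκ : 0 ≤ κ) (hτ : 0 ≤ τ) (h : IsSol (fld k C κ α) τ f) :
    Real.exp (f τ).2.1 - (f τ).1 / C + (f τ).1 ^ (k + 2) ≤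
      Real.exp (f 0).2.1 - (f 0).1 / C + (f 0).1 ^ (k + 2) := by
  have := mvt_le (g := fun t => Real.exp (f t).2.1 - (f t).1 / C + (f t).1 ^ (k + 2))
    (g' := fun t => -(κ * C * Real.exp (f t).2.1 * Real.exp ((2 - α) * (f t).2.1 - (f t).2.2)))
    (K := 0) hτ
    (((sol_c2 h).rexp.sub ((sol_c1 h).div_const C)).add ((sol_c1 h).pow _))
    (fun t ht => by
      have h1 := der1 (h.2 t ht)
      have h2 := der2 (h.2 t ht)
      refine ((h2.exp.sub (h1.div_const C)).add (h1.pow (k + 2))).congr_deriv ?_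
      simp only [fld]
      field_simp
      push_cast
      ring_nf)
    (fun t ht => by
      have : 0 ≤ κ * C * Real.exp (f t).2.1 * Real.exp ((2 - α) * (f t).2.1 - (f t).2.2) := by
        positivity
      linarith)
  simpa using this

lemma u_pos (hC : 0 < C) (hκ : 0 ≤ κ) (hτ : 0 ≤ τ) (h : IsSol (fld k C κ α) τ f)
    (hu : 0 < (f 0).1)
    (hE : Real.exp (f 0).2.1 - (f 0).1 / C + (f 0).1 ^ (k + 2) < 0) : 0 < (f τ).1 := by
  by_contra! hneg
  obtain ⟨t, ht, ht0⟩ := intermediate_value_Icc' hτ (sol_c1 h) ⟨hneg, hu.le⟩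
  have := energy hC hκ ht.1 (h.mono ht.2)
  simp only at ht0
  rw [ht0] at this
  have h2 := Real.exp_pos (f t).2.1
  simp at this
  linarith

lemma apriori (hC : 0 < C) (hκ : 0 ≤ κ) (hα1 : 1 ≤ α) (hα2 : α ≤ 2) (x₀ : ℝ × ℝ × ℝ)
    (hu : 0 < x₀.1) (hE : Real.exp x₀.2.1 - x₀.1 / C + x₀.1 ^ (k + 2) < 0) (T : ℝ) (hT : 0 ≤ T) :
    ∃ R, ∀ τ ∈ Icc 0 T, ∀ f : ℝ → ℝ × ℝ × ℝ, f 0 = x₀ → IsSol (fld k C κ α) τ f →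
      ‖f τ‖ ≤ R := by
  obtain ⟨u0, L0, N0⟩ := x₀
  simp only at hu hE
  set L1 := Real.log (u0 / C) with hL1
  set K1 := α * (k + 2) * C * u0 ^ (k + 1) with hK1
  have hK1p : 0 ≤ K1 := by positivity
  set N1 := N0 - K1 * T with hN1
  set K2 := 1 + κ * C * Real.exp ((2 - α) * L1 - N1) with hK2
  have hK2p : 0 ≤ K2 := by positivity
  set L2 := L0 - K2 * T with hL2
  set K3 := (α - 1) + (k + 3) * C * u0 ^ (k + 2) * Real.exp ((1 - α) * L2 - N1) with hK3
  have hK3p : 0 ≤ K3 := by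
    have : 0 ≤ α - 1 := by linarith
    positivity
  set N2 := N0 + K3 * T with hN2
  -- bounds
  have bu : ∀ τ ∈ Icc 0 T, ∀ f : ℝ → ℝ × ℝ × ℝ, f 0 = (u0, L0, N0) → IsSol (fld k C κ α) τ f →
      0 < (f τ).1 ∧ (f τ).1 ≤ u0 := by
    intro τ hτ f hf0 h
    have h1 := u_le hC hτ.1 h
    have h2 := u_pos hC hκ hτ.1 h (by simpa [hf0] using hu) (by simpa [hf0] using hE)
    rw [hf0] at h1
    exact ⟨h2, h1⟩
  have bL1 : ∀ τ ∈ Icc 0 T, ∀ f : ℝ → ℝ × ℝ × ℝ, f 0 = (u0, L0, N0) → IsSol (fld k C κ α) τ f →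
      (f τ).2.1 ≤ L1 := by
    intro τ hτ f hf0 h
    obtain ⟨h1, h2⟩ := bu τ hτ f hf0 h
    have h3 := energy hC hκ hτ.1 h
    rw [hf0] at h3
    rw [hL1, Real.le_log_iff_exp_le (by positivity)]
    have h4 : (f τ).1 / C ≤ u0 / C := by gcongr
    have h5 : 0 < (f τ).1 ^ (k + 2) := by positivity
    simp only at h3
    linarith
  have bN1 : ∀ τ ∈ Icc 0 T, ∀ f : ℝ → ℝ × ℝ × ℝ, f 0 = (u0, L0, N0) → IsSol (fld k C κ α) τ f →
      N1 ≤ (f τ).2.2 := by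
    intro τ hτ f hf0 h
    have := mvt_le (K := K1) hτ.1 (sol_c3 h).neg (fun t ht => (der3 (h.2 t ht)).neg)
      (fun t ht => by
        obtain ⟨h1, h2⟩ := bu t ⟨ht.1, ht.2.le.trans hτ.2⟩ f hf0 (h.mono ht.2.le)
        have h3 : α * (k + 2) * C * (f t).1 ^ (k + 1) ≤ K1 := by rw [hK1]; gcongr
        have h4 : 0 ≤ (k + 3) * C * (f t).1 ^ (k + 2) *
          Real.exp ((1 - α) * (f t).2.1 - (f t).2.2) := by positivity
        simp only [fld]
        linarith)
    simp only [hf0, Pi.neg_apply] at this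
    have h5 : K1 * τ ≤ K1 * T := by gcongr; exact hτ.2
    linarith
  have bL2 : ∀ τ ∈ Icc 0 T, ∀ f : ℝ → ℝ × ℝ × ℝ, f 0 = (u0, L0, N0) → IsSol (fld k C κ α) τ f →
      L2 ≤ (f τ).2.1 := by
    intro τ hτ f hf0 h
    have := mvt_le (K := K2) hτ.1 (sol_c2 h).neg (fun t ht => (der2 (h.2 t ht)).neg)
      (fun t ht => by
        have htT : t ∈ Icc 0 T := ⟨ht.1, ht.2.le.trans hτ.2⟩
        obtain ⟨h1, h2⟩ := bu t htT f hf0 (h.mono ht.2.le)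
        have h3 := bL1 t htT f hf0 (h.mono ht.2.le)
        have h4 := bN1 t htT f hf0 (h.mono ht.2.le)
        have h5 : 0 ≤ (k + 2) * C * (f t).1 ^ (k + 1) := by positivity
        have h6 : κ * C * Real.exp ((2 - α) * (f t).2.1 - (f t).2.2) ≤
            κ * C * Real.exp ((2 - α) * L1 - N1) := by
          have : 0 ≤ 2 - α := by linarith
          gcongr
        simp only [fld]
        linarith)
    simp only [hf0, Pi.neg_apply] at this
    have h5 : K2 * τ ≤ K2 * T := by gcongr; exact hτ.2
    linarith
  have bN2 : ∀ τ ∈ Icc 0 T, ∀ f : ℝ → ℝ × ℝ × ℝ, f 0 = (u0, L0, N0) → IsSol (fld k C κ α) τ f →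
      (f τ).2.2 ≤ N2 := by
    intro τ hτ f hf0 h
    have := mvt_le (K := K3) hτ.1 (sol_c3 h) (fun t ht => (der3 (h.2 t ht)))
      (fun t ht => by
        have htT : t ∈ Icc 0 T := ⟨ht.1, ht.2.le.trans hτ.2⟩
        obtain ⟨h1, h2⟩ := bu t htT f hf0 (h.mono ht.2.le)
        have h3 := bL2 t htT f hf0 (h.mono ht.2.le)
        have h4 := bN1 t htT f hf0 (h.mono ht.2.le)
        have h5 : 0 ≤ α * (k + 2) * C * (f t).1 ^ (k + 1) := by positivity
        have h7 : (1 - α) * (f t).2.1 - (f t).2.2 ≤ (1 - α) * L2 - N1 := by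
          nlinarith
        have h6 : (k + 3) * C * (f t).1 ^ (k + 2) * Real.exp ((1 - α) * (f t).2.1 - (f t).2.2) ≤
            (k + 3) * C * u0 ^ (k + 2) * Real.exp ((1 - α) * L2 - N1) := by
          gcongr
        simp only [fld]
        linarith)
    simp only [hf0] at this
    have h5 : K3 * τ ≤ K3 * T := by gcongr; exact hτ.2
    linarith
  refine ⟨u0 + (|L1| + |L2| + |N1| + |N2|), fun τ hτ f hf0 h => ?_⟩
  have h1 := bu τ hτ f hf0 h
  have h2 := bL1 τ hτ f hf0 h
  have h3 := bL2 τ hτ f hf0 h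
  have h4 := bN1 τ hτ f hf0 h
  have h5 := bN2 τ hτ f hf0 h
  have a1 := abs_nonneg L1
  have a2 := abs_nonneg L2
  have a3 := abs_nonneg N1
  have a4 := abs_nonneg N2
  have b1 := le_abs_self L1
  have b2 := neg_abs_le L2
  have b3 := neg_abs_le N1
  have b4 := le_abs_self N2
  simp only [Prod.norm_def, Real.norm_eq_abs, sup_le_iff, abs_le]
  refine ⟨⟨?_, ?_⟩, ⟨?_, ?_⟩, ?_, ?_⟩ <;> linarith

end apriori

lemma binom_ineq (k : ℕ) {p : ℝ} (hp : p ∈ Ioo (0 : ℝ) 1) :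
    (k + 2) * p * (1 - p) ^ (k + 1) + (1 - p) ^ (k + 2) < 1 := by
  have h0 := hp.1
  have h1 := hp.2
  induction k with
  | zero => norm_num; nlinarith
  | succ n ih =>
    refine lt_of_le_of_lt ?_ ih
    have h2 : 0 ≤ (1 - p) ^ (n + 1) * ((n + 2) * p ^ 2) := by
      have : 0 ≤ 1 - p := by linarith
      positivity
    push_cast
    ring_nf at h2 ⊢
    linarith

lemma main_aux (k : ℕ) (C κ α : ℝ) (hC : 0 < C) (hκ : κ = (k + 3) * (k + 1) / (k + 2))
    (hα : α = (k + 2) / (k + 1)) (u0 σ0 b0 : ℝ) (hu : 0 < u0) (hσ : 0 < σ0) (hb : 0 < b0)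
    (hE : σ0 - u0 / C + u0 ^ (k + 2) < 0) :
    ∃ u σ b : ℝ → ℝ, u 0 = u0 ∧ σ 0 = σ0 ∧ b 0 = b0 ∧ ∀ x, 0 ≤ x → 0 < u x ∧ 0 < σ x ∧ 0 < b x ∧
      HasDerivWithinAt u (-(C * σ x)) (Ici 0) x ∧
      HasDerivWithinAt σ (σ x * (-1 + (k + 2) * C * u x ^ (k + 1) - κ * C * σ x ^ 2 / b x))
        (Ici 0) x ∧
      HasDerivWithinAt b (-b x + (k + 3) * C * u x ^ (k + 2) * σ x - (k + 3) * C * σ x ^ 2)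
        (Ici 0) x := by
  have hκ0 : 0 ≤ κ := by rw [hκ]; positivity
  have hα1 : 1 ≤ α := by rw [hα, le_div_iff₀ (by positivity)]; linarith
  have hα2 : α ≤ 2 := by
    rw [hα, div_le_iff₀ (by positivity)]
    have : (0 : ℝ) ≤ k := k.cast_nonneg
    linarith
  have hακ : α * κ = k + 3 := by rw [hα, hκ]; field_simp
  have hE' : Real.exp (Real.log σ0) - u0 / C + u0 ^ (k + 2) < 0 := by rwa [Real.exp_log hσ]
  obtain ⟨f, hf0, hf⟩ := exists_global (fld_contDiff k C κ α)
    (u0, Real.log σ0, Real.log b0 - α * Real.log σ0)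
    (apriori hC hκ0 hα1 hα2 _ hu hE')
  refine ⟨fun t => (f t).1, fun t => Real.exp (f t).2.1,
    fun t => Real.exp ((f t).2.2 + α * (f t).2.1), by simp [hf0], by simp [hf0, Real.exp_log hσ],
    by simp [hf0, Real.exp_log hb], fun x hx => ?_⟩
  have hsol : IsSol (fld k C κ α) x f :=
    isSol_of_Icc (T := x) (fun t ht => (hf t ht.1).mono Icc_subset_Ici_self) le_rfl
  have hd := hf x hx
  have d1 := der1 hd
  have d2 := der2 hd
  have d3 := der3 hd
  have e1 : Real.exp ((2 - α) * (f x).2.1 - (f x).2.2) =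
      Real.exp (f x).2.1 ^ 2 / Real.exp ((f x).2.2 + α * (f x).2.1) := by
    rw [← Real.exp_nat_mul, ← Real.exp_sub]; congr 1; push_cast; ring
  have e2 : Real.exp ((1 - α) * (f x).2.1 - (f x).2.2) =
      Real.exp (f x).2.1 / Real.exp ((f x).2.2 + α * (f x).2.1) := by
    rw [← Real.exp_sub]; congr 1; ring
  refine ⟨u_pos hC hκ0 hx hsol (by simpa [hf0] using hu) (by simpa [hf0] using hE'),
    Real.exp_pos _, Real.exp_pos _, d1, ?_, ?_⟩
  · refine d2.exp.congr_deriv ?_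
    simp only [fld, e1]
    ring
  · refine (d3.add (d2.const_mul α)).exp.congr_deriv ?_
    simp only [fld, e1, e2, Pi.add_apply]
    have hB := Real.exp_pos ((f x).2.2 + α * (f x).2.1)
    set B := Real.exp ((f x).2.2 + α * (f x).2.1)
    field_simp
    rw [← hακ]
    ring

/-- The system of differential equations associated with `(r, p₀)` has
solutions defined on all of `[0,∞)` which are positive and with `∫₀^∞ b̂` finite. -/
theorem exists_global_positive_solution
    (r : ℕ) (hr : 3 ≤ r) (p₀ : ℝ) (hp₀ : p₀ ∈ Ioo (0 : ℝ) 1) :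
    ∃ w b q s t : ℝ → ℝ,
      SystemODE r p₀ w b q s t ∧
      (∀ x : ℝ, 0 ≤ x → 0 < w x ∧ 0 < b x ∧ 0 < q x ∧ 0 < s x ∧ 0 < t x) ∧
      IntegrableOn b (Ioi (0 : ℝ)) := by
  obtain ⟨k, rfl⟩ : ∃ k, r = k + 3 := ⟨r - 3, by omega⟩
  have hp := hp₀.1
  have hy : 0 < 1 - p₀ := by linarith [hp₀.2]
  obtain ⟨e, he, hey⟩ : ∃ e : ℝ, 0 < e ∧ e ^ (k + 3) = 1 - p₀ :=
    ⟨(1 - p₀) ^ ((k + 3 : ℕ) : ℝ)⁻¹, by positivity, Real.rpow_inv_natCast_pow hy.le (by omega)⟩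
  have hin := binom_ineq k hp₀
  have hE : (k + 2) * p₀ * (1 - p₀) ^ (k + 2) / e - e ^ (k + 4) / e ^ 2
      + (e ^ (k + 4)) ^ (k + 2) < 0 := by
    have h1 : e ^ (k + 4) / e ^ 2 = (1 - p₀) / e := by
      rw [← hey]; field_simp; ring
    have h2 : (e ^ (k + 4)) ^ (k + 2) = (1 - p₀) ^ (k + 3) / e := by
      rw [← hey]; field_simp; ring
    have h3 : (k + 2) * p₀ * (1 - p₀) ^ (k + 2) / e - (1 - p₀) / e + (1 - p₀) ^ (k + 3) / e =
      (1 - p₀) / e * ((k + 2) * p₀ * (1 - p₀) ^ (k + 1) + (1 - p₀) ^ (k + 2) - 1) := by ring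
    rw [h1, h2, h3]
    exact mul_neg_of_pos_of_neg (by positivity) (by linarith)
  obtain ⟨u, σ, b, hu0, hσ0, hb0, H⟩ := main_aux k (e ^ 2) _ _ (by positivity) rfl rfl
    (e ^ (k + 4)) ((k + 2) * p₀ * (1 - p₀) ^ (k + 2) / e) ((k + 3) * p₀ * (1 - p₀) ^ (k + 3))
    (by positivity) (by positivity) (by positivity) hE
  have dw : ∀ x : ℝ, 0 ≤ x → HasDerivWithinAt (fun x => u x ^ (k + 3))
      (-((k : ℝ) + 3) * (e ^ 2 * u x ^ (k + 2) * σ x)) (Ici 0) x := by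
    intro x hx
    obtain ⟨pu, pσ, pb, du, dσ, db⟩ := H x hx
    refine (du.pow (k + 3)).congr_deriv ?_
    push_cast
    ring
  refine ⟨fun x => u x ^ (k + 3), b, fun x => e ^ 2 * u x ^ (2 * k + 4),
    fun x => e ^ 2 * u x ^ (k + 2) * σ x, fun x => e ^ 2 * σ x ^ 2,
    ⟨?_, ?_, ?_, ?_, ?_, ?_, ?_, ?_, ?_, ?_⟩, ?_, ?_⟩
  · intro x hx
    refine (dw x hx).congr_deriv ?_
    push_cast
    ring
  · intro x hx
    obtain ⟨pu, pσ, pb, du, dσ, db⟩ := H x hx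
    refine db.congr_deriv ?_
    push_cast
    ring
  · intro x hx
    obtain ⟨pu, pσ, pb, du, dσ, db⟩ := H x hx
    refine ((du.pow (2 * k + 4)).const_mul (e ^ 2)).congr_deriv ?_
    push_cast
    field_simp
    ring
  · intro x hx
    obtain ⟨pu, pσ, pb, du, dσ, db⟩ := H x hx
    refine (((du.pow (k + 2)).const_mul (e ^ 2)).mul dσ).congr_deriv ?_
    push_cast
    simp only [Pi.pow_apply]
    have h2 : (k : ℝ) + 3 - 1 = k + 2 := by ring
    have h3 : (k : ℝ) + 3 - 2 = k + 1 := by ring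
    rw [h2, h3]
    field_simp
    ring
  · intro x hx
    obtain ⟨pu, pσ, pb, du, dσ, db⟩ := H x hx
    refine ((dσ.pow 2).const_mul (e ^ 2)).congr_deriv ?_
    push_cast
    have h2 : (k : ℝ) + 3 - 1 = k + 2 := by ring
    have h3 : (k : ℝ) + 3 - 2 = k + 1 := by ring
    rw [h2, h3]
    field_simp
    ring
  · simp only [hu0]
    rw [← hey]; ring
  · rw [hb0]; push_cast; ring
  · simp only [hu0]
    rw [← hey]; ring
  · simp only [hu0, hσ0]
    rw [show 2 * (k + 3) - 1 = 2 * k + 5 by omega, ← hey]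
    push_cast
    field_simp
    ring
  · simp only [hσ0]
    rw [show 2 * (k + 3) - 2 = 2 * k + 4 by omega]
    push_cast
    field_simp
    ring
  · intro x hx
    obtain ⟨pu, pσ, pb, du, dσ, db⟩ := H x hx
    refine ⟨by positivity, pb, by positivity, by positivity, by positivity⟩
  · have bc : ContinuousOn b (Ici 0) := fun x hx => (H x hx).2.2.2.2.2.continuousWithinAt
    have wc : ContinuousOn (fun x => u x ^ (k + 3)) (Ici 0) := fun x hx =>
      (dw x hx).continuousWithinAt
    have bi : ∀ n : ℕ, IntegrableOn b (Icc 0 (n : ℝ)) := fun n =>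
      (bc.mono Icc_subset_Ici_self).integrableOn_Icc
    refine integrableOn_Ioi_of_intervalIntegral_norm_bounded (b 0 + u 0 ^ (k + 3)) 0
      (l := atTop) (b := fun n : ℕ => (n : ℝ)) (fun n => (bi n).mono_set Ioc_subset_Icc_self)
      tendsto_natCast_atTop_atTop (Eventually.of_forall fun n => ?_)
    have hn : (0 : ℝ) ≤ n := n.cast_nonneg
    have h1 : ∫ x in (0 : ℝ)..n, ‖b x‖ = ∫ x in (0 : ℝ)..n, b x := by
      refine intervalIntegral.integral_congr fun x hx => ?_
      rw [uIcc_of_le hn] at hx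
      exact Real.norm_of_nonneg (H x hx.1).2.2.1.le
    rw [h1]
    have h2 := intervalIntegral.integral_le_sub_of_hasDeriv_right_of_le
      (g := fun x => -(b x + u x ^ (k + 3))) (φ := b)
      (g' := fun x => b x + (k + 3) * e ^ 2 * σ x ^ 2) hn
      ((bc.add wc).neg.mono Icc_subset_Ici_self)
      (fun x hx => by
        have h3 := ((H x hx.1.le).2.2.2.2.2.add (dw x hx.1.le)).neg
        refine (h3.mono fun z hz => ?_).congr_deriv ?_
        · exact hx.1.le.trans (mem_Ioi.1 hz).le
        · ring)
      (bi n)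
      (fun x hx => by
        have : 0 ≤ (k + 3) * e ^ 2 * σ x ^ 2 := by positivity
        linarith)
    have h4 := (H n hn).2.2.1
    have h5 : 0 < u n ^ (k + 3) := pow_pos (H n hn).1 _
    linarith

end InducedForest
end
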